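/- arXiv:1103.0203 — 2 statements merged into one kernel-verified Lean document; each statement's English description precedes it below -/
import Mathlib

section
/- Let n ≥ 1 and d ≥ 2. Define R(n,d) = ⌈binom(n+d,d)/(n+1)⌉, except in the following cases: R(n,2) = n+1; R(n,4) = binom(n+2,2) for 2 ≤ n ≤ 4; and R(4,3) = 8. Then a general homogeneous polynomial f of degree d in x_0,…,x_n over ℂ has symmetric rank exactly R(n,d); that is, there is a nonzero polynomial D in the binom(n+d,d) coefficients of f such that every homogeneous f of degree d with D(f) ≠ 0 has symmetric rank R(n,d). -/
open MvPolynomial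

/-- The linear form `ℓ_v = Σ_j v_j x_j` associated to a vector `v ∈ ℂ^k`. -/
noncomputable def linForm (k : ℕ) (v : Fin k → ℂ) : MvPolynomial (Fin k) ℂ :=
  ∑ j, MvPolynomial.C (v j) * MvPolynomial.X j

/-- The (symmetric/Waring) rank of `f`: the least `r` such that
`f = Σ_{i=1}^r c_i ℓ_{v_i}^d` with all `v_i ≠ 0`. -/
noncomputable def waringRank (n d : ℕ) (f : MvPolynomial (Fin (n+1)) ℂ) : ℕ :=
  sInf {r : ℕ | ∃ (c : Fin r → ℂ) (v : Fin r → (Fin (n+1) → ℂ)),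
    (∀ i, v i ≠ 0) ∧ f = ∑ i, c i • (linForm (n+1) (v i)) ^ d}

/-- The generic rank `R(n,d)`: `⌈binom(n+d,d)/(n+1)⌉` except in the listed exceptional
cases. -/
def genericRank (n d : ℕ) : ℕ :=
  if d = 2 then n + 1
  else if d = 4 ∧ 2 ≤ n ∧ n ≤ 4 then Nat.choose (n + 2) 2
  else if n = 4 ∧ d = 3 then 8
  else (Nat.choose (n + d) d + n) / (n + 1)

/-!
By the Jacobian criterion (Terracini's lemma), a general form of degree `d` is a sum of `r` powers
`ℓ_v ^ d` as soon as no nonzero form of degree `d` is singular at `r` general points. That general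
points kill all forms when the number of conditions suffices is shown by the Horace method: some of
the points are specialized to a hyperplane, which splits the problem into one for the restrictions
to the hyperplane, in the same degree, and one for the residual forms of degree `d - 1`; points
moving into the hyperplane compensate for divisibility problems. Cubics, where this fails, are
restricted to subspaces of codimension three instead (Brambilla–Ottaviani). The finitely many
initial cases are ranks of explicit matrices, computed modulo a prime.

Conversely, too few powers satisfy a polynomial equation: there are fewer parameters than
coefficients, or in the exceptional cases the determinant of a flattening of the form, a matrix that
is linear in the form and of small rank at powers, vanishes. The flattening is the catalecticant in
degrees two and four, and the Koszul flattening for cubics in five variables.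
-/

namespace AlexanderHirschowitz

section Separation

variable {𝕜 M I κ : Type*} [Field 𝕜] [AddCommGroup M] [Module 𝕜 M]

/-- The functionals `φ` separate the vectors of the subspace `V`: a vector of `V` annihilated by
all of them is zero. -/
def Separates (V : Submodule 𝕜 M) (φ : I → M →ₗ[𝕜] 𝕜) : Prop :=
  ∀ v ∈ V, (∀ i, φ i v = 0) → v = 0

namespace Separates

variable {V : Submodule 𝕜 M} {φ : I → M →ₗ[𝕜] 𝕜}

lemma exists_fin_subfamily [Nonempty I] [FiniteDimensional 𝕜 V] (hφ : Separates V φ) {m : ℕ}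
    (hm : Module.finrank 𝕜 V ≤ m) : ∃ h : Fin m → I, Separates V (φ ∘ h) := by
  induction m generalizing V with
  | zero =>
    have hV : V = ⊥ := Submodule.finrank_eq_zero.mp (Nat.le_zero.mp hm)
    exact ⟨Fin.elim0, fun v hv _ => by simpa [hV] using hv⟩
  | succ m ih =>
    by_cases hV : V = ⊥
    · exact ⟨fun _ => Classical.arbitrary I, fun v hv _ => by simpa [hV] using hv⟩
    obtain ⟨v, hvV, hv⟩ := V.ne_bot_iff.mp hV
    obtain ⟨i, hi⟩ : ∃ i, φ i v ≠ 0 := by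
      by_contra! hcon
      exact hv (hφ v hvV hcon)
    have hlt : V ⊓ LinearMap.ker (φ i) < V :=
      lt_of_le_of_ne inf_le_left fun h => hi (inf_eq_left.mp h hvV)
    have := Submodule.finiteDimensional_of_le hlt.le
    obtain ⟨h, hh⟩ := ih (V := V ⊓ LinearMap.ker (φ i)) (fun w hw => hφ w hw.1)
      (by have := Submodule.finrank_lt_finrank_of_lt hlt; lia)
    exact ⟨Fin.cons i h, fun w hw h0 => hh w ⟨hw, h0 0⟩ fun a => by simpa using h0 a.succ⟩

lemma finrank_le_card [Fintype I] (hφ : Separates V φ) :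
    Module.finrank 𝕜 V ≤ Fintype.card I := by
  have hinj : Function.Injective ((LinearMap.pi φ).comp V.subtype) :=
    LinearMap.ker_eq_bot.mp <| LinearMap.ker_eq_bot'.mpr fun v hv =>
      Subtype.ext (hφ v v.2 fun i => congrFun hv i)
  simpa using LinearMap.finrank_le_finrank_of_injective hinj

lemma exists_fin_subfamily_of_card_le [Nonempty I] [Fintype κ] [FiniteDimensional 𝕜 V]
    (hφ : Separates V φ) {ψ : κ → M →ₗ[𝕜] 𝕜} (hψ : Separates V ψ) {m : ℕ}
    (hm : Fintype.card κ ≤ m) : ∃ h : Fin m → I, Separates V (φ ∘ h) :=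
  hφ.exists_fin_subfamily (hψ.finrank_le_card.trans hm)

end Separates

lemma separates_iff_det_ne_zero {ι : Type*} [Fintype ι] [DecidableEq ι] {V : Submodule 𝕜 M}
    (b : Module.Basis ι 𝕜 V) (φ : ι → M →ₗ[𝕜] 𝕜) :
    Separates V φ ↔ (Matrix.of fun i j => φ i (b j)).det ≠ 0 := by
  have hmulVec : ∀ x, (Matrix.of fun i j => φ i (b j)).mulVec x =
      fun i => φ i (∑ j, x j • b j : V) := fun x => by
    funext i
    simp [Matrix.mulVec, dotProduct, mul_comm]
  rw [Ne, ← Matrix.exists_mulVec_eq_zero_iff]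
  push Not
  constructor
  · intro h x hx hx0
    rw [hmulVec] at hx0
    have hsum : ∑ j, x j • b j = 0 :=
      Subtype.ext (h _ (Submodule.coe_mem _) fun i => congrFun hx0 i)
    exact hx (funext (Fintype.linearIndependent_iff.mp b.linearIndependent x hsum))
  · intro h v hv hφ
    by_contra hv0
    refine h (b.repr ⟨v, hv⟩) (fun h0 => hv0 ?_) ?_
    · have hrepr : b.repr ⟨v, hv⟩ = 0 := Finsupp.ext fun j => congrFun h0 j
      exact congrArg Subtype.val (b.repr.map_eq_zero_iff.mp hrepr)
    · rw [hmulVec, b.sum_repr]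
      exact funext hφ

end Separation

section PolynomialFunctions

variable {𝕜 : Type*} [Field 𝕜]

variable (𝕜) in
/-- The polynomial functions of one variable. -/
noncomputable def polynomialFuns : Subalgebra 𝕜 (𝕜 → 𝕜) :=
  (Polynomial.aeval (id : 𝕜 → 𝕜)).range

lemma mem_polynomialFuns {g : 𝕜 → 𝕜} :
    g ∈ polynomialFuns 𝕜 ↔ ∃ R : Polynomial 𝕜, ∀ t, g t = R.eval t := by
  have heval : ∀ (R : Polynomial 𝕜) (t : 𝕜), Polynomial.aeval (id : 𝕜 → 𝕜) R t = R.eval t :=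
    fun R t => by simp
  simp only [polynomialFuns, AlgHom.mem_range, funext_iff, heval, eq_comm]

lemma const_mem_polynomialFuns (c : 𝕜) : (fun _ => c) ∈ polynomialFuns 𝕜 :=
  (polynomialFuns 𝕜).algebraMap_mem c

lemma id_mem_polynomialFuns : (fun t => t) ∈ polynomialFuns 𝕜 :=
  mem_polynomialFuns.mpr ⟨Polynomial.X, fun _ => Polynomial.eval_X.symm⟩

lemma lineMap_mem_polynomialFuns (a b : 𝕜) :
    (fun t => AffineMap.lineMap a b t) ∈ polynomialFuns 𝕜 :=
  add_mem (mul_mem id_mem_polynomialFuns (const_mem_polynomialFuns (b - a)))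
    (const_mem_polynomialFuns a)

lemma eval_mem_polynomialFuns {σ : Type*} {x : 𝕜 → σ → 𝕜}
    (hx : ∀ i, (fun t => x t i) ∈ polynomialFuns 𝕜) (f : MvPolynomial σ 𝕜) :
    (fun t => eval (x t) f) ∈ polynomialFuns 𝕜 := by
  induction f using MvPolynomial.induction_on with
  | C c => simpa using const_mem_polynomialFuns c
  | add f g hf hg => simpa using! add_mem hf hg
  | mul_X f i hf => simpa using! mul_mem hf (hx i)

lemma Separates.finite_setOf_not {M I : Type*} [AddCommGroup M] [Module 𝕜 M]
    {V : Submodule 𝕜 M} [FiniteDimensional 𝕜 V] {φ : 𝕜 → I → M →ₗ[𝕜] 𝕜} {t₀ : 𝕜}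
    (h₀ : Separates V (φ t₀)) (hφ : ∀ i, ∀ v ∈ V, (fun t => φ t i v) ∈ polynomialFuns 𝕜) :
    {t | ¬ Separates V (φ t)}.Finite := by
  classical
  rcases isEmpty_or_nonempty I with hI | hI
  · refine Set.finite_empty.subset fun t ht => ht fun v hv _ => h₀ v hv fun i => hI.elim i
  obtain ⟨h, hh⟩ := h₀.exists_fin_subfamily le_rfl
  let b := Module.finBasis 𝕜 V
  choose R hR using fun i j => mem_polynomialFuns.mp (hφ (h i) (b j) (b j).2)
  have hdet : ∀ t, (Matrix.of R).det.eval t = (Matrix.of fun i j => φ t (h i) (b j)).det :=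
    fun t => by
      rw [← Polynomial.coe_evalRingHom, RingHom.map_det]
      congr 1
      ext i j
      exact (hR i j t).symm
  have hne : (Matrix.of R).det ≠ 0 := fun h0 =>
    (separates_iff_det_ne_zero b (φ t₀ ∘ h)).mp hh ((hdet t₀).symm.trans (by simp [h0]))
  refine (Polynomial.finite_setOfPred_isRoot hne).subset fun t ht => ?_
  by_contra hroot
  have hsep := (separates_iff_det_ne_zero b (φ t ∘ h)).mpr ((hdet t).symm.trans_ne hroot)
  exact ht fun v hv h0 => hsep v hv fun i => h0 (h i)

end PolynomialFunctions

section Lines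

variable {𝕜 E F : Type*} [Field 𝕜] [AddCommGroup E] [Module 𝕜 E] [AddCommGroup F] [Module 𝕜 F]

variable (𝕜) in
/-- A line through a point of `U` leaves `U` at finitely many parameters only. Over an infinite
field this substitutes for Zariski openness in general position arguments. -/
def LineCofinite (U : Set E) : Prop :=
  ∀ x ∈ U, ∀ y, {t : 𝕜 | AffineMap.lineMap x y t ∉ U}.Finite

namespace LineCofinite

lemma inter {U V : Set E} (hU : LineCofinite 𝕜 U) (hV : LineCofinite 𝕜 V) :
    LineCofinite 𝕜 (U ∩ V) := fun x hx y =>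
  ((hU x hx.1 y).union (hV x hx.2 y)).subset fun _ ht => not_and_or.mp ht

lemma inter_nonempty [Infinite 𝕜] {U V : Set E} (hU : LineCofinite 𝕜 U) (hV : LineCofinite 𝕜 V)
    (hU' : U.Nonempty) (hV' : V.Nonempty) : (U ∩ V).Nonempty := by
  obtain ⟨x, hx⟩ := hU'
  obtain ⟨y, hy⟩ := hV'
  have hfinV : {t : 𝕜 | AffineMap.lineMap x y t ∉ V}.Finite := by
    refine ((hV y hy x).image fun t => 1 - t).subset fun t ht => ⟨1 - t, ?_, sub_sub_cancel 1 t⟩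
    simpa [AffineMap.lineMap_apply_one_sub] using ht
  obtain ⟨t, ht⟩ := ((hU x hx y).union hfinV).infinite_compl.nonempty
  simp only [Set.mem_compl_iff, Set.mem_union, Set.mem_ofPred_eq, not_or, not_not] at ht
  exact ⟨_, ht⟩

lemma setOf_forall {ι : Type*} [Finite ι] {p : ι → E → Prop}
    (h : ∀ i, LineCofinite 𝕜 {x | p i x}) : LineCofinite 𝕜 {x | ∀ i, p i x} := fun x hx y =>
  (Set.finite_iUnion fun i => h i x (hx i) y).subset fun t ht => by simpa using ht

end LineCofinite

variable (𝕜) in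
/-- `g` sends lines affinely to lines; the unbundled form of `E →ᵃ[𝕜] F`. -/
def PreservesLines (g : E → F) : Prop :=
  ∀ x y (t : 𝕜), g (AffineMap.lineMap x y t) = AffineMap.lineMap (g x) (g y) t

lemma preservesLines_of_isLinearMap {g : E → F} (hg : IsLinearMap 𝕜 g) : PreservesLines 𝕜 g :=
  (hg.mk' g).toAffineMap.apply_lineMap

namespace PreservesLines

lemma const (c : F) : PreservesLines 𝕜 fun _ : E => c := fun _ _ _ => by simp

protected lemma id : PreservesLines 𝕜 fun x : E => x := fun _ _ _ => rfl

lemma comp {G : Type*} [AddCommGroup G] [Module 𝕜 G] {g : F → G} {f : E → F}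
    (hg : PreservesLines 𝕜 g) (hf : PreservesLines 𝕜 f) : PreservesLines 𝕜 fun x => g (f x) :=
  fun x y t => (congrArg g (hf x y t)).trans (hg _ _ t)

lemma sumElim {ι κ : Type*} {f : E → ι → F} {g : E → κ → F}
    (hf : PreservesLines 𝕜 f) (hg : PreservesLines 𝕜 g) :
    PreservesLines 𝕜 fun x => Sum.elim (f x) (g x) := by
  intro x y t
  funext a
  cases a with
  | inl a => exact congrFun (hf x y t) a
  | inr a => exact congrFun (hg x y t) a

end PreservesLines

lemma lineCofinite_setOf_ne_zero {g : E → 𝕜} (hg : PreservesLines 𝕜 g) :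
    LineCofinite 𝕜 {x | g x ≠ 0} := by
  intro x hx y
  have hx : g x ≠ 0 := hx
  refine Set.Subsingleton.finite fun s hs t ht => ?_
  simp only [Set.mem_ofPred_eq, not_not, hg x y] at hs ht
  simp only [AffineMap.lineMap_apply_module', smul_eq_mul] at hs ht
  have hdiff : (s - t) * (g y - g x) = 0 := by linear_combination hs - ht
  rcases mul_eq_zero.mp hdiff with h | h
  · exact sub_eq_zero.mp h
  · exact absurd (by simpa [h] using hs) hx

end Lines

section DirectionalDerivatives

variable {𝕜 σ : Type*} [Field 𝕜] [Fintype σ]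

/-- The derivative at the point `p` in the direction `w`, as a functional on polynomials. -/
noncomputable def dirDeriv (p w : σ → 𝕜) : MvPolynomial σ 𝕜 →ₗ[𝕜] 𝕜 :=
  ∑ i, w i • (aeval p).toLinearMap ∘ₗ (pderiv i).toLinearMap

lemma dirDeriv_apply (p w : σ → 𝕜) (f : MvPolynomial σ 𝕜) :
    dirDeriv p w f = ∑ i, w i * eval p (pderiv i f) := by
  simp [dirDeriv]

lemma dirDeriv_single [DecidableEq σ] (p : σ → 𝕜) (i : σ) (f : MvPolynomial σ 𝕜) :
    dirDeriv p (Pi.single i 1) f = eval p (pderiv i f) := by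
  simp [dirDeriv_apply, Pi.single_apply]

lemma dirDeriv_mul (p w : σ → 𝕜) (f g : MvPolynomial σ 𝕜) :
    dirDeriv p w (f * g) = dirDeriv p w f * eval p g + eval p f * dirDeriv p w g := by
  simp only [dirDeriv_apply, Derivation.leibniz, smul_eq_mul, map_add, map_mul, Finset.sum_mul,
    Finset.mul_sum, ← Finset.sum_add_distrib]
  exact Finset.sum_congr rfl fun i _ => by ring

lemma dirDeriv_X (p w : σ → 𝕜) (i : σ) : dirDeriv p w (X i) = w i := by
  classical
  simp [dirDeriv_apply, pderiv_X, Pi.single_apply, apply_ite]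

lemma dirDeriv_C (p w : σ → 𝕜) (c : 𝕜) : dirDeriv p w (C c) = 0 := by
  simp [dirDeriv_apply]

lemma dirDeriv_self_of_isHomogeneous {d : ℕ} {f : MvPolynomial σ 𝕜} (hf : f.IsHomogeneous d)
    (p : σ → 𝕜) : dirDeriv p p f = d * eval p f := by
  simpa [dirDeriv_apply] using congrArg (eval p) hf.sum_X_mul_pderiv

lemma dirDeriv_self_eq_zero_iff [CharZero 𝕜] {d : ℕ} (hd : d ≠ 0) {f : MvPolynomial σ 𝕜}
    (hf : f.IsHomogeneous d) {p : σ → 𝕜} : dirDeriv p p f = 0 ↔ eval p f = 0 := by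
  simp [dirDeriv_self_of_isHomogeneous hf, hd]

lemma dirDeriv_mem_polynomialFuns {x w : 𝕜 → σ → 𝕜}
    (hx : ∀ i, (fun t => x t i) ∈ polynomialFuns 𝕜) (hw : ∀ i, (fun t => w t i) ∈ polynomialFuns 𝕜)
    (f : MvPolynomial σ 𝕜) : (fun t => dirDeriv (x t) (w t) f) ∈ polynomialFuns 𝕜 := by
  have hsum : (fun t => dirDeriv (x t) (w t) f) =
      ∑ i, fun t => w t i * eval (x t) (pderiv i f) := by
    ext t
    simp [dirDeriv_apply]
  rw [hsum]
  exact sum_mem fun i _ => mul_mem (hw i) (eval_mem_polynomialFuns hx _)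

/-- All first partial derivatives of `f` vanish at `p`. For a form of positive degree in
characteristic zero, `p` is then a singular zero of `f`. -/
def IsSingularAt (f : MvPolynomial σ 𝕜) (p : σ → 𝕜) : Prop :=
  ∀ i, eval p (pderiv i f) = 0

lemma isSingularAt_iff_dirDeriv {f : MvPolynomial σ 𝕜} {p : σ → 𝕜} :
    IsSingularAt f p ↔ ∀ w, dirDeriv p w f = 0 := by
  classical
  exact ⟨fun h w => by simp [dirDeriv_apply, h _], fun h i => by rw [← dirDeriv_single, h]⟩

end DirectionalDerivatives

/-! ### Linear systems with assigned singularities -/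

section LinearSystems

instance finiteDimensional_homogeneousSubmodule {𝕜 σ : Type*} [Field 𝕜] [Finite σ] (d : ℕ) :
    FiniteDimensional 𝕜 (homogeneousSubmodule σ 𝕜 d) :=
  Module.Finite.iff_fg.mpr (homogeneousSubmodule_fg σ 𝕜 d)

variable {𝕜 σ ι κ : Type*} [Field 𝕜] [Fintype σ] {V : Submodule 𝕜 (MvPolynomial σ 𝕜)}

/-- The polynomials in `V` that are singular at the points `P` and have vanishing directional
derivatives along `Q`. On forms of positive degree, in characteristic zero, vanishing at `p` is
encoded as the directional derivative `(p, p)`, see `dirDeriv_self_of_isHomogeneous`. -/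
noncomputable def linearSystem (V : Submodule 𝕜 (MvPolynomial σ 𝕜)) (P : ι → σ → 𝕜)
    (Q : κ → (σ → 𝕜) × (σ → 𝕜)) : Submodule 𝕜 (MvPolynomial σ 𝕜) :=
  V ⊓ ((⨅ a, ⨅ w, LinearMap.ker (dirDeriv (P a) w)) ⊓
    ⨅ b, LinearMap.ker (dirDeriv (Q b).1 (Q b).2))

lemma mem_linearSystem {P : ι → σ → 𝕜} {Q : κ → (σ → 𝕜) × (σ → 𝕜)} {f : MvPolynomial σ 𝕜} :
    f ∈ linearSystem V P Q ↔
      f ∈ V ∧ (∀ a, IsSingularAt f (P a)) ∧ ∀ b, dirDeriv (Q b).1 (Q b).2 f = 0 := by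
  simp [linearSystem, isSingularAt_iff_dirDeriv]

lemma linearSystem_eq_bot_iff {P : ι → σ → 𝕜} {Q : κ → (σ → 𝕜) × (σ → 𝕜)} :
    linearSystem V P Q = ⊥ ↔ ∀ f ∈ V, (∀ a, IsSingularAt f (P a)) →
      (∀ b, dirDeriv (Q b).1 (Q b).2 f = 0) → f = 0 := by
  simp only [Submodule.eq_bot_iff, mem_linearSystem, and_imp]

instance finiteDimensional_linearSystem [FiniteDimensional 𝕜 V] (P : ι → σ → 𝕜)
    (Q : κ → (σ → 𝕜) × (σ → 𝕜)) : FiniteDimensional 𝕜 (linearSystem V P Q) :=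
  Submodule.finiteDimensional_of_le (S₂ := V) inf_le_left

lemma lineCofinite_setOf_linearSystem_eq_bot {E : Type*} [AddCommGroup E] [Module 𝕜 E]
    [FiniteDimensional 𝕜 V] {P : E → ι → σ → 𝕜} {Q : E → κ → (σ → 𝕜) × (σ → 𝕜)}
    (hP : PreservesLines 𝕜 P) (hQ : PreservesLines 𝕜 Q) :
    LineCofinite 𝕜 {x | linearSystem V (P x) (Q x) = ⊥} := by
  classical
  let φ : E → (ι × σ) ⊕ κ → MvPolynomial σ 𝕜 →ₗ[𝕜] 𝕜 := fun x => Sum.elim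
    (fun a => dirDeriv (P x a.1) (Pi.single a.2 1)) fun b => dirDeriv (Q x b).1 (Q x b).2
  have hφ : ∀ x, linearSystem V (P x) (Q x) = ⊥ ↔ Separates V (φ x) := fun x => by
    simp [linearSystem_eq_bot_iff, Separates, φ, dirDeriv_single, IsSingularAt]
  simp only [hφ]
  intro x hx y
  refine Separates.finite_setOf_not (t₀ := 0) (by simpa using hx) ?_
  rintro (⟨a, i⟩ | b) v -
  · refine dirDeriv_mem_polynomialFuns (w := fun _ => Pi.single i 1) (fun j => ?_)
      (fun j => const_mem_polynomialFuns _) v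
    simpa [hP x y] using! lineMap_mem_polynomialFuns (P x a j) (P y a j)
  · refine dirDeriv_mem_polynomialFuns (fun j => ?_) (fun j => ?_) v
    · simpa [hQ x y] using! lineMap_mem_polynomialFuns ((Q x b).1 j) ((Q y b).1 j)
    · simpa [hQ x y] using! lineMap_mem_polynomialFuns ((Q x b).2 j) ((Q y b).2 j)

end LinearSystems

section LinearSubstitution

variable {𝕜 σ τ : Type*} [Field 𝕜] [Fintype τ]

/-- Composition of polynomials with a linear map. -/
noncomputable def linSubst (A : (τ → 𝕜) →ₗ[𝕜] (σ → 𝕜)) :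
    MvPolynomial σ 𝕜 →ₐ[𝕜] MvPolynomial τ 𝕜 := by
  classical
  exact aeval fun i => ∑ j, C (A (Pi.single j 1) i) * X j

lemma linearMap_apply_eq_sum_single [DecidableEq τ] (A : (τ → 𝕜) →ₗ[𝕜] (σ → 𝕜)) (p : τ → 𝕜)
    (i : σ) : A p i = ∑ j, A (Pi.single j 1) i * p j := by
  conv_lhs => rw [← Finset.univ_sum_single p]
  simp only [map_sum, Finset.sum_apply]
  refine Finset.sum_congr rfl fun j _ => ?_
  rw [← mul_one (p j), ← smul_eq_mul, Pi.single_smul, map_smul, Pi.smul_apply, smul_eq_mul,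
    mul_comm, smul_eq_mul, mul_one]

lemma eval_linSubst (A : (τ → 𝕜) →ₗ[𝕜] (σ → 𝕜)) (p : τ → 𝕜) (f : MvPolynomial σ 𝕜) :
    eval p (linSubst A f) = eval (A p) f := by
  classical
  induction f using MvPolynomial.induction_on with
  | C c => simp [linSubst]
  | add f g hf hg => simp [hf, hg]
  | mul_X f i hf =>
    rw [map_mul, map_mul, hf, map_mul, eval_X, linearMap_apply_eq_sum_single A p i]
    simp [linSubst]

lemma isHomogeneous_linSubst (A : (τ → 𝕜) →ₗ[𝕜] (σ → 𝕜)) {d : ℕ} {f : MvPolynomial σ 𝕜}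
    (hf : f.IsHomogeneous d) : (linSubst A f).IsHomogeneous d := by
  classical
  have := hf.aeval (fun i => ∑ j, C (A (Pi.single j 1) i) * X j) (n := 1) fun i =>
    IsHomogeneous.sum _ _ _ fun j _ => isHomogeneous_C_mul_X _ _
  simpa [linSubst] using this

variable [Fintype σ]

lemma dirDeriv_linSubst (A : (τ → 𝕜) →ₗ[𝕜] (σ → 𝕜)) (p w : τ → 𝕜) (f : MvPolynomial σ 𝕜) :
    dirDeriv p w (linSubst A f) = dirDeriv (A p) (A w) f := by
  classical
  induction f using MvPolynomial.induction_on with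
  | C c => simp [linSubst, dirDeriv_C, algebraMap_eq]
  | add f g hf hg => simp [hf, hg]
  | mul_X f i hf =>
    rw [map_mul, dirDeriv_mul, dirDeriv_mul, hf, eval_linSubst, eval_linSubst, dirDeriv_X,
      linearMap_apply_eq_sum_single A w i]
    simp [linSubst, dirDeriv_mul, dirDeriv_X, dirDeriv_C]

omit [Fintype σ] in
lemma IsSingularAt.linSubst [Finite σ] {A : (τ → 𝕜) →ₗ[𝕜] (σ → 𝕜)} {p : τ → 𝕜}
    {f : MvPolynomial σ 𝕜} (h : IsSingularAt f (A p)) : IsSingularAt (linSubst A f) p := by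
  have := Fintype.ofFinite σ
  exact isSingularAt_iff_dirDeriv.mpr fun w => by
    rw [dirDeriv_linSubst, isSingularAt_iff_dirDeriv.mp h]

lemma eval_linearMap_eq_zero_of_linearSystem_eq_bot {ι κ : Type*}
    {W : Submodule 𝕜 (MvPolynomial τ 𝕜)} {P : ι → τ → 𝕜} {Q : κ → (τ → 𝕜) × (τ → 𝕜)}
    (h : linearSystem W P Q = ⊥) (A : (τ → 𝕜) →ₗ[𝕜] (σ → 𝕜)) {f : MvPolynomial σ 𝕜}
    (hf : linSubst A f ∈ W) (hP : ∀ a, IsSingularAt f (A (P a)))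
    (hQ : ∀ b, dirDeriv (A (Q b).1) (A (Q b).2) f = 0) (p : τ → 𝕜) : eval (A p) f = 0 := by
  rw [← eval_linSubst, linearSystem_eq_bot_iff.mp h (linSubst A f) hf (fun a => (hP a).linSubst)
    fun b => (dirDeriv_linSubst A _ _ f).trans (hQ b), map_zero]

lemma linearSystem_map_eq_bot [Infinite 𝕜] {ι κ : Type*} {d : ℕ} {P : ι → τ → 𝕜}
    {Q : κ → (τ → 𝕜) × (τ → 𝕜)} (h : linearSystem (homogeneousSubmodule τ 𝕜 d) P Q = ⊥)
    {A : (τ → 𝕜) →ₗ[𝕜] (σ → 𝕜)} (hA : Function.Surjective A) :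
    linearSystem (homogeneousSubmodule σ 𝕜 d) (fun a => A (P a))
      (fun b => (A (Q b).1, A (Q b).2)) = ⊥ :=
  linearSystem_eq_bot_iff.mpr fun f hf hP hQ => MvPolynomial.funext fun p => by
    obtain ⟨p, rfl⟩ := hA p
    rw [eval_linearMap_eq_zero_of_linearSystem_eq_bot h A (isHomogeneous_linSubst A hf) hP hQ,
      map_zero]

end LinearSubstitution

section Existence

variable {σ τ : Type*} [Fintype σ] [Fintype τ]

/-- Double points indexed by `ι` and simple points indexed by `κ` can be chosen such that no
nonzero form of degree `d` in the variables `σ` is singular at the former and vanishes at the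
latter. -/
def FillsOn (𝕜 σ ι κ : Type*) [Field 𝕜] [Fintype σ] (d : ℕ) : Prop :=
  ∃ (P : ι → σ → 𝕜) (Q : κ → σ → 𝕜),
    linearSystem (homogeneousSubmodule σ 𝕜 d) P (fun b => (Q b, Q b)) = ⊥

/-- `FillsOn` with `N` variables, `k` double points and `s` simple points. -/
abbrev Fills (𝕜 : Type*) [Field 𝕜] (N d k s : ℕ) : Prop :=
  FillsOn 𝕜 (Fin N) (Fin k) (Fin s) d

variable {𝕜 : Type*} [Field 𝕜]

lemma FillsOn.of_surjective [Infinite 𝕜] {ι ι' κ κ' : Type*} {d : ℕ} (h : FillsOn 𝕜 σ ι κ d)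
    (e : τ ≃ σ) {i : ι' → ι} (hi : i.Surjective) {j : κ' → κ} (hj : j.Surjective) :
    FillsOn 𝕜 τ ι' κ' d := by
  obtain ⟨P, Q, h⟩ := h
  let A := LinearMap.funLeft 𝕜 𝕜 e
  have h' := linearSystem_eq_bot_iff.mp (linearSystem_map_eq_bot h (A := A)
    (LinearMap.funLeft_surjective_of_injective 𝕜 𝕜 e e.injective))
  exact ⟨fun a => A (P (i a)), fun b => A (Q (j b)), linearSystem_eq_bot_iff.mpr
    fun f hf hP hQ => h' f hf (hi.forall.mpr hP) (hj.forall.mpr hQ)⟩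

lemma fillsOn_iff_fills [Infinite 𝕜] {ι κ : Type*} [Fintype ι] [Fintype κ] {d : ℕ} :
    FillsOn 𝕜 σ ι κ d ↔
      Fills 𝕜 (Fintype.card σ) d (Fintype.card ι) (Fintype.card κ) :=
  ⟨fun h => h.of_surjective (Fintype.equivFin σ).symm (Fintype.equivFin ι).symm.surjective
      (Fintype.equivFin κ).symm.surjective,
    fun h => h.of_surjective (Fintype.equivFin σ) (Fintype.equivFin ι).surjective
      (Fintype.equivFin κ).surjective⟩

namespace Fills

lemma fillsOn [Infinite 𝕜] {ι κ : Type*} [Fintype ι] [Fintype κ] {N d k s : ℕ}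
    (h : Fills 𝕜 N d k s) (hN : Fintype.card σ = N) (hk : Fintype.card ι = k)
    (hs : Fintype.card κ = s) : FillsOn 𝕜 σ ι κ d := by
  subst hN hk hs
  exact fillsOn_iff_fills.mpr h

lemma mono {N d k s k' s' : ℕ} (h : Fills 𝕜 N d k s) (hk : k ≤ k') (hs : s ≤ s') :
    Fills 𝕜 N d k' s' := by
  obtain ⟨P, Q, h⟩ := h
  refine ⟨fun a => if ha : a.1 < k then P ⟨a, ha⟩ else 0,
    fun b => if hb : b.1 < s then Q ⟨b, hb⟩ else 0, linearSystem_eq_bot_iff.mpr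
    fun f hf hP hQ => linearSystem_eq_bot_iff.mp h f hf (fun a => ?_) fun b => ?_⟩
  · simpa using hP (Fin.castLE hk a)
  · simpa using hQ (Fin.castLE hs b)

/-- The points of the given configuration that are dropped impose at most `s'` conditions on the
remaining linear system; any such number of conditions is also imposed by general points. -/
lemma trade [CharZero 𝕜] {N d k s k' s' : ℕ} (hd : d ≠ 0) (h : Fills 𝕜 N d k s) (hk : k' ≤ k)
    (hs : N * k + s ≤ N * k' + s') : Fills 𝕜 N d k' s' := by
  obtain ⟨e, rfl⟩ := Nat.exists_eq_add_of_le hk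
  obtain ⟨P, Q, h⟩ := h
  let P' : Fin k' → Fin N → 𝕜 := fun a => P (Fin.castAdd e a)
  let V := linearSystem (homogeneousSubmodule (Fin N) 𝕜 d) P' Empty.elim
  have hpoints : Separates V fun p : Fin N → 𝕜 => dirDeriv p p := fun f hf hv => by
    have hf := (mem_linearSystem.mp hf).1
    refine MvPolynomial.funext fun p => ?_
    simpa [dirDeriv_self_of_isHomogeneous hf, hd] using hv p
  have hdropped : Separates V (Sum.elim
      (fun a : Fin e × Fin N => dirDeriv (P (Fin.natAdd k' a.1)) (Pi.single a.2 1))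
      fun b => dirDeriv (Q b) (Q b)) := fun f hf hv => by
    obtain ⟨hf, hP, -⟩ := mem_linearSystem.mp hf
    refine linearSystem_eq_bot_iff.mp h f hf (fun a => ?_) fun b => hv (Sum.inr b)
    induction a using Fin.addCases with
    | left a => exact hP a
    | right a => exact fun i => (dirDeriv_single _ i f).symm.trans (hv (Sum.inl (a, i)))
  obtain ⟨q, hq⟩ := hpoints.exists_fin_subfamily_of_card_le hdropped (m := s')
    (by simp; nlinarith)
  exact ⟨P', q, linearSystem_eq_bot_iff.mpr fun f hf hP hQ =>
    hq f (mem_linearSystem.mpr ⟨hf, hP, fun b => b.elim⟩) hQ⟩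

end Fills

end Existence

section Gluing

variable {𝕜 σ : Type*} [Field 𝕜]

/-- The polynomial `t • a + X none * b`: up to the factor `t` its restriction to the hyperplane
`X none = 0` is `a`, and for `t = 0` it is a multiple of the equation of that hyperplane. -/
noncomputable def glue (t : 𝕜) :
    MvPolynomial σ 𝕜 × MvPolynomial (Option σ) 𝕜 →ₗ[𝕜] MvPolynomial (Option σ) 𝕜 :=
  (t • (rename some).toLinearMap).coprod (LinearMap.mulLeft 𝕜 (X none))

lemma glue_apply (t : 𝕜) (a : MvPolynomial σ 𝕜) (b : MvPolynomial (Option σ) 𝕜) :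
    glue t (a, b) = t • rename some a + X none * b := by
  simp [glue]

lemma eval_glue (x : Option σ → 𝕜) (t : 𝕜) (a : MvPolynomial σ 𝕜)
    (b : MvPolynomial (Option σ) 𝕜) :
    eval x (glue t (a, b)) = t * eval (x ∘ some) a + x none * eval x b := by
  simp [glue_apply, eval_rename]

lemma exists_glue_eq {d : ℕ} {t : 𝕜} (ht : t ≠ 0) {f : MvPolynomial (Option σ) 𝕜}
    (hf : f.IsHomogeneous (d + 1)) :
    ∃ a b, a.IsHomogeneous (d + 1) ∧ b.IsHomogeneous d ∧ glue t (a, b) = f := by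
  classical
  obtain ⟨a, ha⟩ := exists_rename_eq_of_vars_subset_range (f.modMonomial (Finsupp.single none 1))
    some (Option.some_injective σ) fun o ho => by
      obtain ⟨ν, hν, ho⟩ := (mem_vars_iff_mem_support o).mp ho
      cases o with
      | some i => exact ⟨i, rfl⟩
      | none =>
        refine absurd (coeff_modMonomial_of_le f ?_) (mem_support_iff.mp hν)
        simpa [Nat.one_le_iff_ne_zero] using ho
  have ha' : a.IsHomogeneous (d + 1) := by
    rw [← IsHomogeneous.rename_isHomogeneous_iff (Option.some_injective σ), ha]
    intro ν hν
    by_cases hle : Finsupp.single none 1 ≤ ν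
    · exact absurd (coeff_modMonomial_of_le f hle) hν
    · exact hf (by rwa [coeff_modMonomial_of_not_le f hle] at hν)
  have hb : (f.divMonomial (Finsupp.single none 1)).IsHomogeneous d := fun ν hν => by
    rw [coeff_divMonomial] at hν
    have := hf hν
    rw [map_add, Finsupp.weight_single] at this
    simp at this
    lia
  refine ⟨t⁻¹ • a, _, (homogeneousSubmodule σ 𝕜 (d + 1)).smul_mem _ ha', hb, ?_⟩
  rw [glue_apply, map_smul, smul_inv_smul₀ ht, ha, add_comm, divMonomial_add_modMonomial_single]

variable [Fintype σ]

lemma dirDeriv_option (x : Option σ → 𝕜) (c : 𝕜) (w : σ → 𝕜) (f : MvPolynomial (Option σ) 𝕜) :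
    dirDeriv x (Option.elim' c w) f =
      c * eval x (pderiv none f) + ∑ i, w i * eval x (pderiv (some i) f) := by
  simp [dirDeriv_apply, Fintype.sum_option]

lemma isSingularAt_option_iff {f : MvPolynomial (Option σ) 𝕜} {x : Option σ → 𝕜} :
    IsSingularAt f x ↔
      (∀ w, dirDeriv x (Option.elim' 0 w) f = 0) ∧ dirDeriv x (Option.elim' 1 0) f = 0 := by
  classical
  refine ⟨fun h => ⟨fun w => isSingularAt_iff_dirDeriv.mp h _,
    isSingularAt_iff_dirDeriv.mp h _⟩, fun ⟨hw, h1⟩ => ?_⟩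
  rintro (_ | i)
  · simpa [dirDeriv_option] using h1
  · simpa [dirDeriv_option, Pi.single_apply] using hw (Pi.single i 1)

lemma dirDeriv_horizontal_glue (s t : 𝕜) (p w : σ → 𝕜) (a : MvPolynomial σ 𝕜)
    (b : MvPolynomial (Option σ) 𝕜) :
    dirDeriv (Option.elim' s p) (Option.elim' 0 w) (glue t (a, b)) =
      t * dirDeriv p w a + s * dirDeriv (Option.elim' s p) (Option.elim' 0 w) b := by
  have hcomp : Option.elim' s p ∘ some = p := rfl
  simp [dirDeriv_option, dirDeriv_apply p w, glue_apply, pderiv_rename (Option.some_injective σ),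
    eval_rename, hcomp, mul_add, Finset.mul_sum, Finset.sum_add_distrib, mul_left_comm]

lemma dirDeriv_vertical_glue (x : Option σ → 𝕜) (t : 𝕜) (a : MvPolynomial σ 𝕜)
    (b : MvPolynomial (Option σ) 𝕜) :
    dirDeriv x (Option.elim' 1 0) (glue t (a, b)) =
      eval x b + x none * dirDeriv x (Option.elim' 1 0) b := by
  classical
  have ha : pderiv none (rename some a) = 0 :=
    pderiv_eq_zero_of_notMem_vars fun h => by simpa using vars_rename some a h
  simp [dirDeriv_option, glue_apply, ha, add_comm]

lemma dirDeriv_glue_mem_polynomialFuns {x w : 𝕜 → Option σ → 𝕜}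
    (hx : ∀ o, (fun t => x t o) ∈ polynomialFuns 𝕜) (hw : ∀ o, (fun t => w t o) ∈ polynomialFuns 𝕜)
    (v : MvPolynomial σ 𝕜 × MvPolynomial (Option σ) 𝕜) :
    (fun t => dirDeriv (x t) (w t) (glue t v)) ∈ polynomialFuns 𝕜 := by
  obtain ⟨a, b⟩ := v
  simp only [glue_apply, map_add, map_smul, smul_eq_mul]
  exact add_mem (mul_mem id_mem_polynomialFuns (dirDeriv_mem_polynomialFuns hx hw _))
    (dirDeriv_mem_polynomialFuns hx hw _)

omit [Fintype σ] in
lemma isSingularAt_of_isSingularAt_X_mul [Finite σ] [CharZero 𝕜] {d : ℕ}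
    {b : MvPolynomial (Option σ) 𝕜} (hb : b.IsHomogeneous d) {x : Option σ → 𝕜} (hx : x none ≠ 0)
    (h : IsSingularAt (X none * b) x) : IsSingularAt b x := by
  have := Fintype.ofFinite σ
  simp only [isSingularAt_iff_dirDeriv, dirDeriv_mul, dirDeriv_X, eval_X] at h ⊢
  have heval : eval x b = 0 := by
    have heuler := h x
    rw [dirDeriv_self_of_isHomogeneous hb, ← mul_add, ← one_add_mul] at heuler
    simpa [hx, add_comm, Nat.cast_add_one_ne_zero] using heuler
  exact fun w => by simpa [heval, hx] using h w

lemma dirDeriv_self_eq_zero_of_X_mul [CharZero 𝕜] {d : ℕ} {b : MvPolynomial (Option σ) 𝕜}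
    (hb : b.IsHomogeneous d) {x : Option σ → 𝕜} (hx : x none ≠ 0)
    (h : dirDeriv x x (X none * b) = 0) : dirDeriv x x b = 0 := by
  rw [dirDeriv_self_of_isHomogeneous (d := 1 + d) ((isHomogeneous_X 𝕜 none).mul hb)] at h
  have heval : eval x b = 0 := by
    have hne : ((1 + d : ℕ) : 𝕜) ≠ 0 := Nat.cast_ne_zero.mpr (by lia)
    simpa [hx, hne, -Nat.cast_add] using h
  rw [dirDeriv_self_of_isHomogeneous hb, heval, mul_zero]

end Gluing

/-! ### The differential Horace method -/

section DifferentialHorace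

variable {𝕜 σ ι κ υ ρ : Type*} [Field 𝕜] [Fintype σ]

/-- The simple points `Q` and all directions of the hyperplane `X none = 0` at its points `r`. -/
def hyperplaneTangents (Q : κ → Option σ → 𝕜) (r : ρ → σ → 𝕜) :
    κ ⊕ (ρ × (σ → 𝕜)) → (Option σ → 𝕜) × (Option σ → 𝕜) :=
  Sum.elim (fun c => (Q c, Q c)) fun a => (Option.elim' 0 (r a.1), Option.elim' 0 a.2)

/-- The conditions on `(a, b)` saying that `glue t (a, b)` is singular at `P`, at the points `q` of
the hyperplane `X none = 0` and at the points `(t, r)`, and vanishes at `Q`, where the equations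
divisible by `t`, see `dirDeriv_horizontal_glue`, have been divided by `t`. -/
noncomputable def horaceFunctional (P : ι → Option σ → 𝕜) (Q : κ → Option σ → 𝕜) (q : υ → σ → 𝕜)
    (r : ρ → σ → 𝕜) (t : 𝕜) :
    (ι × (Option σ → 𝕜)) ⊕ κ ⊕ (υ × (σ → 𝕜)) ⊕ υ ⊕ (ρ × (σ → 𝕜)) ⊕ ρ →
      MvPolynomial σ 𝕜 × MvPolynomial (Option σ) 𝕜 →ₗ[𝕜] 𝕜 :=
  Sum.elim (fun a => dirDeriv (P a.1) a.2 ∘ₗ glue t) <|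
  Sum.elim (fun c => dirDeriv (Q c) (Q c) ∘ₗ glue t) <|
  Sum.elim (fun a => dirDeriv (q a.1) a.2 ∘ₗ LinearMap.fst 𝕜 _ _) <|
  Sum.elim (fun c => dirDeriv (Option.elim' 0 (q c)) (Option.elim' 1 0) ∘ₗ glue t) <|
  Sum.elim (fun a => (dirDeriv (r a.1) a.2).coprod
    (dirDeriv (Option.elim' t (r a.1)) (Option.elim' 0 a.2)))
  fun c => dirDeriv (Option.elim' t (r c)) (Option.elim' 1 0) ∘ₗ glue t

variable {P : ι → Option σ → 𝕜} {Q : κ → Option σ → 𝕜} {q : υ → σ → 𝕜} {r : ρ → σ → 𝕜}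

lemma horaceFunctional_eq_zero_iff {t : 𝕜} {a : MvPolynomial σ 𝕜}
    {b : MvPolynomial (Option σ) 𝕜} :
    (∀ i, horaceFunctional P Q q r t i (a, b) = 0) ↔
      (∀ c, IsSingularAt (glue t (a, b)) (P c)) ∧
      (∀ c, dirDeriv (Q c) (Q c) (glue t (a, b)) = 0) ∧
      (∀ c, IsSingularAt a (q c)) ∧
      (∀ c, eval (Option.elim' 0 (q c)) b = 0) ∧
      (∀ c w, dirDeriv (r c) w a +
        dirDeriv (Option.elim' t (r c)) (Option.elim' 0 w) b = 0) ∧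
      ∀ c, dirDeriv (Option.elim' t (r c)) (Option.elim' 1 0) (glue t (a, b)) = 0 := by
  simp [horaceFunctional, Sum.forall, isSingularAt_iff_dirDeriv, dirDeriv_vertical_glue]

lemma horaceFunctional_mem_polynomialFuns
    (i : (ι × (Option σ → 𝕜)) ⊕ κ ⊕ (υ × (σ → 𝕜)) ⊕ υ ⊕ (ρ × (σ → 𝕜)) ⊕ ρ)
    (v : MvPolynomial σ 𝕜 × MvPolynomial (Option σ) 𝕜) :
    (fun t => horaceFunctional P Q q r t i v) ∈ polynomialFuns 𝕜 := by
  have hr : ∀ c o, (fun t => Option.elim' t (r c) o) ∈ polynomialFuns 𝕜 := fun c o => by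
    cases o with
    | none => exact id_mem_polynomialFuns
    | some i => exact const_mem_polynomialFuns _
  have hconst : ∀ (x : Option σ → 𝕜) o, (fun _ : 𝕜 => x o) ∈ polynomialFuns 𝕜 :=
    fun x o => const_mem_polynomialFuns _
  rcases i with c | c | c | c | c | c
  · exact dirDeriv_glue_mem_polynomialFuns (hconst _) (hconst _) v
  · exact dirDeriv_glue_mem_polynomialFuns (hconst _) (hconst _) v
  · exact const_mem_polynomialFuns _
  · exact dirDeriv_glue_mem_polynomialFuns (hconst _) (hconst _) v
  · exact add_mem (const_mem_polynomialFuns _) (dirDeriv_mem_polynomialFuns (hr _) (hconst _) _)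
  · exact dirDeriv_glue_mem_polynomialFuns (hr _) (hconst _) v

/-- At `t = 0` the two components decouple: `b` vanishes at `(0, r)`, so by Euler's relation its
derivative there in the direction `r` vanishes, and `a` vanishes at `r`. -/
lemma separates_horaceFunctional_zero [CharZero 𝕜] {d : ℕ} (hP : ∀ a, P a none ≠ 0)
    (hQ : ∀ c, Q c none ≠ 0)
    (htrace : linearSystem (homogeneousSubmodule σ 𝕜 (d + 1)) q (fun c => (r c, r c)) = ⊥)
    (hresidue : linearSystem (homogeneousSubmodule (Option σ) 𝕜 d) P
      (Sum.elim (hyperplaneTangents Q r)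
        fun c => (Option.elim' 0 (q c), Option.elim' 0 (q c))) = ⊥) :
    Separates ((homogeneousSubmodule σ 𝕜 (d + 1)).prod (homogeneousSubmodule (Option σ) 𝕜 d))
      (horaceFunctional P Q q r 0) := by
  rintro ⟨a, b⟩ ⟨ha : a.IsHomogeneous _, hb : b.IsHomogeneous _⟩ hv
  obtain ⟨hP', hQ', hqa, hqb, hr, hr'⟩ := horaceFunctional_eq_zero_iff.mp hv
  have hglue : glue 0 (a, b) = X none * b := by simp [glue_apply]
  have hrb : ∀ c, eval (Option.elim' 0 (r c)) b = 0 := fun c => by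
    simpa [dirDeriv_vertical_glue] using hr' c
  have ha0 : a = 0 := linearSystem_eq_bot_iff.mp htrace a ha hqa fun c => by
    simpa [dirDeriv_self_of_isHomogeneous hb, hrb] using hr c (r c)
  have hb0 : b = 0 := by
    refine linearSystem_eq_bot_iff.mp hresidue b hb
      (fun c => isSingularAt_of_isSingularAt_X_mul hb (hP c) (hglue ▸ hP' c)) ?_
    rintro ((c | ⟨c, w⟩) | c)
    · exact dirDeriv_self_eq_zero_of_X_mul hb (hQ c) (hglue ▸ hQ' c)
    · simpa [hyperplaneTangents, ha0] using hr c w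
    · exact (dirDeriv_self_of_isHomogeneous hb _).trans (by simp [hqb])
  rw [ha0, hb0, Prod.mk_zero_zero]

theorem exists_linearSystem_eq_bot_of_trace_of_residue [CharZero 𝕜] {d : ℕ}
    (hP : ∀ a, P a none ≠ 0) (hQ : ∀ c, Q c none ≠ 0)
    (htrace : linearSystem (homogeneousSubmodule σ 𝕜 (d + 1)) q (fun c => (r c, r c)) = ⊥)
    (hresidue : linearSystem (homogeneousSubmodule (Option σ) 𝕜 d) P
      (Sum.elim (hyperplaneTangents Q r)
        fun c => (Option.elim' 0 (q c), Option.elim' 0 (q c))) = ⊥) :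
    ∃ t : 𝕜, linearSystem (homogeneousSubmodule (Option σ) 𝕜 (d + 1))
      (Sum.elim P (Sum.elim (fun c => Option.elim' 0 (q c)) fun c => Option.elim' t (r c)))
      (fun c => (Q c, Q c)) = ⊥ := by
  have : FiniteDimensional 𝕜
      ((homogeneousSubmodule σ 𝕜 (d + 1)).prod (homogeneousSubmodule (Option σ) 𝕜 d)) :=
    Module.Finite.iff_fg.mpr
      ((homogeneousSubmodule_fg σ 𝕜 (d + 1)).prod (homogeneousSubmodule_fg (Option σ) 𝕜 d))
  have hfin := Separates.finite_setOf_not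
    (separates_horaceFunctional_zero hP hQ htrace hresidue)
    fun i v _ => horaceFunctional_mem_polynomialFuns i v
  obtain ⟨t, ht⟩ := (hfin.union (Set.finite_singleton 0)).infinite_compl.nonempty
  simp only [Set.mem_compl_iff, Set.mem_union, Set.mem_ofPred_eq, Set.mem_singleton_iff, not_or,
    not_not] at ht
  obtain ⟨hsep, ht0⟩ := ht
  refine ⟨t, linearSystem_eq_bot_iff.mpr fun f hf hfP hfQ => ?_⟩
  obtain ⟨a, b, ha, hb, rfl⟩ := exists_glue_eq ht0 hf
  rw [hsep (a, b) ⟨ha, hb⟩ (horaceFunctional_eq_zero_iff.mpr ⟨fun c => hfP (Sum.inl c), hfQ,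
    fun c => ?_, fun c => ?_, fun c w => ?_, fun c => ?_⟩), map_zero]
  · refine isSingularAt_iff_dirDeriv.mpr fun w => ?_
    simpa [dirDeriv_horizontal_glue, ht0] using
      (isSingularAt_option_iff.mp (hfP (Sum.inr (Sum.inl c)))).1 w
  · simpa [dirDeriv_vertical_glue] using
      (isSingularAt_option_iff.mp (hfP (Sum.inr (Sum.inl c)))).2
  · simpa [dirDeriv_horizontal_glue, ← mul_add, ht0] using
      (isSingularAt_option_iff.mp (hfP (Sum.inr (Sum.inr c)))).1 w
  · exact (isSingularAt_option_iff.mp (hfP (Sum.inr (Sum.inr c)))).2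

end DifferentialHorace

section Horace

variable {𝕜 σ ι κ κ' υ ρ : Type*} [Field 𝕜] [Fintype σ]

omit [Fintype σ] in
lemma exists_linear_into_hyperplane [Finite σ] [Fintype ρ] (r : ρ → Option σ → 𝕜)
    (hρ : Fintype.card ρ ≤ Nat.card σ) :
    ∃ A : (Option σ → 𝕜) →ₗ[𝕜] (Option σ → 𝕜), Function.Surjective A ∧ ∀ c, A (r c) none = 0 := by
  classical
  have := Fintype.ofFinite σ
  have hspan : Submodule.span 𝕜 (Set.range r) < ⊤ :=
    lt_top_iff_ne_top.mpr fun htop => by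
      have := finrank_range_le_card (R := 𝕜) r
      rw [Set.finrank, htop, finrank_top] at this
      simp at this hρ
      lia
  obtain ⟨c, hc, hc0⟩ := Submodule.exists_le_ker_of_lt_top _ hspan
  obtain ⟨j, hj⟩ : ∃ j, c (Pi.single j 1) ≠ 0 := by
    by_contra! h
    exact hc (LinearMap.pi_ext' fun j => LinearMap.ext_ring (h j))
  let A : (Option σ → 𝕜) →ₗ[𝕜] (Option σ → 𝕜) := LinearMap.pi fun o =>
    o.elim c fun i => LinearMap.proj (Equiv.swap none j (some i))
  refine ⟨A, LinearMap.surjective_of_injective ((injective_iff_map_eq_zero A).mpr fun v hv => ?_),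
    fun a => hc0 (Submodule.subset_span (Set.mem_range_self a))⟩
  have hoff : ∀ k, k ≠ j → v k = 0 := fun k hk => by
    obtain ⟨i, hi⟩ := Option.ne_none_iff_exists.mp
      fun h => hk (by simpa using (Equiv.swap_apply_eq_iff (x := none) (y := j)).mp h)
    have : v (Equiv.swap none j (some i)) = 0 := congrFun hv (some i)
    rwa [hi, Equiv.swap_apply_self] at this
  have hv' : v = v j • Pi.single j 1 := by
    ext k
    rcases eq_or_ne k j with rfl | hk <;> simp [*]
  have hcv : c v = 0 := congrFun hv none
  rw [hv', map_smul, smul_eq_mul, mul_eq_zero, or_iff_left hj] at hcv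
  rw [hv', hcv, zero_smul]

omit [Fintype σ] in
lemma preservesLines_hyperplanePoints :
    PreservesLines 𝕜 fun (q : ρ → σ → 𝕜) c => (Option.elim' 0 (q c) : Option σ → 𝕜) :=
  preservesLines_of_isLinearMap
    ⟨fun x y => by ext c (_ | i) <;> simp, fun t x => by ext c (_ | i) <;> simp⟩

lemma FillsOn.exists_specialized [Infinite 𝕜] [Finite ρ] {d : ℕ}
    (h : FillsOn 𝕜 (Option σ) (ι ⊕ ρ) κ d) (hρ : Nat.card ρ ≤ Nat.card σ) :
    ∃ (P : ι → Option σ → 𝕜) (r : ρ → σ → 𝕜) (Q : κ → Option σ → 𝕜),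
      linearSystem (homogeneousSubmodule (Option σ) 𝕜 d)
        (Sum.elim P fun c => Option.elim' 0 (r c)) (fun b => (Q b, Q b)) = ⊥ := by
  have := Fintype.ofFinite ρ
  obtain ⟨P, Q, h⟩ := h
  obtain ⟨A, hA, hA0⟩ := exists_linear_into_hyperplane (fun c => P (Sum.inr c)) (by simpa using hρ)
  refine ⟨fun a => A (P (Sum.inl a)), fun c i => A (P (Sum.inr c)) (some i), fun b => A (Q b), ?_⟩
  convert linearSystem_map_eq_bot h hA using 2
  funext a
  rcases a with a | c
  · rfl
  · funext o
    cases o with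
    | none => exact (hA0 c).symm
    | some i => rfl

/-- The three systems to which the points are specialized are empty for general points, hence
for a common choice of points off the hyperplane `X none = 0`. -/
lemma exists_general_position [Infinite 𝕜] [Finite ι] [Finite κ] [Finite κ'] [Finite ρ]
    {d₀ d₁ d₂ : ℕ} {q₀ : υ → σ → 𝕜}
    (htrace : ∃ r : ρ → σ → 𝕜,
      linearSystem (homogeneousSubmodule σ 𝕜 d₂) q₀ (fun c => (r c, r c)) = ⊥)
    (h₁ : FillsOn 𝕜 (Option σ) (ι ⊕ ρ) (κ ⊕ κ') d₁) (h₀ : FillsOn 𝕜 (Option σ) ι κ d₀)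
    (hρ : Nat.card ρ ≤ Nat.card σ) :
    ∃ (P : ι → Option σ → 𝕜) (r : ρ → σ → 𝕜) (Q : κ ⊕ κ' → Option σ → 𝕜),
      (∀ a, P a none ≠ 0) ∧ (∀ b, Q b none ≠ 0) ∧
      linearSystem (homogeneousSubmodule σ 𝕜 d₂) q₀ (fun c => (r c, r c)) = ⊥ ∧
      linearSystem (homogeneousSubmodule (Option σ) 𝕜 d₁)
        (Sum.elim P fun c => Option.elim' 0 (r c)) (fun b => (Q b, Q b)) = ⊥ ∧
      linearSystem (homogeneousSubmodule (Option σ) 𝕜 d₀) P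
        (fun b => (Q (Sum.inl b), Q (Sum.inl b))) = ⊥ := by
  let E := (ι → Option σ → 𝕜) × (ρ → σ → 𝕜) × (κ ⊕ κ' → Option σ → 𝕜)
  obtain ⟨r₂, h₂⟩ := htrace
  obtain ⟨P₁, r₁, Q₁, h₁⟩ := h₁.exists_specialized hρ
  obtain ⟨P₀, Q₀, h₀⟩ := h₀
  have hP : PreservesLines 𝕜 fun x : E => x.1 :=
    preservesLines_of_isLinearMap ⟨fun _ _ => rfl, fun _ _ => rfl⟩
  have hr : PreservesLines 𝕜 fun x : E => x.2.1 :=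
    preservesLines_of_isLinearMap ⟨fun _ _ => rfl, fun _ _ => rfl⟩
  have hoff : LineCofinite 𝕜 {x : E | ∀ a, Sum.elim x.1 x.2.2 a none ≠ 0} :=
    LineCofinite.setOf_forall fun a => lineCofinite_setOf_ne_zero <|
      preservesLines_of_isLinearMap ⟨fun x y => by cases a <;> rfl, fun t x => by cases a <;> rfl⟩
  have htrace : LineCofinite 𝕜 {x : E | linearSystem (homogeneousSubmodule σ 𝕜 d₂) q₀
      (fun c => (x.2.1 c, x.2.1 c)) = ⊥} :=
    lineCofinite_setOf_linearSystem_eq_bot (PreservesLines.const _)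
      (preservesLines_of_isLinearMap ⟨fun _ _ => rfl, fun _ _ => rfl⟩)
  have hupper : LineCofinite 𝕜 {x : E | linearSystem (homogeneousSubmodule (Option σ) 𝕜 d₁)
      (Sum.elim x.1 fun c => Option.elim' 0 (x.2.1 c)) (fun b => (x.2.2 b, x.2.2 b)) = ⊥} :=
    lineCofinite_setOf_linearSystem_eq_bot
      (hP.sumElim (preservesLines_hyperplanePoints.comp hr))
      (preservesLines_of_isLinearMap ⟨fun _ _ => rfl, fun _ _ => rfl⟩)
  have hlower : LineCofinite 𝕜 {x : E | linearSystem (homogeneousSubmodule (Option σ) 𝕜 d₀) x.1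
      (fun b => (x.2.2 (Sum.inl b), x.2.2 (Sum.inl b))) = ⊥} :=
    lineCofinite_setOf_linearSystem_eq_bot hP
      (preservesLines_of_isLinearMap ⟨fun _ _ => rfl, fun _ _ => rfl⟩)
  obtain ⟨⟨P, r, Q⟩, ⟨ho, ht⟩, hu, hl⟩ := (hoff.inter htrace).inter_nonempty (hupper.inter hlower)
    (hoff.inter_nonempty htrace
      ⟨(fun _ _ => 1, 0, fun _ _ => 1), fun a => by cases a <;> exact one_ne_zero⟩
      ⟨(0, r₂, 0), h₂⟩)
    (hupper.inter_nonempty hlower ⟨(P₁, r₁, Q₁), h₁⟩ ⟨(P₀, 0, Sum.elim Q₀ 0), h₀⟩)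
  exact ⟨P, r, Q, fun a => ho (Sum.inl a), fun b => ho (Sum.inr b), ht, hu, hl⟩

/-- The points of the hyperplane impose independent conditions: a form that vanishes on the
hyperplane is divisible by `X none`, and the quotient lies in an empty system. -/
lemma exists_hyperplane_points [CharZero 𝕜] [Fintype κ'] [Fintype ρ] {d u : ℕ}
    {P : ι → Option σ → 𝕜} {r : ρ → σ → 𝕜} {Q : κ ⊕ κ' → Option σ → 𝕜}
    (hP : ∀ a, P a none ≠ 0) (hQ : ∀ b, Q b none ≠ 0)
    (hupper : linearSystem (homogeneousSubmodule (Option σ) 𝕜 (d + 1))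
      (Sum.elim P fun c => Option.elim' 0 (r c)) (fun b => (Q b, Q b)) = ⊥)
    (hlower : linearSystem (homogeneousSubmodule (Option σ) 𝕜 d) P
      (fun b => (Q (Sum.inl b), Q (Sum.inl b))) = ⊥)
    (hu : Fintype.card ρ + Fintype.card κ' ≤ u) :
    ∃ q : Fin u → σ → 𝕜, linearSystem (homogeneousSubmodule (Option σ) 𝕜 (d + 1)) P
      (Sum.elim (hyperplaneTangents (fun b => Q (Sum.inl b)) r)
        fun c => (Option.elim' 0 (q c), Option.elim' 0 (q c))) = ⊥ := by
  let V := linearSystem (homogeneousSubmodule (Option σ) 𝕜 (d + 1)) P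
    (hyperplaneTangents (fun b => Q (Sum.inl b)) r)
  have hhyperplane : Separates V fun p : σ → 𝕜 =>
      dirDeriv (Option.elim' 0 p) (Option.elim' 0 p) := fun f hf hv => by
    obtain ⟨hf, hfP, hfT⟩ := mem_linearSystem.mp hf
    obtain ⟨a, b, -, hb, rfl⟩ := exists_glue_eq one_ne_zero hf
    have ha : a = 0 := MvPolynomial.funext fun p => by
      simpa [eval_glue] using!
        (dirDeriv_self_eq_zero_iff (Nat.succ_ne_zero d) hf).mp (hv p)
    have hglue : glue 1 (a, b) = X none * b := by simp [glue_apply, ha]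
    rw [hglue] at hfP hfT ⊢
    rw [linearSystem_eq_bot_iff.mp hlower b hb
      (fun c => isSingularAt_of_isSingularAt_X_mul hb (hP c) (hfP c))
      (fun c => dirDeriv_self_eq_zero_of_X_mul hb (hQ _) (hfT (Sum.inl c))), mul_zero]
  have hvertical : Separates V (Sum.elim
      (fun c : ρ => dirDeriv (Option.elim' 0 (r c)) (Option.elim' 1 0))
      fun b : κ' => dirDeriv (Q (Sum.inr b)) (Q (Sum.inr b))) := fun f hf hv => by
    obtain ⟨hf, hfP, hfT⟩ := mem_linearSystem.mp hf
    refine linearSystem_eq_bot_iff.mp hupper f hf (Sum.forall.mpr ⟨hfP, fun c => ?_⟩)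
      (Sum.forall.mpr ⟨fun b => hfT (Sum.inl b), fun b => hv (Sum.inr b)⟩)
    exact isSingularAt_option_iff.mpr ⟨fun w => hfT (Sum.inr (c, w)), hv (Sum.inl c)⟩
  obtain ⟨q, hq⟩ := hhyperplane.exists_fin_subfamily_of_card_le hvertical (m := u)
    (by simpa using hu)
  refine ⟨q, linearSystem_eq_bot_iff.mpr fun f hf hfP hfT => hq f ?_ fun c => hfT (Sum.inr c)⟩
  exact mem_linearSystem.mpr ⟨hf, hfP, fun c => hfT (Sum.inl c)⟩

theorem FillsOn.horace [CharZero 𝕜] [Finite ι] [Finite κ] [Fintype κ'] [Fintype ρ] {d u : ℕ}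
    (htrace : FillsOn 𝕜 σ (Fin u) ρ (d + 2))
    (hupper : FillsOn 𝕜 (Option σ) (ι ⊕ ρ) (κ ⊕ κ') (d + 1)) (hlower : FillsOn 𝕜 (Option σ) ι κ d)
    (hu : Fintype.card ρ + Fintype.card κ' ≤ u) (hρ : Fintype.card ρ ≤ Fintype.card σ) :
    FillsOn 𝕜 (Option σ) (ι ⊕ Fin u ⊕ ρ) κ (d + 2) := by
  obtain ⟨q₀, htrace⟩ := htrace
  obtain ⟨P, r, Q, hP, hQ, ht, hupper, hlower⟩ :=
    exists_general_position htrace hupper hlower (by simpa using hρ)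
  obtain ⟨q₁, hq₁⟩ := exists_hyperplane_points hP hQ hupper hlower hu
  have hUt : LineCofinite 𝕜 {q : Fin u → σ → 𝕜 |
      linearSystem (homogeneousSubmodule σ 𝕜 (d + 2)) q (fun c => (r c, r c)) = ⊥} :=
    lineCofinite_setOf_linearSystem_eq_bot PreservesLines.id (PreservesLines.const _)
  have hUr : LineCofinite 𝕜 {q : Fin u → σ → 𝕜 |
      linearSystem (homogeneousSubmodule (Option σ) 𝕜 (d + 1)) P
        (Sum.elim (hyperplaneTangents (fun b => Q (Sum.inl b)) r)
          fun c => (Option.elim' 0 (q c), Option.elim' 0 (q c))) = ⊥} := by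
    refine lineCofinite_setOf_linearSystem_eq_bot (PreservesLines.const _)
      (.sumElim (PreservesLines.const _) (PreservesLines.comp
        (g := fun (x : Fin u → Option σ → 𝕜) c => (x c, x c)) ?_ preservesLines_hyperplanePoints))
    exact preservesLines_of_isLinearMap ⟨fun _ _ => rfl, fun _ _ => rfl⟩
  obtain ⟨q, hqt, hqr⟩ := hUt.inter_nonempty hUr ⟨q₀, ht⟩ ⟨q₁, hq₁⟩
  obtain ⟨t, h⟩ := exists_linearSystem_eq_bot_of_trace_of_residue hP (fun b => hQ _) hqt hqr
  exact ⟨_, _, h⟩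

theorem Fills.horace [CharZero 𝕜] {N d u ε k s s' : ℕ} (htrace : Fills 𝕜 N (d + 2) u ε)
    (hupper : Fills 𝕜 (N + 1) (d + 1) (k + ε) s') (hlower : Fills 𝕜 (N + 1) d k s) (hs : s ≤ s')
    (hu : ε + s' ≤ u + s) (hε : ε ≤ N) : Fills 𝕜 (N + 1) (d + 2) (k + u + ε) s := by
  have h := FillsOn.horace (σ := Fin N) (ι := Fin k) (κ := Fin s) (κ' := Fin (s' - s)) htrace
    (hupper.fillsOn (by simp) (by simp) (by simp; lia)) (hlower.fillsOn (by simp) (by simp)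
    (by simp)) (by simp; lia) (by simpa using hε)
  simpa [add_assoc] using fillsOn_iff_fills.mp h

end Horace

/-! ### Cubics and codimension three subspaces -/

section CoordinateSubspaces

variable {𝕜 σ τ : Type*} [Field 𝕜]

lemma degree_eq_of_isHomogeneous {d : ℕ} {f : MvPolynomial σ 𝕜} (hf : f.IsHomogeneous d)
    {μ : σ →₀ ℕ} (hμ : coeff μ f ≠ 0) : μ.degree = d := by
  rw [Finsupp.degree_eq_weight_one]
  exact hf hμ

variable (𝕜) in
/-- The coordinate subspace where the coordinates in `b` vanish. -/
def coordSubspace (b : Set σ) : Submodule 𝕜 (σ → 𝕜) :=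
  Submodule.pi b fun _ => ⊥

lemma mem_coordSubspace {b : Set σ} {p : σ → 𝕜} : p ∈ coordSubspace 𝕜 b ↔ ∀ i ∈ b, p i = 0 := by
  simp [coordSubspace, Submodule.mem_pi]

variable (𝕜) in
/-- The polynomials vanishing on `coordSubspace 𝕜 b`. -/
noncomputable def vanishingOn (b : Set σ) : Submodule 𝕜 (MvPolynomial σ 𝕜) :=
  (vanishingIdeal 𝕜 (coordSubspace 𝕜 b : Set (σ → 𝕜))).restrictScalars 𝕜

lemma mem_vanishingOn {b : Set σ} {f : MvPolynomial σ 𝕜} :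
    f ∈ vanishingOn 𝕜 b ↔ ∀ p ∈ coordSubspace 𝕜 b, eval p f = 0 :=
  Iff.rfl

lemma exists_ne_zero_of_mem_vanishingOn [Infinite 𝕜] {b : Set σ} {f : MvPolynomial σ 𝕜}
    (hf : f ∈ vanishingOn 𝕜 b) {μ : σ →₀ ℕ} (hμ : coeff μ f ≠ 0) : ∃ i ∈ b, μ i ≠ 0 := by
  classical
  let I := Ideal.span (X '' b : Set (MvPolynomial σ 𝕜))
  let φ : MvPolynomial σ 𝕜 →ₐ[𝕜] MvPolynomial σ 𝕜 := aeval fun i => if i ∈ b then 0 else X i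
  have hφ : (Ideal.Quotient.mkₐ 𝕜 I).comp φ = Ideal.Quotient.mkₐ 𝕜 I := by
    ext i
    by_cases hi : i ∈ b
    · have : Ideal.Quotient.mk I (X i) = 0 :=
        Ideal.Quotient.eq_zero_iff_mem.mpr (Ideal.subset_span ⟨i, hi, rfl⟩)
      simp [φ, hi, this]
    · simp [φ, hi]
  have hφf : φ f = 0 := MvPolynomial.funext fun p => by
    have heval : eval p (φ f) = eval (fun i => if i ∈ b then 0 else p i) f := by
      rw [← coe_aeval_eq_eval, ← coe_aeval_eq_eval, RingHom.coe_coe, RingHom.coe_coe,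
        ← AlgHom.comp_apply]
      refine congrArg (fun ψ : MvPolynomial σ 𝕜 →ₐ[𝕜] 𝕜 => ψ f) (algHom_ext fun i => ?_)
      by_cases hi : i ∈ b <;> simp [φ, hi]
    rw [heval, map_zero]
    exact mem_vanishingOn.mp hf _ (mem_coordSubspace.mpr fun i hi => if_pos hi)
  have hfI : f ∈ I := by
    rw [← Ideal.Quotient.eq_zero_iff_mem, ← Ideal.Quotient.mkₐ_eq_mk 𝕜, ← hφ, AlgHom.comp_apply,
      hφf, map_zero]
  exact mem_ideal_span_X_image.mp hfI μ (mem_support_iff.mpr hμ)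

variable (𝕜) in
/-- The inclusion of a coordinate subspace: the coordinates outside the range of `j` are zero. -/
noncomputable abbrev extendZero (j : τ → σ) : (τ → 𝕜) →ₗ[𝕜] (σ → 𝕜) :=
  Function.ExtendByZero.linearMap 𝕜 j

variable {j : τ → σ}

lemma extendZero_mem_coordSubspace (hj : j.Injective) {b : Set σ} {b' : Set τ}
    (hb : j ⁻¹' b ⊆ b') {p : τ → 𝕜} (hp : p ∈ coordSubspace 𝕜 b') :
    extendZero 𝕜 j p ∈ coordSubspace 𝕜 b :=
  mem_coordSubspace.mpr fun i hi => by
    by_cases h : ∃ a, j a = i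
    · obtain ⟨a, rfl⟩ := h
      simpa [hj.extend_apply] using mem_coordSubspace.mp hp a (hb hi)
    · simp [Function.extend_apply' _ _ _ h]

lemma exists_extendZero_eq (hj : j.Injective) {b : Set σ} (hb : (Set.range j)ᶜ ⊆ b) {p : σ → 𝕜}
    (hp : p ∈ coordSubspace 𝕜 b) : ∃ q, extendZero 𝕜 j q = p := by
  refine ⟨p ∘ j, funext fun i => ?_⟩
  by_cases h : ∃ a, j a = i
  · obtain ⟨a, rfl⟩ := h
    simp [hj.extend_apply]
  · simp [Function.extend_apply' _ _ _ h, mem_coordSubspace.mp hp i (hb h)]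

lemma linSubst_extendZero_mem_vanishingOn [Fintype τ] (hj : j.Injective) {b : Set σ}
    {b' : Set τ} (hb : j ⁻¹' b ⊆ b') {f : MvPolynomial σ 𝕜} (hf : f ∈ vanishingOn 𝕜 b) :
    linSubst (extendZero 𝕜 j) f ∈ vanishingOn 𝕜 b' := fun p hp =>
  (eval_linSubst _ p f).trans (hf _ (extendZero_mem_coordSubspace hj hb hp))

end CoordinateSubspaces

section CubicRestriction

variable {𝕜 : Type*} [Field 𝕜]

section Restriction

variable {σ τ : Type*} [Fintype σ] [Fintype τ]

lemma linearSystem_eq_bot_of_range_subset {ι ι' κ κ' : Type*}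
    {V : Submodule 𝕜 (MvPolynomial σ 𝕜)} {P : ι → σ → 𝕜} {Q : κ → (σ → 𝕜) × (σ → 𝕜)}
    {P' : ι' → σ → 𝕜} {Q' : κ' → (σ → 𝕜) × (σ → 𝕜)} (h : linearSystem V P Q = ⊥)
    (hP : Set.range P ⊆ Set.range P') (hQ : Set.range Q ⊆ Set.range Q') :
    linearSystem V P' Q' = ⊥ := by
  refine linearSystem_eq_bot_iff.mpr fun f hf hP' hQ' =>
    linearSystem_eq_bot_iff.mp h f hf (fun a => ?_) fun b => ?_
  · obtain ⟨a', ha⟩ := hP ⟨a, rfl⟩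
    exact ha ▸ hP' a'
  · obtain ⟨b', hb⟩ := hQ ⟨b, rfl⟩
    exact hb ▸ hQ' b'

/-- Forms in `V` are controlled by their restriction to a coordinate subspace, which lies in `V'`,
together with the forms in `V` that vanish on it. The points `x` are used on both sides. -/
lemma exists_linearSystem_eq_bot_of_restriction [Infinite 𝕜] {ι₀ ι₁ ι₂ κ₁ κ₂ : Type*}
    {V : Submodule 𝕜 (MvPolynomial σ 𝕜)} {V' : Submodule 𝕜 (MvPolynomial τ 𝕜)}
    [FiniteDimensional 𝕜 V] [FiniteDimensional 𝕜 V'] {j : τ → σ} (hj : j.Injective) {b : Set σ}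
    (hb : (Set.range j)ᶜ ⊆ b) (hV : ∀ f ∈ V, linSubst (extendZero 𝕜 j) f ∈ V')
    {p : ι₁ → τ → 𝕜} {Q : κ₁ → τ → 𝕜}
    (hres : ∃ x : ι₀ → τ → 𝕜, linearSystem V' (Sum.elim p x) (fun c => (Q c, Q c)) = ⊥)
    {r : ι₂ → σ → 𝕜} {R : κ₂ → σ → 𝕜}
    (hker : ∃ x : ι₀ → σ → 𝕜, (∀ a, x a ∈ coordSubspace 𝕜 b) ∧
      linearSystem (V ⊓ vanishingOn 𝕜 b) (Sum.elim r x) (fun c => (R c, R c)) = ⊥) :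
    ∃ x : ι₀ → τ → 𝕜,
      linearSystem V (Sum.elim (Sum.elim (extendZero 𝕜 j ∘ p) r) (extendZero 𝕜 j ∘ x))
        (fun c => (Sum.elim (extendZero 𝕜 j ∘ Q) R c, Sum.elim (extendZero 𝕜 j ∘ Q) R c)) = ⊥ := by
  obtain ⟨x₁, hx₁⟩ := hres
  obtain ⟨x₂, hx₂b, hx₂⟩ := hker
  choose x₂' hx₂' using fun a => exists_extendZero_eq hj hb (hx₂b a)
  have hVfin : FiniteDimensional 𝕜 ↥(V ⊓ vanishingOn 𝕜 b) :=
    Submodule.finiteDimensional_of_le (S₂ := V) inf_le_left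
  have hres : LineCofinite 𝕜 {x : ι₀ → τ → 𝕜 |
      linearSystem V' (Sum.elim p x) (fun c => (Q c, Q c)) = ⊥} :=
    lineCofinite_setOf_linearSystem_eq_bot ((PreservesLines.const p).sumElim .id)
      (PreservesLines.const _)
  have hker : LineCofinite 𝕜 {x : ι₀ → τ → 𝕜 | linearSystem (V ⊓ vanishingOn 𝕜 b)
      (Sum.elim r fun a => extendZero 𝕜 j (x a)) (fun c => (R c, R c)) = ⊥} :=
    lineCofinite_setOf_linearSystem_eq_bot ((PreservesLines.const r).sumElim
      (preservesLines_of_isLinearMap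
        ⟨fun _ _ => funext fun _ => map_add _ _ _,
          fun t _ => funext fun _ => map_smul (extendZero 𝕜 j) t _⟩))
      (PreservesLines.const _)
  obtain ⟨x, hxres, hxker⟩ := hres.inter_nonempty hker ⟨x₁, hx₁⟩ ⟨x₂', by simpa [hx₂'] using! hx₂⟩
  refine ⟨x, linearSystem_eq_bot_iff.mpr fun f hf hP hQ => linearSystem_eq_bot_iff.mp hxker f
    ⟨hf, fun q hq => ?_⟩ (fun a => ?_) fun c => hQ (Sum.inr c)⟩
  · obtain ⟨q, rfl⟩ := exists_extendZero_eq hj hb hq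
    refine eval_linearMap_eq_zero_of_linearSystem_eq_bot hxres _ (hV f hf) (fun a => ?_)
      (fun c => hQ (Sum.inl c)) q
    rcases a with a | a
    · exact hP (Sum.inl (Sum.inl a))
    · exact hP (Sum.inr a)
  · rcases a with a | a
    · exact hP (Sum.inl (Sum.inr a))
    · exact hP (Sum.inr a)

end Restriction

section Blocks

variable (𝕜) (W : Type*)

/-- The cubics vanishing on the codimension three coordinate subspace that is complementary to
the last block of variables. -/
noncomputable def oneBlock : Submodule 𝕜 (MvPolynomial (W ⊕ Fin 3) 𝕜) :=
  homogeneousSubmodule _ 𝕜 3 ⊓ vanishingOn 𝕜 (Set.range Sum.inr)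

/-- The cubics vanishing on the codimension three coordinate subspaces that are complementary to
the last two blocks of variables. -/
noncomputable def twoBlock : Submodule 𝕜 (MvPolynomial ((W ⊕ Fin 3) ⊕ Fin 3) 𝕜) :=
  oneBlock 𝕜 (W ⊕ Fin 3) ⊓ vanishingOn 𝕜 (Set.range (Sum.inl ∘ Sum.inr))

/-- The cubics vanishing on the codimension three coordinate subspaces that are complementary to
the last three blocks of variables. -/
noncomputable def threeBlock :
    Submodule 𝕜 (MvPolynomial (((W ⊕ Fin 3) ⊕ Fin 3) ⊕ Fin 3) 𝕜) :=
  twoBlock 𝕜 (W ⊕ Fin 3) ⊓ vanishingOn 𝕜 (Set.range (Sum.inl ∘ Sum.inl ∘ Sum.inr))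

instance finiteDimensional_oneBlock [Finite W] : FiniteDimensional 𝕜 (oneBlock 𝕜 W) :=
  Submodule.finiteDimensional_of_le (S₂ := homogeneousSubmodule _ 𝕜 3) inf_le_left

instance finiteDimensional_twoBlock [Finite W] : FiniteDimensional 𝕜 (twoBlock 𝕜 W) :=
  Submodule.finiteDimensional_of_le (S₂ := oneBlock 𝕜 (W ⊕ Fin 3)) inf_le_left

variable [Fintype W]

/-- No cubic in `oneBlock 𝕜 W` is singular at suitable points indexed by `ι` of the subspace on
which it vanishes and at `|W| + 3` further points, and vanishes at points indexed by `κ`. -/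
def OneBlockFills (ι κ : Type*) : Prop :=
  ∃ (p : ι → W ⊕ Fin 3 → 𝕜) (g : W ⊕ Fin 3 → W ⊕ Fin 3 → 𝕜) (Q : κ → W ⊕ Fin 3 → 𝕜),
    (∀ a, p a ∈ coordSubspace 𝕜 (Set.range Sum.inr)) ∧
    linearSystem (oneBlock 𝕜 W) (Sum.elim p g) (fun b => (Q b, Q b)) = ⊥

/-- No cubic in `twoBlock 𝕜 W` is singular at `|W| + 3` suitable points of each of the two
subspaces on which it vanishes and at three further points. -/
def TwoBlockFills : Prop :=
  ∃ (l m : W ⊕ Fin 3 → (W ⊕ Fin 3) ⊕ Fin 3 → 𝕜) (g : Fin 3 → (W ⊕ Fin 3) ⊕ Fin 3 → 𝕜),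
    (∀ a, l a ∈ coordSubspace 𝕜 (Set.range Sum.inr)) ∧
    (∀ a, m a ∈ coordSubspace 𝕜 (Set.range (Sum.inl ∘ Sum.inr))) ∧
    linearSystem (twoBlock 𝕜 W) (Sum.elim (Sum.elim l m) g) (Empty.elim : Empty → _) = ⊥

/-- No cubic in `threeBlock 𝕜 W` is singular at three suitable points of each of the three
subspaces on which it vanishes. -/
def ThreeBlockFills : Prop :=
  ∃ l m n : Fin 3 → ((W ⊕ Fin 3) ⊕ Fin 3) ⊕ Fin 3 → 𝕜,
    (∀ a, l a ∈ coordSubspace 𝕜 (Set.range Sum.inr)) ∧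
    (∀ a, m a ∈ coordSubspace 𝕜 (Set.range (Sum.inl ∘ Sum.inr))) ∧
    (∀ a, n a ∈ coordSubspace 𝕜 (Set.range (Sum.inl ∘ Sum.inl ∘ Sum.inr))) ∧
    linearSystem (threeBlock 𝕜 W) (Sum.elim (Sum.elim l m) n) (Empty.elim : Empty → _) = ⊥

end Blocks

section Steps

variable {W : Type*}

lemma linSubst_extendZero_mem_oneBlock {τ : Type*} [Fintype τ] {j : τ ⊕ Fin 3 → W ⊕ Fin 3}
    (hj : j.Injective) (hb : j ⁻¹' Set.range Sum.inr ⊆ Set.range Sum.inr)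
    {f : MvPolynomial (W ⊕ Fin 3) 𝕜} (hf : f ∈ oneBlock 𝕜 W) :
    linSubst (extendZero 𝕜 j) f ∈ oneBlock 𝕜 τ :=
  ⟨isHomogeneous_linSubst _ hf.1, linSubst_extendZero_mem_vanishingOn hj hb hf.2⟩

lemma linSubst_extendZero_mem_twoBlock {τ : Type*} [Fintype τ]
    {j : (τ ⊕ Fin 3) ⊕ Fin 3 → (W ⊕ Fin 3) ⊕ Fin 3}
    (hj : j.Injective) (hb : j ⁻¹' Set.range Sum.inr ⊆ Set.range Sum.inr)
    (hb' : j ⁻¹' Set.range (Sum.inl ∘ Sum.inr) ⊆ Set.range (Sum.inl ∘ Sum.inr))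
    {f : MvPolynomial ((W ⊕ Fin 3) ⊕ Fin 3) 𝕜} (hf : f ∈ twoBlock 𝕜 W) :
    linSubst (extendZero 𝕜 j) f ∈ twoBlock 𝕜 τ :=
  ⟨linSubst_extendZero_mem_oneBlock hj hb hf.1, linSubst_extendZero_mem_vanishingOn hj hb' hf.2⟩

variable [Fintype W]

lemma OneBlockFills.of_surjective {ι ι' κ κ' : Type*} (h : OneBlockFills 𝕜 W ι κ) {i : ι' → ι}
    (hi : i.Surjective) {j : κ' → κ} (hj : j.Surjective) : OneBlockFills 𝕜 W ι' κ' := by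
  obtain ⟨p, g, Q, hp, h⟩ := h
  refine ⟨p ∘ i, g, Q ∘ j, fun a => hp _, linearSystem_eq_bot_of_range_subset h ?_ ?_⟩
  · rw [Set.Sum.elim_range, Set.Sum.elim_range, hi.range_comp]
  · exact (hj.range_comp fun b => (Q b, Q b)).superset

/-- Cubics are restricted to the codimension three subspace complementary to the last block. -/
lemma FillsOn.cubic_step [Infinite 𝕜] {ι κ κ' : Type*} (h : FillsOn 𝕜 W ι κ 3)
    (h₁ : OneBlockFills 𝕜 W ι κ') : FillsOn 𝕜 (W ⊕ Fin 3) (ι ⊕ (W ⊕ Fin 3)) (κ ⊕ κ') 3 := by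
  obtain ⟨P, Q, h⟩ := h
  obtain ⟨p, g, R, hp, h₁⟩ := h₁
  obtain ⟨x, hx⟩ := exists_linearSystem_eq_bot_of_restriction
    (V := homogeneousSubmodule (W ⊕ Fin 3) 𝕜 3) (b := Set.range Sum.inr) Sum.inl_injective
    Set.compl_range_inl.subset (fun f hf => isHomogeneous_linSubst _ hf)
    ⟨P, linearSystem_eq_bot_of_range_subset (P' := Sum.elim (Empty.elim : Empty → _) P) h
      (by simp [Set.Sum.elim_range]) subset_rfl⟩
    ⟨p, hp, linearSystem_eq_bot_of_range_subset (P' := Sum.elim g p) h₁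
      (by simp [Set.Sum.elim_range]) subset_rfl⟩
  exact ⟨Sum.elim (extendZero 𝕜 Sum.inl ∘ x) g, _, linearSystem_eq_bot_of_range_subset hx
    (by simp [Set.Sum.elim_range, Set.range_eq_empty]) subset_rfl⟩

/-- Cubics vanishing on one subspace are restricted to the second one. -/
lemma OneBlockFills.step [Infinite 𝕜] {ι κ : Type*} (h : OneBlockFills 𝕜 W ι κ)
    (h₂ : TwoBlockFills 𝕜 W) : OneBlockFills 𝕜 (W ⊕ Fin 3) (ι ⊕ (W ⊕ Fin 3)) κ := by
  obtain ⟨p, x₁, Q, hp, h⟩ := h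
  obtain ⟨l, m, g, hl, hm, h₂⟩ := h₂
  let j : W ⊕ Fin 3 → (W ⊕ Fin 3) ⊕ Fin 3 := Sum.map Sum.inl id
  have hj : j.Injective := Sum.inl_injective.sumMap Function.injective_id
  have hjb : j ⁻¹' Set.range Sum.inr ⊆ Set.range Sum.inr := by rintro (_ | _) <;> simp [j]
  obtain ⟨x, hx⟩ := exists_linearSystem_eq_bot_of_restriction (V := oneBlock 𝕜 (W ⊕ Fin 3))
    (R := Empty.elim) hj (b := Set.range (Sum.inl ∘ Sum.inr)) (by rintro ((_ | _) | _) <;> simp [j])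
    (fun f hf => linSubst_extendZero_mem_oneBlock hj hjb hf) ⟨x₁, h⟩
    ⟨m, hm, linearSystem_eq_bot_of_range_subset (P' := Sum.elim (Sum.elim l g) m) h₂
      (by simp [Set.range_subset_iff]) (by simp [Set.range_eq_empty])⟩
  refine ⟨Sum.elim (extendZero 𝕜 j ∘ p) l, Sum.elim (extendZero 𝕜 j ∘ x) g, extendZero 𝕜 j ∘ Q,
    Sum.forall.mpr ⟨fun a => extendZero_mem_coordSubspace hj hjb (hp a), hl⟩,
    linearSystem_eq_bot_of_range_subset hx ?_ ?_⟩
  · simp [Set.range_subset_iff]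
  · simp [Set.range_subset_iff]

omit [Fintype W] in
/-- A cubic monomial cannot involve all four blocks of variables. -/
lemma eq_zero_of_mem_threeBlock [Infinite 𝕜] [Finite W]
    {f : MvPolynomial (((W ⊕ Fin 3) ⊕ Fin 3) ⊕ Fin 3) 𝕜} (hf : f ∈ threeBlock 𝕜 W)
    (hf' : f ∈ vanishingOn 𝕜 (Set.range (Sum.inl ∘ Sum.inl ∘ Sum.inl))) : f = 0 := by
  have := Fintype.ofFinite W
  ext μ
  by_contra! hμ
  have hdeg : μ.degree = 3 := degree_eq_of_isHomogeneous hf.1.1.1 hμ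
  obtain ⟨_, ⟨x, rfl⟩, hx⟩ := exists_ne_zero_of_mem_vanishingOn hf.1.1.2 hμ
  obtain ⟨_, ⟨y, rfl⟩, hy⟩ := exists_ne_zero_of_mem_vanishingOn hf.1.2 hμ
  obtain ⟨_, ⟨z, rfl⟩, hz⟩ := exists_ne_zero_of_mem_vanishingOn hf.2 hμ
  obtain ⟨_, ⟨w, rfl⟩, hw⟩ := exists_ne_zero_of_mem_vanishingOn hf' hμ
  simp only [Finsupp.degree_eq_sum, Fintype.sum_sum_type] at hdeg
  have hxsum := Finset.single_le_sum_of_canonicallyOrdered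
    (f := fun x => μ (Sum.inr x)) (Finset.mem_univ x)
  have hysum := Finset.single_le_sum_of_canonicallyOrdered
    (f := fun x => μ (Sum.inl (Sum.inr x))) (Finset.mem_univ y)
  have hzsum := Finset.single_le_sum_of_canonicallyOrdered
    (f := fun x => μ (Sum.inl (Sum.inl (Sum.inr x)))) (Finset.mem_univ z)
  have hwsum := Finset.single_le_sum_of_canonicallyOrdered
    (f := fun x => μ (Sum.inl (Sum.inl (Sum.inl x)))) (Finset.mem_univ w)
  simp only [Function.comp_apply] at hy hz hw
  lia

lemma ThreeBlockFills.of_isEmpty [Infinite 𝕜] {W₀ : Type*} [Fintype W₀] [IsEmpty W₀]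
    (h : ThreeBlockFills 𝕜 W₀) : ThreeBlockFills 𝕜 W := by
  obtain ⟨l, m, n, hl, hm, hn, h⟩ := h
  let j : ((W₀ ⊕ Fin 3) ⊕ Fin 3) ⊕ Fin 3 → ((W ⊕ Fin 3) ⊕ Fin 3) ⊕ Fin 3 :=
    Sum.map (Sum.map (Sum.map isEmptyElim id) id) id
  have hj : j.Injective := (((Function.injective_of_subsingleton _).sumMap
    Function.injective_id).sumMap Function.injective_id).sumMap Function.injective_id
  have hb₁ : j ⁻¹' Set.range Sum.inr ⊆ Set.range Sum.inr := by
    rintro (_ | _) <;> simp [j]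
  have hb₂ : j ⁻¹' Set.range (Sum.inl ∘ Sum.inr) ⊆ Set.range (Sum.inl ∘ Sum.inr) := by
    rintro ((_ | _) | _) <;> simp [j]
  have hb₃ : j ⁻¹' Set.range (Sum.inl ∘ Sum.inl ∘ Sum.inr) ⊆
      Set.range (Sum.inl ∘ Sum.inl ∘ Sum.inr) := by
    rintro (((_ | _) | _) | _) <;> simp [j]
  refine ⟨fun a => extendZero 𝕜 j (l a), fun a => extendZero 𝕜 j (m a),
    fun a => extendZero 𝕜 j (n a), fun a => extendZero_mem_coordSubspace hj hb₁ (hl a),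
    fun a => extendZero_mem_coordSubspace hj hb₂ (hm a),
    fun a => extendZero_mem_coordSubspace hj hb₃ (hn a), linearSystem_eq_bot_iff.mpr
    fun f hf hP _ => ?_⟩
  have hrestrict : f ∈ vanishingOn 𝕜 (Set.range (Sum.inl ∘ Sum.inl ∘ Sum.inl)) := fun q hq => by
    obtain ⟨q, rfl⟩ := exists_extendZero_eq hj (by rintro (((_ | _) | _) | _) <;> simp [j]) hq
    refine eval_linearMap_eq_zero_of_linearSystem_eq_bot h _
      ⟨linSubst_extendZero_mem_twoBlock hj hb₁ hb₂ hf.1,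
        linSubst_extendZero_mem_vanishingOn hj hb₃ hf.2⟩ ?_ (fun c => c.elim) q
    rintro ((a | a) | a)
    exacts [hP (Sum.inl (Sum.inl a)), hP (Sum.inl (Sum.inr a)), hP (Sum.inr a)]
  exact eq_zero_of_mem_threeBlock hf hrestrict

/-- Cubics vanishing on two subspaces are restricted to the third one. -/
lemma TwoBlockFills.step [Infinite 𝕜] (h : TwoBlockFills 𝕜 W)
    (h₃ : ThreeBlockFills 𝕜 W) : TwoBlockFills 𝕜 (W ⊕ Fin 3) := by
  obtain ⟨l, m, x₁, hl, hm, h⟩ := h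
  obtain ⟨l', m', n, hl', hm', hn, h₃⟩ := h₃
  let j : (W ⊕ Fin 3) ⊕ Fin 3 → ((W ⊕ Fin 3) ⊕ Fin 3) ⊕ Fin 3 :=
    Sum.map (Sum.map Sum.inl id) id
  have hj : j.Injective :=
    (Sum.inl_injective.sumMap Function.injective_id).sumMap Function.injective_id
  have hb₁ : j ⁻¹' Set.range Sum.inr ⊆ Set.range Sum.inr := by rintro (_ | _) <;> simp [j]
  have hb₂ : j ⁻¹' Set.range (Sum.inl ∘ Sum.inr) ⊆ Set.range (Sum.inl ∘ Sum.inr) := by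
    rintro ((_ | _) | _) <;> simp [j]
  obtain ⟨x, hx⟩ := exists_linearSystem_eq_bot_of_restriction (V := twoBlock 𝕜 (W ⊕ Fin 3))
    (Q := Empty.elim) (R := (Empty.elim : Empty → _)) (p := Sum.elim l m) (r := Sum.elim l' m') hj
    (b := Set.range (Sum.inl ∘ Sum.inl ∘ Sum.inr)) (by rintro (((_ | _) | _) | _) <;> simp [j])
    (fun f hf => linSubst_extendZero_mem_twoBlock hj hb₁ hb₂ hf)
    ⟨x₁, linearSystem_eq_bot_of_range_subset h subset_rfl (by simp [Set.range_eq_empty])⟩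
    ⟨n, hn, linearSystem_eq_bot_of_range_subset h₃ subset_rfl (by simp [Set.range_eq_empty])⟩
  refine ⟨Sum.elim (extendZero 𝕜 j ∘ l) l', Sum.elim (extendZero 𝕜 j ∘ m) m', extendZero 𝕜 j ∘ x,
    Sum.forall.mpr ⟨fun a => extendZero_mem_coordSubspace hj hb₁ (hl a), hl'⟩,
    Sum.forall.mpr ⟨fun a => extendZero_mem_coordSubspace hj hb₂ (hm a), hm'⟩,
    linearSystem_eq_bot_of_range_subset hx ?_ (by simp [Set.range_eq_empty])⟩
  simp [Set.range_subset_iff]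

end Steps

end CubicRestriction

/-! ### Linear systems as integer matrices -/

section Elimination

/-- Call-by-value application: the kernel reduces `n` to a literal before it substitutes it into
`k`. Without it, kernel evaluation of the elimination below drags along unevaluated entries and
recomputes them at each use. -/
noncomputable def force (n : ℕ) (k : ℕ → Bool) : Bool :=
  Nat.rec (k 0) (fun m _ => k m.succ) n

/-- Call-by-value application to a list. -/
noncomputable def forceRow : List ℕ → (List ℕ → Bool) → Bool
  | [], k => k []
  | x :: xs, k => forceRow xs fun r => force x fun v => k (v :: r)

/-- Call-by-value application to a list of lists. -/
noncomputable def forceRows : List (List ℕ) → (List (List ℕ) → Bool) → Bool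
  | [], k => k []
  | r :: rs, k => forceRows rs fun rs' => forceRow r fun r' => k (r' :: rs')

lemma force_eq (n : ℕ) (k : ℕ → Bool) : force n k = k n := by cases n <;> rfl

lemma forceRow_eq (r : List ℕ) (k : List ℕ → Bool) : forceRow r k = k r := by
  induction r generalizing k with
  | nil => rfl
  | cons x r ih => rw [forceRow, ih, force_eq]

lemma forceRows_eq (rs : List (List ℕ)) (k : List (List ℕ) → Bool) : forceRows rs k = k rs := by
  induction rs generalizing k with
  | nil => rfl
  | cons r rs ih => rw [forceRows, ih, forceRow_eq]

/-- Clear the leading entry of a row modulo `p` by means of the pivot row `a :: t`, and drop it. -/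
def reduceRow (p a : ℕ) (t : List ℕ) : List ℕ → List ℕ
  | [] => []
  | 0 :: s => s
  | (b + 1) :: s => s.zipWith (fun x y => (a * x + (p - 1) * (b + 1) * y) % p) t

/-- Whether a row can serve as a pivot row modulo `p`. -/
def nonzeroHead (p : ℕ) (r : List ℕ) : Bool := r.headD 0 % p != 0

/-- Gaussian elimination modulo `p`: whether the matrix with the given rows has rank `n`, the number
of its columns. -/
noncomputable def hasFullColumnRank (p : ℕ) : ℕ → List (List ℕ) → Bool
  | 0, _ => true
  | n + 1, rows => match rows.find? (nonzeroHead p) with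
    | some (a :: t) =>
      forceRows ((rows.eraseP (nonzeroHead p)).map (reduceRow p a t)) (hasFullColumnRank p n)
    | _ => false

/-- The pairing of a row of natural numbers with a vector. -/
def pairing {R : Type*} [Semiring R] {n : ℕ} (r : List ℕ) (c : Fin n → R) : R :=
  ∑ j : Fin n, (r.getD j 0 : R) * c j

lemma pairing_cons {R : Type*} [Semiring R] {n : ℕ} (a : ℕ) (r : List ℕ) (c : Fin (n + 1) → R) :
    pairing (a :: r) c = a * c 0 + pairing r (Fin.tail c) := by
  simp [pairing, Fin.sum_univ_succ, Fin.tail]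

variable {p : ℕ}

lemma pairing_zipWith_mod {n : ℕ} (a b : ℕ) {s t : List ℕ} (hs : s.length = n)
    (ht : t.length = n) (c : Fin n → ZMod p) :
    pairing (s.zipWith (fun x y => (a * x + b * y) % p) t) c =
      a * pairing s c + b * pairing t c := by
  simp only [pairing, Finset.mul_sum, ← Finset.sum_add_distrib]
  refine Finset.sum_congr rfl fun j _ => ?_
  have hjs : (j : ℕ) < s.length := hs ▸ j.isLt
  have hjt : (j : ℕ) < t.length := ht ▸ j.isLt
  simp only [List.getD_eq_getElem?_getD, List.getElem?_zipWith, List.getElem?_eq_getElem hjs,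
    List.getElem?_eq_getElem hjt, Option.getD_some, ZMod.natCast_mod, Nat.cast_add, Nat.cast_mul]
  ring

lemma length_reduceRow {n a : ℕ} {t r : List ℕ} (ht : t.length = n) (hr : r.length = n + 1) :
    (reduceRow p a t r).length = n := by
  match r with
  | [] => simp at hr
  | 0 :: s => simpa [reduceRow] using hr
  | (b + 1) :: s => simp_all [reduceRow]

lemma pairing_reduceRow_eq_zero [NeZero p] {n a : ℕ} {t r : List ℕ} (ht : t.length = n)
    (hr : r.length = n + 1) {c : Fin (n + 1) → ZMod p} (htc : pairing (a :: t) c = 0)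
    (hrc : pairing r c = 0) : pairing (reduceRow p a t r) (Fin.tail c) = 0 := by
  match r with
  | [] => simp at hr
  | 0 :: s => simpa [pairing_cons, reduceRow] using hrc
  | (b + 1) :: s =>
    rw [pairing_cons] at htc hrc
    have hneg : (((p - 1) * (b + 1) : ℕ) : ZMod p) = -(b + 1 : ℕ) := by
      rw [Nat.cast_mul, Nat.cast_pred (NeZero.pos p), ZMod.natCast_self]
      ring
    rw [reduceRow, pairing_zipWith_mod _ _ (by simpa using hr) ht, hneg]
    linear_combination (a : ZMod p) * hrc - (b + 1 : ℕ) * htc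

theorem eq_zero_of_hasFullColumnRank [Fact p.Prime] {n : ℕ} {rows : List (List ℕ)}
    (hlen : ∀ r ∈ rows, r.length = n) (h : hasFullColumnRank p n rows = true) {c : Fin n → ZMod p}
    (hc : ∀ r ∈ rows, pairing r c = 0) : c = 0 := by
  induction n generalizing rows with
  | zero => exact Subsingleton.elim _ _
  | succ n ih =>
    match hfind : rows.find? (nonzeroHead p), h with
    | none, h => simp [hasFullColumnRank, hfind] at h
    | some [], h => simp [hasFullColumnRank, hfind] at h
    | some (a :: t), h =>
      simp only [hasFullColumnRank, hfind, forceRows_eq] at h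
      have hmem : a :: t ∈ rows := List.mem_of_find?_eq_some hfind
      have ht : t.length = n := by simpa using hlen _ hmem
      have ha : (a : ZMod p) ≠ 0 := by
        simpa [nonzeroHead, ZMod.natCast_eq_zero_iff, Nat.dvd_iff_mod_eq_zero]
          using List.find?_some hfind
      have htail : Fin.tail c = 0 := by
        refine ih ?_ h ?_ <;> rw [List.forall_mem_map] <;> intro r hr <;>
          have hr' := List.mem_of_mem_eraseP hr
        · exact length_reduceRow ht (hlen r hr')
        · exact pairing_reduceRow_eq_zero ht (hlen r hr') (hc _ hmem) (hc r hr')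
      have hhead : c 0 = 0 := by
        have := hc _ hmem
        rw [pairing_cons, htail] at this
        simpa [pairing, ha] using this
      rw [← Fin.cons_self_tail c, hhead, htail]
      ext j
      refine Fin.cases rfl (fun _ => rfl) j

/-- A left inverse of `M.map φ` lifts to a matrix `B` over `R`; the determinant of `B * M` is mapped
to `1` by `φ`, hence nonzero. -/
theorem mulVec_map_injective_of_specialization {R k K m n : Type*} [CommRing R] [Field k]
    [CommRing K] [IsDomain K] [Finite m] [Fintype n] {φ : R →+* k} (hφ : Function.Surjective φ)
    {ψ : R →+* K} (hψ : Function.Injective ψ) {M : Matrix m n R}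
    (hM : Function.Injective (M.map φ).mulVec) : Function.Injective (M.map ψ).mulVec := by
  classical
  have := Fintype.ofFinite m
  have hker : LinearMap.ker (Matrix.toLin' (M.map φ)) = ⊥ := LinearMap.ker_eq_bot.mpr hM
  obtain ⟨g, hg⟩ := LinearMap.exists_leftInverse_of_injective _ hker
  let B : Matrix n m R := (LinearMap.toMatrix' g).map (Function.surjInv hφ)
  have hB : B.map φ = LinearMap.toMatrix' g := by
    ext i j
    exact Function.surjInv_eq hφ _
  have hBM : φ.mapMatrix (B * M) = 1 := by
    rw [RingHom.mapMatrix_apply, Matrix.map_mul, hB, ← LinearMap.toMatrix'_toLin' (M.map φ),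
      ← LinearMap.toMatrix'_comp]
    exact (congrArg _ hg).trans LinearMap.toMatrix'_id
  have hdet : (ψ.mapMatrix (B * M)).det ≠ 0 := by
    rw [← RingHom.map_det, map_ne_zero_iff ψ hψ]
    intro h0
    have := congrArg Matrix.det hBM
    rw [← RingHom.map_det, h0, map_zero, Matrix.det_one] at this
    exact zero_ne_one this
  intro v w hvw
  refine Matrix.mulVec_injective_of_det_mem_nonZeroDivisors
    (mem_nonZeroDivisors_of_ne_zero hdet) ?_
  rw [RingHom.mapMatrix_apply, Matrix.map_mul, ← Matrix.mulVec_mulVec, ← Matrix.mulVec_mulVec]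
  exact congrArg _ hvw

/-- The integer matrix with `n` columns and the given rows, padded with zeros. -/
def rowMatrix (n : ℕ) (rows : List (List ℕ)) : Matrix (Fin rows.length) (Fin n) ℤ :=
  Matrix.of fun i j => ((rows.get i).getD j 0 : ℕ)

lemma mulVec_rowMatrix_map {R : Type*} [Ring R] {n : ℕ} (rows : List (List ℕ)) (v : Fin n → R) :
    ((rowMatrix n rows).map Int.cast).mulVec v = fun i => pairing (rows.get i) v := by
  ext i
  simp [rowMatrix, Matrix.mulVec, dotProduct, pairing]

theorem eq_zero_of_hasFullColumnRank_of_charZero [Fact p.Prime] {K : Type*} [Field K] [CharZero K]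
    {n : ℕ} {rows : List (List ℕ)} (hlen : ∀ r ∈ rows, r.length = n)
    (h : hasFullColumnRank p n rows = true) {c : Fin n → K} (hc : ∀ r ∈ rows, pairing r c = 0) :
    c = 0 := by
  have hinj : Function.Injective ((rowMatrix n rows).map (Int.cast : ℤ → ZMod p)).mulVec := by
    refine (injective_iff_map_eq_zero (Matrix.mulVecLin _)).mpr fun v hv => ?_
    refine eq_zero_of_hasFullColumnRank hlen h fun r hr => ?_
    obtain ⟨i, rfl⟩ := List.get_of_mem hr
    rw [Matrix.mulVecLin_apply, mulVec_rowMatrix_map] at hv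
    exact congrFun hv i
  refine mulVec_map_injective_of_specialization (φ := Int.castRingHom (ZMod p))
    ZMod.intCast_surjective (ψ := Int.castRingHom K) Int.cast_injective hinj ?_
  rw [Matrix.mulVec_zero]
  refine (mulVec_rowMatrix_map rows c).trans ?_
  exact funext fun i => hc _ (List.get_mem rows i)

end Elimination

section InterpolationMatrix

/-- The value at `p` of the monomial with exponents `m`. -/
def monEval (p m : List ℕ) : ℕ := (p.zipWith (· ^ ·) m).prod

/-- The value at `p` of the `i`-th partial derivative of the monomial with exponents `m`. -/
def derEval (i : ℕ) (p m : List ℕ) : ℕ := m.getD i 0 * monEval p (m.modify i (· - 1))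

/-- The conditions imposed on the coefficients at the monomials `ms` in `N` variables by double
points at `P` and by simple points at `Q`. -/
def conditionRows (N : ℕ) (ms P Q : List (List ℕ)) : List (List ℕ) :=
  (P.flatMap fun p => (List.range N).map fun i => ms.map (derEval i p)) ++
    Q.map fun q => ms.map (monEval q)

/-- Whether the linear combinations of the monomials `ms` are determined by double points at `P` and
simple points at `Q`. The field of computation has `10007` elements; any large prime would do. -/
noncomputable def isDetermined {N : ℕ} (ms P Q : List (Fin N → ℕ)) : Bool :=
  forceRows (ms.map List.ofFn) fun ms => forceRows (P.map List.ofFn) fun P =>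
    forceRows (conditionRows N ms P (Q.map List.ofFn)) (hasFullColumnRank 10007 ms.length)

lemma monEval_ofFn {N : ℕ} (p m : Fin N → ℕ) :
    monEval (List.ofFn p) (List.ofFn m) = ∏ i, p i ^ m i := by
  have : (List.ofFn p).zipWith (· ^ ·) (List.ofFn m) = List.ofFn fun i => p i ^ m i :=
    List.ext_getElem (by simp) (by simp)
  rw [monEval, this, List.prod_ofFn]

lemma derEval_ofFn {N : ℕ} (i : Fin N) (p m : Fin N → ℕ) :
    derEval i (List.ofFn p) (List.ofFn m) =
      m i * ∏ j, p j ^ Function.update m i (m i - 1) j := by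
  have : (List.ofFn m).modify i (· - 1) = List.ofFn (Function.update m i (m i - 1)) := by
    refine List.ext_getElem (by simp) fun j _ _ => ?_
    rw [List.getElem_modify, List.getElem_ofFn, List.getElem_ofFn, Function.update_apply]
    split_ifs <;> grind
  rw [derEval, this, monEval_ofFn]
  simp

variable {𝕜 : Type*} [Field 𝕜] {N : ℕ}

lemma eval_monomial_natCast (p m : Fin N → ℕ) :
    eval (fun i => (p i : 𝕜)) (monomial (Finsupp.equivFunOnFinite.symm m) 1) =
      monEval (List.ofFn p) (List.ofFn m) := by
  rw [eval_monomial, Finsupp.prod_fintype _ _ fun _ => pow_zero _, monEval_ofFn]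
  simp

lemma eval_pderiv_monomial_natCast (i : Fin N) (p m : Fin N → ℕ) :
    eval (fun i => (p i : 𝕜)) (pderiv i (monomial (Finsupp.equivFunOnFinite.symm m) 1)) =
      derEval i (List.ofFn p) (List.ofFn m) := by
  rw [pderiv_monomial, eval_monomial, Finsupp.prod_fintype _ _ fun _ => pow_zero _, derEval_ofFn]
  simp only [one_mul, Finsupp.tsub_apply, Finsupp.equivFunOnFinite_symm_apply_apply,
    Nat.cast_mul, Nat.cast_prod, Nat.cast_pow]
  congr! with j
  by_cases hj : j = i
  · subst hj
    simp
  · simp [hj]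

/-- A row of the interpolation matrix represents a linear functional in the monomial basis. -/
lemma pairing_map_ofFn {ms : List (Fin N → ℕ)} (hms : ms.Nodup) {f : MvPolynomial (Fin N) 𝕜}
    (hf : ∀ μ, coeff μ f ≠ 0 → ⇑μ ∈ ms) (ψ : MvPolynomial (Fin N) 𝕜 →ₗ[𝕜] 𝕜) (g : List ℕ → ℕ)
    (hg : ∀ m, ψ (monomial (Finsupp.equivFunOnFinite.symm m) 1) = g (List.ofFn m)) :
    pairing ((ms.map List.ofFn).map g)
      (fun j : Fin ms.length => coeff (Finsupp.equivFunOnFinite.symm (ms.get j)) f) = ψ f := by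
  have hsum : f = ∑ j : Fin ms.length, coeff (Finsupp.equivFunOnFinite.symm (ms.get j)) f •
      monomial (Finsupp.equivFunOnFinite.symm (ms.get j)) 1 := by
    ext μ
    rw [coeff_sum]
    simp only [coeff_smul, coeff_monomial, smul_eq_mul, mul_ite, mul_one, mul_zero]
    by_cases hμ : ⇑μ ∈ ms
    · obtain ⟨j, hj⟩ := List.get_of_mem hμ
      have hjμ : Finsupp.equivFunOnFinite.symm (ms.get j) = μ := by
        rw [hj, Finsupp.equivFunOnFinite_symm_coe]
      rw [Finset.sum_eq_single_of_mem j (Finset.mem_univ j), if_pos hjμ, hjμ]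
      refine fun k _ hkj => if_neg fun hkμ => hkj (List.nodup_iff_injective_get.mp hms ?_)
      exact Finsupp.equivFunOnFinite.symm.injective (hkμ.trans hjμ.symm)
    · rw [not_imp_comm.mp (hf μ) hμ, Finset.sum_eq_zero]
      refine fun j _ => if_neg fun hjμ => hμ ?_
      rw [← hjμ]
      exact List.get_mem ms j
  conv_rhs => rw [hsum]
  simp [pairing, hg, mul_comm]

theorem eq_zero_of_isDetermined [CharZero 𝕜] {ms P Q : List (Fin N → ℕ)} (hms : ms.Nodup)
    (h : isDetermined ms P Q = true) {f : MvPolynomial (Fin N) 𝕜}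
    (hf : ∀ μ, coeff μ f ≠ 0 → ⇑μ ∈ ms) (hP : ∀ p ∈ P, IsSingularAt f fun i => (p i : 𝕜))
    (hQ : ∀ q ∈ Q, eval (fun i => (q i : 𝕜)) f = 0) : f = 0 := by
  have : Fact (Nat.Prime 10007) := ⟨by norm_num⟩
  simp only [isDetermined, forceRows_eq, List.length_map] at h
  have hcoeff : (fun j : Fin ms.length =>
      coeff (Finsupp.equivFunOnFinite.symm (ms.get j)) f) = 0 := by
    refine eq_zero_of_hasFullColumnRank_of_charZero ?_ h ?_ <;>
      simp only [conditionRows, List.forall_mem_append, List.forall_mem_flatMap,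
        List.forall_mem_map, List.mem_range]
    · simp
    · refine ⟨fun p hp i hi => ?_, fun q hq => ?_⟩
      · rw [pairing_map_ofFn hms hf ((aeval fun i => (p i : 𝕜)).toLinearMap ∘ₗ
          (pderiv ⟨i, hi⟩).toLinearMap) _ (eval_pderiv_monomial_natCast _ _)]
        exact hP p hp ⟨i, hi⟩
      · rw [pairing_map_ofFn hms hf (aeval fun i => (q i : 𝕜)).toLinearMap _
          (eval_monomial_natCast _)]
        exact hQ q hq
  ext μ
  by_contra hμ
  obtain ⟨j, hj⟩ := List.get_of_mem (hf μ hμ)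
  refine hμ ?_
  have hj0 := congrFun hcoeff j
  rwa [hj, Finsupp.equivFunOnFinite_symm_coe] at hj0

end InterpolationMatrix

section Interpolation

variable {𝕜 σ : Type*} [Field 𝕜] {d : ℕ}

lemma eval_single_of_isHomogeneous [Finite σ] [DecidableEq σ] {f : MvPolynomial σ 𝕜}
    (hf : f.IsHomogeneous d) (i : σ) :
    eval (Pi.single i 1) f = coeff (Finsupp.single i d) f := by
  have := Fintype.ofFinite σ
  rw [eval_eq', Finset.sum_eq_single (Finsupp.single i d)]
  · rw [Finset.prod_eq_one, mul_one]
    intro k _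
    by_cases hk : k = i
    · subst hk; simp
    · simp [hk]
  · intro ν hν hne
    have hdeg := degree_eq_of_isHomogeneous hf (mem_support_iff.mp hν)
    obtain ⟨k, hk, hki⟩ : ∃ k ∈ ν.support, k ≠ i := by
      by_contra! hall
      have hsingle : ν = Finsupp.single i (ν i) :=
        Finsupp.support_subset_singleton.mp fun k hk => Finset.mem_singleton.mpr (hall k hk)
      rw [hsingle, Finsupp.degree_single] at hdeg
      exact hne (hdeg ▸ hsingle)
    rw [Finset.prod_eq_zero (Finset.mem_univ k), mul_zero]
    simpa [hki] using hk
  · intro hν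
    rw [notMem_support_iff.mp hν, zero_mul]

lemma IsSingularAt.lt_of_coeff_ne_zero [CharZero 𝕜] [Finite σ] [DecidableEq σ]
    {f : MvPolynomial σ 𝕜} (hf : f.IsHomogeneous (d + 1)) {i : σ}
    (h : IsSingularAt f (Pi.single i 1)) {μ : σ →₀ ℕ} (hμ : coeff μ f ≠ 0) : μ i < d := by
  by_contra! hle
  obtain ⟨ν, rfl⟩ := exists_add_of_le (show Finsupp.single i d ≤ μ by simpa using hle)
  have hdeg := degree_eq_of_isHomogeneous hf hμ
  rw [map_add, Finsupp.degree_single, add_right_inj] at hdeg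
  obtain ⟨j, rfl⟩ := (Finsupp.sum_eq_one_iff _).mp hdeg
  have hj := h j
  rw [eval_single_of_isHomogeneous hf.pderiv, Nat.add_sub_cancel, coeff_pderiv] at hj
  exact (mul_ne_zero hμ (Nat.cast_add_one_ne_zero _)) hj

/-- The exponents of the monomials of degree `d + 1` in `N` variables which involve a variable from
each of the blocks `b, b + 1, b + 2` with `b ∈ B`, and which are singular at the coordinate points
of index at least `s`. -/
def exponents (N d s : ℕ) (B : List ℕ) : List (Fin N → ℕ) :=
  (List.Nat.antidiagonalTuple N (d + 1)).filter fun m =>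
    (∀ i : Fin N, s ≤ i → m i < d) ∧ ∀ b ∈ B, ∃ i : Fin N, (b ≤ i ∧ i < b + 3) ∧ m i ≠ 0

theorem eq_zero_of_isDetermined_exponents [CharZero 𝕜] [DecidableEq σ] {N s : ℕ} (e : σ ≃ Fin N)
    {B : List ℕ} {P Q : List (Fin N → ℕ)} (h : isDetermined (exponents N d s B) P Q = true)
    {f : MvPolynomial σ 𝕜} (hf : f.IsHomogeneous (d + 1))
    (hB : ∀ b ∈ B, f ∈ vanishingOn 𝕜 {i | b ≤ (e i : ℕ) ∧ (e i : ℕ) < b + 3})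
    (hunit : ∀ i, s ≤ (e i : ℕ) → IsSingularAt f (Pi.single i 1))
    (hP : ∀ p ∈ P, IsSingularAt f fun i => (p (e i) : 𝕜))
    (hQ : ∀ q ∈ Q, eval (fun i => (q (e i) : 𝕜)) f = 0) : f = 0 := by
  have := Finite.of_equiv _ e.symm
  suffices rename e f = 0 from rename_injective e e.injective (by rw [this, map_zero])
  refine eq_zero_of_isDetermined ((List.Nat.nodup_antidiagonalTuple _ _).filter _) h ?_ ?_ ?_
  · intro μ hμ
    obtain ⟨ν, rfl, hν⟩ := coeff_rename_ne_zero e f μ hμ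
    have hmap (i : σ) : ν.mapDomain e (e i) = ν i := Finsupp.mapDomain_apply e.injective ν i
    simp only [List.mem_filter, List.Nat.mem_antidiagonalTuple, decide_eq_true_eq]
    refine ⟨?_, e.forall_congr_right.mp fun i hi => ?_, fun b hb => ?_⟩
    · rw [← Finsupp.degree_eq_sum, Finsupp.degree_mapDomain]
      exact degree_eq_of_isHomogeneous hf hν
    · rw [hmap]
      exact (hunit i hi).lt_of_coeff_ne_zero hf hν
    · obtain ⟨i, hi, hνi⟩ := exists_ne_zero_of_mem_vanishingOn (hB b hb) hν
      exact ⟨e i, hi, by rwa [hmap]⟩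
  · refine fun p hp => e.forall_congr_right.mp fun i => ?_
    rw [pderiv_rename e.injective, eval_rename]
    exact hP p hp i
  · intro q hq
    rw [eval_rename]
    exact hQ q hq

end Interpolation

section InterpolationCertificates

variable {𝕜 : Type*} [Field 𝕜] [CharZero 𝕜]

lemma Fills.of_isDetermined {N d k s : ℕ} (P : Fin k → Fin N → ℕ) (Q : Fin s → Fin N → ℕ)
    (h : isDetermined (exponents N d 0 []) (List.ofFn P) (List.ofFn Q) = true) :
    Fills 𝕜 N (d + 1) (N + k) s := by
  suffices FillsOn 𝕜 (Fin N) (Fin N ⊕ Fin k) (Fin s) (d + 1) by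
    simpa using! fillsOn_iff_fills.mp this
  refine ⟨Sum.elim (fun i => Pi.single i 1) fun a i => (P a i : 𝕜), fun b i => (Q b i : 𝕜),
    linearSystem_eq_bot_iff.mpr fun f hf hP hQ =>
      eq_zero_of_isDetermined_exponents (.refl _) h hf (by simp) (fun i _ => hP (Sum.inl i))
        (List.forall_mem_ofFn_iff.mpr fun a => hP (Sum.inr a))
        (List.forall_mem_ofFn_iff.mpr fun b => ?_)⟩
  exact (dirDeriv_self_eq_zero_iff (Nat.succ_ne_zero d) hf).mp (hQ b)

omit [CharZero 𝕜] in
lemma natCast_comp_mem_coordSubspace {σ : Type*} {N b : ℕ} {ε : σ → Fin N} {c : Set σ}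
    (hc : {i | b ≤ (ε i : ℕ) ∧ (ε i : ℕ) < b + 3} = c) {p : Fin N → ℕ}
    (hp : ∀ i : Fin N, b ≤ i ∧ i < b + 3 → p i = 0) :
    (fun i => (p (ε i) : 𝕜)) ∈ coordSubspace 𝕜 c :=
  hc ▸ mem_coordSubspace.mpr fun i hi => by simp [hp _ hi]

lemma OneBlockFills.of_isDetermined {W : Type*} [Fintype W] {w k s : ℕ} (e : W ≃ Fin w)
    (P : Fin k → Fin (w + 3) → ℕ) (hP : ∀ a i, w ≤ i.1 ∧ i.1 < w + 3 → P a i = 0)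
    (G : Fin w → Fin (w + 3) → ℕ) (Q : Fin s → Fin (w + 3) → ℕ)
    (h : isDetermined (exponents (w + 3) 2 0 [w]) (List.ofFn P ++ List.ofFn G) (List.ofFn Q) =
      true) :
    OneBlockFills 𝕜 W (W ⊕ Fin k) (Fin s) := by
  classical
  let ε : W ⊕ Fin 3 ≃ Fin (w + 3) := (e.sumCongr (.refl _)).trans finSumFinEquiv
  have hε : {i | w ≤ (ε i : ℕ) ∧ (ε i : ℕ) < w + 3} = Set.range Sum.inr := by
    ext (i | i) <;> simp [ε]
  refine ⟨Sum.elim (fun i => Pi.single (Sum.inl i) 1) fun a i => (P a (ε i) : 𝕜),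
    Sum.elim (fun a i => (G (e a) (ε i) : 𝕜)) fun i => Pi.single (Sum.inr i) 1,
    fun b i => (Q b (ε i) : 𝕜), Sum.forall.mpr ⟨fun i => mem_coordSubspace.mpr (by simp),
      fun a => natCast_comp_mem_coordSubspace hε (hP a)⟩,
    linearSystem_eq_bot_iff.mpr fun f hf hp hq =>
      eq_zero_of_isDetermined_exponents ε h hf.1 ?_ ?_ ?_ ?_⟩
  · exact List.forall_mem_singleton.mpr (hε.symm ▸ hf.2)
  · rintro (i | i) -
    exacts [hp (Sum.inl (Sum.inl i)), hp (Sum.inr (Sum.inr i))]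
  · simp only [List.forall_mem_append, List.forall_mem_ofFn_iff]
    exact ⟨fun a => hp (Sum.inl (Sum.inr a)),
      e.forall_congr_right.mp fun a => hp (Sum.inr (Sum.inl a))⟩
  · exact List.forall_mem_ofFn_iff.mpr fun b =>
      (dirDeriv_self_eq_zero_iff three_ne_zero hf.1).mp (hq b)

lemma TwoBlockFills.of_isDetermined {w : ℕ} (L M : Fin w → Fin (w + 3 + 3) → ℕ)
    (hL : ∀ a i, w + 3 ≤ i.1 ∧ i.1 < w + 3 + 3 → L a i = 0)
    (hM : ∀ a i, w ≤ i.1 ∧ i.1 < w + 3 → M a i = 0) (G : Fin 3 → Fin (w + 3 + 3) → ℕ)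
    (h : isDetermined (exponents (w + 3 + 3) 2 w [w, w + 3])
      (List.ofFn L ++ List.ofFn M ++ List.ofFn G) [] = true) :
    TwoBlockFills 𝕜 (Fin w) := by
  let ε : (Fin w ⊕ Fin 3) ⊕ Fin 3 ≃ Fin (w + 3 + 3) :=
    (finSumFinEquiv.sumCongr (.refl _)).trans finSumFinEquiv
  have hε₁ : {i | w + 3 ≤ (ε i : ℕ) ∧ (ε i : ℕ) < w + 3 + 3} = Set.range Sum.inr := by
    ext ((i | i) | i) <;> simp [ε]
    lia
  have hε₂ : {i | w ≤ (ε i : ℕ) ∧ (ε i : ℕ) < w + 3} = Set.range (Sum.inl ∘ Sum.inr) := by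
    ext ((i | i) | i) <;> simp [ε]
  refine ⟨Sum.elim (fun a i => (L a (ε i) : 𝕜)) fun i => Pi.single (Sum.inl (Sum.inr i)) 1,
    Sum.elim (fun a i => (M a (ε i) : 𝕜)) fun i => Pi.single (Sum.inr i) 1,
    fun a i => (G a (ε i) : 𝕜),
    Sum.forall.mpr ⟨fun a => natCast_comp_mem_coordSubspace hε₁ (hL a),
      fun i => mem_coordSubspace.mpr (by simp)⟩,
    Sum.forall.mpr ⟨fun a => natCast_comp_mem_coordSubspace hε₂ (hM a),
      fun i => mem_coordSubspace.mpr (by simp)⟩,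
    linearSystem_eq_bot_iff.mpr fun f hf hp _ =>
      eq_zero_of_isDetermined_exponents ε h hf.1.1 ?_ ?_ ?_ (by simp)⟩
  · simp only [List.forall_mem_cons, hε₁, hε₂]
    exact ⟨hf.2, hf.1.2, by simp⟩
  · rintro ((i | i) | i) hi
    · exact absurd hi i.isLt.not_ge
    · exact hp (Sum.inl (Sum.inl (Sum.inr i)))
    · exact hp (Sum.inl (Sum.inr (Sum.inr i)))
  · simp only [List.forall_mem_append, List.forall_mem_ofFn_iff]
    exact ⟨⟨fun a => hp (Sum.inl (Sum.inl (Sum.inl a))),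
      fun a => hp (Sum.inl (Sum.inr (Sum.inl a)))⟩, fun a => hp (Sum.inr a)⟩

lemma ThreeBlockFills.of_isDetermined {w : ℕ} (L M N : Fin 3 → Fin (w + 3 + 3 + 3) → ℕ)
    (hL : ∀ a i, w + 3 + 3 ≤ i.1 ∧ i.1 < w + 3 + 3 + 3 → L a i = 0)
    (hM : ∀ a i, w + 3 ≤ i.1 ∧ i.1 < w + 3 + 3 → M a i = 0)
    (hN : ∀ a i, w ≤ i.1 ∧ i.1 < w + 3 → N a i = 0)
    (h : isDetermined (exponents (w + 3 + 3 + 3) 2 (w + 3 + 3 + 3) [w, w + 3, w + 3 + 3])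
      (List.ofFn L ++ List.ofFn M ++ List.ofFn N) [] = true) :
    ThreeBlockFills 𝕜 (Fin w) := by
  let ε : ((Fin w ⊕ Fin 3) ⊕ Fin 3) ⊕ Fin 3 ≃ Fin (w + 3 + 3 + 3) :=
    (((finSumFinEquiv.sumCongr (.refl _)).trans finSumFinEquiv).sumCongr (.refl _)).trans
      finSumFinEquiv
  have hε₁ : {i | w + 3 + 3 ≤ (ε i : ℕ) ∧ (ε i : ℕ) < w + 3 + 3 + 3} = Set.range Sum.inr := by
    ext (((i | i) | i) | i) <;> simp [ε] <;> lia
  have hε₂ : {i | w + 3 ≤ (ε i : ℕ) ∧ (ε i : ℕ) < w + 3 + 3} =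
      Set.range (Sum.inl ∘ Sum.inr) := by
    ext (((i | i) | i) | i) <;> simp [ε]
    lia
  have hε₃ : {i | w ≤ (ε i : ℕ) ∧ (ε i : ℕ) < w + 3} =
      Set.range (Sum.inl ∘ Sum.inl ∘ Sum.inr) := by
    ext (((i | i) | i) | i) <;> simp [ε]
    lia
  refine ⟨fun a i => (L a (ε i) : 𝕜), fun a i => (M a (ε i) : 𝕜), fun a i => (N a (ε i) : 𝕜),
    fun a => natCast_comp_mem_coordSubspace hε₁ (hL a),
    fun a => natCast_comp_mem_coordSubspace hε₂ (hM a),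
    fun a => natCast_comp_mem_coordSubspace hε₃ (hN a),
    linearSystem_eq_bot_iff.mpr fun f hf hp _ => eq_zero_of_isDetermined_exponents ε h hf.1.1.1 ?_
      (fun i hi => absurd (ε i).isLt hi.not_gt) ?_ (by simp)⟩
  · simp only [List.forall_mem_cons, hε₁, hε₂, hε₃]
    exact ⟨hf.2, hf.1.2, hf.1.1.2, by simp⟩
  · simp only [List.forall_mem_append, List.forall_mem_ofFn_iff]
    exact ⟨⟨fun a => hp (Sum.inl (Sum.inl a)), fun a => hp (Sum.inl (Sum.inr a))⟩,
      fun a => hp (Sum.inr a)⟩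

end InterpolationCertificates

section BaseCases

-- The points were found by a random search; almost all choices work.
variable (𝕜 : Type*) [Field 𝕜] [CharZero 𝕜]

lemma fills_2_3_2_0 : Fills 𝕜 2 3 2 0 :=
  Fills.of_isDetermined (N := 2) (d := 2) (k := 0)
    ![] ![] (by decide +kernel)

lemma fills_3_3_3_1 : Fills 𝕜 3 3 3 1 :=
  Fills.of_isDetermined (N := 3) (d := 2) (k := 0)
    ![]
    ![![3, 1, 3]]
    (by decide +kernel)

lemma fills_3_3_4_0 : Fills 𝕜 3 3 4 0 :=
  Fills.of_isDetermined (N := 3) (d := 2) (k := 1)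
    ![![1, 3, 2]]
    ![] (by decide +kernel)

lemma fills_5_3_6_5 : Fills 𝕜 5 3 6 5 :=
  Fills.of_isDetermined (N := 5) (d := 2) (k := 1)
    ![![1, 0, 1, 1, 1]]
    ![![0, 3, 2, 1, 0], ![1, 2, 0, 1, 2], ![1, 3, 1, 2, 0], ![1, 3, 2, 1, 0], ![2, 1, 0, 0, 3]]
    (by decide +kernel)

lemma fills_5_3_8_0 : Fills 𝕜 5 3 8 0 :=
  Fills.of_isDetermined (N := 5) (d := 2) (k := 3)
    ![![2, 1, 0, 0, 1], ![1, 0, 0, 0, 1], ![3, 2, 1, 1, 0]]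
    ![] (by decide +kernel)

lemma fills_8_3_15_0 : Fills 𝕜 8 3 15 0 :=
  Fills.of_isDetermined (N := 8) (d := 2) (k := 7)
    ![![1, 3, 2, 0, 0, 0, 0, 1], ![1, 1, 2, 1, 1, 0, 1, 0], ![0, 0, 2, 3, 0, 1, 0, 1],
      ![2, 0, 1, 1, 3, 0, 1, 0], ![0, 1, 0, 2, 3, 2, 0, 0], ![1, 0, 2, 3, 1, 0, 0, 2],
      ![1, 0, 1, 2, 0, 2, 2, 0]]
    ![] (by decide +kernel)

lemma fills_2_4_2_1 : Fills 𝕜 2 4 2 1 :=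
  Fills.of_isDetermined (N := 2) (d := 3) (k := 0)
    ![]
    ![![1, 1]]
    (by decide +kernel)

lemma fills_2_4_3_0 : Fills 𝕜 2 4 3 0 :=
  Fills.of_isDetermined (N := 2) (d := 3) (k := 1)
    ![![1, 1]]
    ![] (by decide +kernel)

lemma fills_3_4_4_3 : Fills 𝕜 3 4 4 3 :=
  Fills.of_isDetermined (N := 3) (d := 3) (k := 1)
    ![![1, 2, 1]]
    ![![2, 0, 1], ![2, 2, 1], ![1, 2, 3]]
    (by decide +kernel)

lemma fills_3_4_5_1 : Fills 𝕜 3 4 5 1 :=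
  Fills.of_isDetermined (N := 3) (d := 3) (k := 2)
    ![![3, 2, 1], ![2, 2, 2]]
    ![![3, 3, 1]]
    (by decide +kernel)

lemma fills_3_4_6_0 : Fills 𝕜 3 4 6 0 :=
  Fills.of_isDetermined (N := 3) (d := 3) (k := 3)
    ![![2, 2, 3], ![2, 0, 1], ![1, 3, 0]]
    ![] (by decide +kernel)

lemma fills_4_4_8_3 : Fills 𝕜 4 4 8 3 :=
  Fills.of_isDetermined (N := 4) (d := 3) (k := 4)
    ![![3, 1, 1, 0], ![1, 1, 1, 2], ![2, 3, 0, 1], ![0, 1, 2, 2]]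
    ![![1, 0, 0, 2], ![1, 2, 1, 0], ![2, 0, 1, 0]]
    (by decide +kernel)

lemma fills_4_4_10_0 : Fills 𝕜 4 4 10 0 :=
  Fills.of_isDetermined (N := 4) (d := 3) (k := 6)
    ![![1, 0, 0, 1], ![1, 0, 3, 0], ![0, 2, 1, 0], ![0, 2, 0, 1], ![2, 2, 0, 0], ![1, 1, 1, 1]]
    ![] (by decide +kernel)

lemma fills_5_4_13_5 : Fills 𝕜 5 4 13 5 :=
  Fills.of_isDetermined (N := 5) (d := 3) (k := 8)
    ![![1, 2, 1, 0, 0], ![1, 3, 1, 0, 1], ![0, 2, 1, 2, 0], ![3, 1, 1, 1, 1], ![0, 2, 1, 0, 3],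
      ![3, 0, 2, 0, 1], ![2, 3, 0, 1, 0], ![2, 0, 0, 1, 3]]
    ![![1, 1, 0, 1, 0], ![1, 1, 2, 3, 0], ![1, 3, 3, 1, 1], ![2, 1, 1, 2, 0], ![3, 1, 1, 2, 0]]
    (by decide +kernel)

lemma fills_5_4_15_0 : Fills 𝕜 5 4 15 0 :=
  Fills.of_isDetermined (N := 5) (d := 3) (k := 10)
    ![![3, 0, 2, 0, 1], ![3, 1, 0, 2, 1], ![2, 1, 0, 2, 0], ![1, 1, 0, 0, 1], ![1, 0, 1, 0, 0],
      ![2, 2, 3, 1, 0], ![0, 1, 3, 0, 0], ![2, 3, 0, 1, 2], ![1, 3, 2, 0, 0], ![2, 0, 1, 3, 0]]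
    ![] (by decide +kernel)

lemma fills_6_4_21_0 : Fills 𝕜 6 4 21 0 :=
  Fills.of_isDetermined (N := 6) (d := 3) (k := 15)
    ![![1, 0, 1, 0, 0, 3], ![1, 0, 1, 1, 0, 0], ![2, 3, 0, 0, 1, 0], ![1, 0, 2, 3, 0, 1],
      ![3, 1, 0, 1, 0, 0], ![0, 0, 2, 2, 3, 0], ![0, 1, 3, 3, 1, 1], ![0, 3, 2, 0, 0, 1],
      ![1, 0, 1, 0, 2, 0], ![0, 0, 1, 0, 2, 1], ![0, 2, 1, 2, 1, 2], ![1, 1, 1, 0, 0, 0],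
      ![1, 2, 2, 0, 3, 0], ![2, 0, 0, 2, 2, 0], ![1, 3, 2, 1, 0, 2]]
    ![] (by decide +kernel)

lemma oneBlockFills_0 : OneBlockFills 𝕜 (Fin 0) (Fin 0 ⊕ Fin 0) (Fin 1) :=
  OneBlockFills.of_isDetermined (w := 0) (.refl _) ![] (by decide) ![]
    ![![3, 3, 3]]
    (by decide +kernel)

lemma oneBlockFills_1 : OneBlockFills 𝕜 (Fin 1) (Fin 1 ⊕ Fin 0) (Fin 0) :=
  OneBlockFills.of_isDetermined (w := 1) (.refl _) ![] (by decide)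
    ![![2, 1, 2, 3]]
    ![] (by decide +kernel)

lemma oneBlockFills_3 :
    OneBlockFills 𝕜 (Fin 0 ⊕ Fin 3) ((Fin 0 ⊕ Fin 3) ⊕ Fin 1) (Fin 0) :=
  OneBlockFills.of_isDetermined (w := 3) finSumFinEquiv
    ![![1, 3, 1, 0, 0, 0]] (by decide)
    ![![0, 2, 1, 3, 3, 3], ![1, 3, 3, 3, 3, 1], ![1, 2, 1, 1, 0, 0]]
    ![] (by decide +kernel)

lemma oneBlockFills_5 :
    OneBlockFills 𝕜 (Fin 2 ⊕ Fin 3) ((Fin 2 ⊕ Fin 3) ⊕ Fin 2) (Fin 0) :=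
  OneBlockFills.of_isDetermined (w := 5) finSumFinEquiv
    ![![1, 3, 2, 0, 0, 0, 0, 0], ![0, 1, 3, 2, 2, 0, 0, 0]] (by decide)
    ![![1, 2, 3, 1, 1, 1, 1, 1], ![0, 3, 3, 0, 2, 3, 1, 0], ![1, 0, 3, 1, 1, 3, 2, 1],
      ![2, 0, 2, 2, 1, 2, 2, 1], ![3, 1, 3, 1, 2, 0, 1, 2]]
    ![] (by decide +kernel)

lemma twoBlockFills_0 : TwoBlockFills 𝕜 (Fin 0) :=
  TwoBlockFills.of_isDetermined
    ![] ![] (by decide) (by decide)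
    ![![3, 1, 0, 1, 1, 2], ![1, 1, 2, 3, 1, 3], ![2, 3, 3, 1, 2, 2]]
    (by decide +kernel)

lemma twoBlockFills_1 : TwoBlockFills 𝕜 (Fin 1) :=
  TwoBlockFills.of_isDetermined
    ![![0, 3, 0, 2, 0, 0, 0]]
    ![![0, 0, 0, 0, 2, 1, 3]]
    (by decide) (by decide)
    ![![1, 0, 3, 1, 0, 3, 3], ![0, 2, 2, 1, 1, 3, 0], ![2, 1, 3, 0, 3, 2, 2]]
    (by decide +kernel)

lemma twoBlockFills_2 : TwoBlockFills 𝕜 (Fin 2) :=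
  TwoBlockFills.of_isDetermined
    ![![1, 3, 0, 2, 2, 0, 0, 0], ![3, 2, 3, 3, 2, 0, 0, 0]]
    ![![3, 3, 0, 0, 0, 2, 2, 2], ![2, 1, 0, 0, 0, 2, 1, 3]]
    (by decide) (by decide)
    ![![3, 2, 2, 1, 3, 3, 2, 0], ![0, 1, 2, 3, 3, 0, 2, 1], ![0, 1, 1, 3, 1, 2, 2, 1]]
    (by decide +kernel)

lemma threeBlockFills : ThreeBlockFills 𝕜 (Fin 0) :=
  ThreeBlockFills.of_isDetermined
    ![![4, 3, 0, 1, 3, 0, 0, 0, 0], ![2, 2, 1, 0, 4, 3, 0, 0, 0], ![1, 4, 1, 4, 3, 0, 0, 0, 0]]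
    ![![3, 3, 1, 0, 0, 0, 1, 2, 4], ![0, 4, 4, 0, 0, 0, 0, 4, 4], ![4, 4, 3, 0, 0, 0, 3, 2, 0]]
    ![![0, 0, 0, 4, 4, 3, 4, 1, 2], ![0, 0, 0, 0, 0, 1, 0, 1, 3], ![0, 0, 0, 0, 3, 3, 0, 2, 4]]
    (by decide) (by decide) (by decide) (by decide +kernel)

end BaseCases

section FewVariables

variable {𝕜 : Type*} [Field 𝕜] [CharZero 𝕜]

lemma fills_univariate (d : ℕ) : Fills 𝕜 1 (d + 1) 1 0 := by
  refine ⟨fun _ => Pi.single 0 1, Fin.elim0,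
    linearSystem_eq_bot_iff.mpr fun f hf hP _ => ?_⟩
  ext μ
  by_contra hμ
  have hdeg := degree_eq_of_isHomogeneous hf hμ
  have hlt := (hP 0).lt_of_coeff_ne_zero hf hμ
  simp [Finsupp.degree_eq_sum] at hdeg
  lia

/-- Quadrics that are singular at all coordinate points vanish. -/
lemma fills_quadric (N : ℕ) : Fills 𝕜 N 2 N 0 := by
  refine ⟨fun i => Pi.single i 1, Fin.elim0, linearSystem_eq_bot_iff.mpr fun f hf hP _ => ?_⟩
  ext μ
  by_contra hμ
  have hdeg := degree_eq_of_isHomogeneous hf hμ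
  have hμ0 : μ = 0 := Finsupp.ext fun i => by simpa using (hP i).lt_of_coeff_ne_zero hf hμ
  simp [hμ0] at hdeg

end FewVariables

section CubicLadders

variable (𝕜 : Type*) [Field 𝕜]

/-- What is carried along the induction for cubics, which adds three variables at a time: in `w`
variables, `k` double points are used both on all cubics, together with `s` simple points, and on
the cubics of `oneBlock`, together with `s'` simple points. -/
def CubicLadder (w k s s' : ℕ) : Prop :=
  ∃ (W : Type) (_ : Fintype W), Fintype.card W = w ∧ FillsOn 𝕜 W (Fin k) (Fin s) 3 ∧
    OneBlockFills 𝕜 W (Fin k) (Fin s') ∧ TwoBlockFills 𝕜 W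

variable {𝕜}

lemma CubicLadder.fills [Infinite 𝕜] {w k s s' : ℕ} (h : CubicLadder 𝕜 w k s s') :
    Fills 𝕜 w 3 k s := by
  obtain ⟨W, _, rfl, h, -⟩ := h
  simpa using fillsOn_iff_fills.mp h

variable [CharZero 𝕜]

lemma CubicLadder.of_card {W ι κ κ' : Type} [Fintype W] [Fintype ι] [Fintype κ] [Fintype κ']
    {w k s s' : ℕ} (h : FillsOn 𝕜 W ι κ 3) (h₁ : OneBlockFills 𝕜 W ι κ') (h₂ : TwoBlockFills 𝕜 W)
    (hw : Fintype.card W = w) (hk : Fintype.card ι = k) (hs : Fintype.card κ = s)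
    (hs' : Fintype.card κ' = s') : CubicLadder 𝕜 w k s s' :=
  have hi := (Fintype.equivFinOfCardEq hk).symm.surjective
  ⟨W, _, hw, h.of_surjective (.refl W) hi (Fintype.equivFinOfCardEq hs).symm.surjective,
    h₁.of_surjective hi (Fintype.equivFinOfCardEq hs').symm.surjective, h₂⟩

lemma CubicLadder.step {w k s s' : ℕ} (h : CubicLadder 𝕜 w k s s') :
    CubicLadder 𝕜 (w + 3) (k + (w + 3)) (s + s') s' := by
  obtain ⟨W, _, rfl, h, h₁, h₂⟩ := h
  exact .of_card (h.cubic_step h₁) (h₁.step h₂) (h₂.step (threeBlockFills 𝕜).of_isEmpty)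
    (by simp) (by simp) (by simp) (by simp)

lemma CubicLadder.iterate {w k s s' : ℕ} (h : CubicLadder 𝕜 w k s s') (m : ℕ) :
    ∃ k', 2 * k' = 2 * k + m * (2 * w + 3 * m + 3) ∧
      CubicLadder 𝕜 (w + 3 * m) k' (s + m * s') s' := by
  induction m with
  | zero => exact ⟨k, by simp, by simpa using h⟩
  | succ m ih =>
    obtain ⟨k', hk', h'⟩ := ih
    refine ⟨k' + (w + 3 * m + 3), by linarith, ?_⟩
    convert h'.step using 1 <;> ring

lemma twoBlockFills_fin_zero_sum : TwoBlockFills 𝕜 (Fin 0 ⊕ Fin 3) :=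
  (twoBlockFills_0 𝕜).step (threeBlockFills 𝕜)

lemma twoBlockFills_fin_two_sum : TwoBlockFills 𝕜 (Fin 2 ⊕ Fin 3) :=
  (twoBlockFills_2 𝕜).step (threeBlockFills 𝕜).of_isEmpty

variable (𝕜)

lemma cubicLadder_1_1_0_0 : CubicLadder 𝕜 1 1 0 0 :=
  .of_card ((fills_univariate 2).fillsOn (κ := Fin 0) rfl (by simp) (by simp))
    (oneBlockFills_1 𝕜) (twoBlockFills_1 𝕜) rfl (by simp) (by simp) (by simp)

lemma cubicLadder_3_3_1_1 : CubicLadder 𝕜 3 3 1 1 :=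
  .of_card ((fills_3_3_3_1 𝕜).fillsOn (κ := Fin 1) (by simp) (by simp) (by simp))
    ((oneBlockFills_0 𝕜).step (twoBlockFills_0 𝕜)) twoBlockFills_fin_zero_sum
    (by simp) (by simp) (by simp) (by simp)

lemma cubicLadder_3_4_0_0 : CubicLadder 𝕜 3 4 0 0 :=
  .of_card ((fills_3_3_4_0 𝕜).fillsOn (κ := Fin 0) (by simp) (by simp) (by simp))
    (oneBlockFills_3 𝕜) twoBlockFills_fin_zero_sum (by simp) (by simp) (by simp) (by simp)

lemma cubicLadder_8_15_0_0 : CubicLadder 𝕜 8 15 0 0 :=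
  .of_card ((fills_8_3_15_0 𝕜).fillsOn (κ := Fin 0) (by simp) (by simp) (by simp))
    ((oneBlockFills_5 𝕜).step twoBlockFills_fin_two_sum)
    (twoBlockFills_fin_two_sum.step (threeBlockFills 𝕜).of_isEmpty)
    (by simp) (by simp) (by simp) (by simp)

end CubicLadders

/-! ### The induction -/

section Binomials

lemma six_mul_choose_three (n : ℕ) : 6 * (n + 3).choose 3 = (n + 3) * (n + 2) * (n + 1) := by
  have h := Nat.ascFactorial_eq_factorial_mul_choose n 3
  simp only [Nat.ascFactorial, Nat.factorial] at h
  linarith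

lemma twentyFour_mul_choose_four (n : ℕ) :
    24 * (n + 4).choose 4 = (n + 4) * (n + 3) * (n + 2) * (n + 1) := by
  have h := Nat.ascFactorial_eq_factorial_mul_choose n 4
  simp only [Nat.ascFactorial, Nat.factorial] at h
  linarith

lemma choose_add_le_choose_add (n : ℕ) {d e : ℕ} (hde : d ≤ e) :
    (n + d).choose d ≤ (n + e).choose e := by
  rw [← Nat.choose_symm_add, ← Nat.choose_symm_add]
  exact Nat.choose_le_choose n (by lia)

lemma add_two_mul_choose (n d : ℕ) : (d + 2) * (n + (d + 2)).choose (d + 2) =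
    (n + d + 2) * (n + (d + 1)).choose (d + 1) := by
  rw [mul_comm]
  exact (Nat.add_one_mul_choose_eq (n + (d + 1)) (d + 1)).symm

lemma choose_eq_add_choose (n d : ℕ) : (n + 1 + (d + 1)).choose (d + 1) =
    (n + 1 + d).choose d + (n + (d + 1)).choose (d + 1) := by
  rw [show n + 1 + (d + 1) = n + 1 + d + 1 by ring, Nat.choose_succ_succ,
    show n + (d + 1) = n + 1 + d by ring]

lemma exists_mul_add_eq (N n : ℕ) : ∃ u ε, ε ≤ n ∧ (n + 1) * u + ε = N :=
  ⟨N / (n + 1), N % (n + 1), Nat.lt_succ_iff.mp (Nat.mod_lt N n.succ_pos),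
    Nat.div_add_mod N (n + 1)⟩

end Binomials

section Expectation

variable {𝕜 : Type*} [Field 𝕜]

/-- The cases of the Alexander–Hirschowitz theorem in degree at least three that are excluded from
the induction: `s` simple and `k` double points in `n`-dimensional projective space, degree `d`.
Not all of them are genuine exceptions, since the number of simple points is mostly ignored. -/
def Exceptional (n d k s : ℕ) : Prop :=
  (n = 2 ∧ d = 4 ∧ k = 5 ∧ s = 0) ∨ (n = 3 ∧ d = 4 ∧ k = 9) ∨ (n = 4 ∧ d = 4 ∧ k = 14) ∨
    (n = 4 ∧ d = 3 ∧ k = 7)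

variable (𝕜) in
/-- Outside the exceptional cases, double and simple points in `n`-dimensional projective space
kill all forms of degree `d` as soon as they impose numerically enough conditions. -/
def FillsAsExpected (n d : ℕ) : Prop :=
  ∀ k s, (n + d).choose d ≤ (n + 1) * k + s → ¬ Exceptional n d k s → Fills 𝕜 (n + 1) d k s

variable [CharZero 𝕜]

lemma FillsAsExpected.of_floor_ceil {n d q r : ℕ} (hd : d ≠ 0)
    (hqr : (n + 1) * q + r = (n + d).choose d) (hfloor : Fills 𝕜 (n + 1) d q r)
    (hceil : Fills 𝕜 (n + 1) d (q + 1) 0) : FillsAsExpected 𝕜 n d := by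
  intro k s hks _
  rcases le_or_gt k q with h | h
  · exact hfloor.trade hd h (by lia)
  · exact hceil.mono h s.zero_le

lemma FillsAsExpected.of_exact {n d q : ℕ} (hd : d ≠ 0) (hq : (n + 1) * q = (n + d).choose d)
    (h : Fills 𝕜 (n + 1) d q 0) : FillsAsExpected 𝕜 n d :=
  .of_floor_ceil (r := 0) hd hq h (h.mono q.le_succ le_rfl)

lemma FillsAsExpected.of_almost_exact {n d : ℕ} (hd : d ≠ 0)
    (h : ∀ k s, s ≤ n → (n + d).choose d ≤ (n + 1) * k + s →
      (n + 1) * k + s ≤ (n + d).choose d + n → Fills 𝕜 (n + 1) d k s) :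
    FillsAsExpected 𝕜 n d := by
  obtain ⟨q, r, hr, hqr⟩ := exists_mul_add_eq ((n + d).choose d) n
  rcases r.eq_zero_or_pos with rfl | hr'
  · exact .of_exact hd hqr (h q 0 (by lia) (by lia) (by lia))
  · exact .of_floor_ceil hd hqr (h q r hr (by lia) (by lia))
      (h (q + 1) 0 (by lia) (by lia) (by lia))

variable (𝕜) in
lemma fillsAsExpected_zero {d : ℕ} (hd : d ≠ 0) : FillsAsExpected 𝕜 0 d := by
  obtain ⟨d, rfl⟩ := Nat.exists_eq_succ_of_ne_zero hd
  exact .of_exact hd (by simp) (fills_univariate d)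

end Expectation

section Cubics

variable (𝕜 : Type*) [Field 𝕜] [CharZero 𝕜]

lemma fillsAsExpected_cubic_three_mul (m : ℕ) : FillsAsExpected 𝕜 (3 * m) 3 := by
  obtain ⟨k, hk, h⟩ := (cubicLadder_1_1_0_0 𝕜).iterate m
  have hC := six_mul_choose_three (3 * m)
  rw [add_comm 1] at h
  exact .of_exact (q := k) three_ne_zero (by nlinarith) (by simpa using h.fills)

lemma fillsAsExpected_cubic_three_mul_add_seven (m : ℕ) :
    FillsAsExpected 𝕜 (3 * m + 7) 3 := by
  obtain ⟨k, hk, h⟩ := (cubicLadder_8_15_0_0 𝕜).iterate m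
  have hC := six_mul_choose_three (3 * m + 7)
  rw [add_comm 8] at h
  exact .of_exact (q := k) three_ne_zero (by nlinarith) (by simpa using h.fills)

lemma fillsAsExpected_cubic_three_mul_add_two (m : ℕ) :
    FillsAsExpected 𝕜 (3 * m + 2) 3 := by
  obtain ⟨k, hk, h⟩ := (cubicLadder_3_3_1_1 𝕜).iterate m
  obtain ⟨k', hk', h'⟩ := (cubicLadder_3_4_0_0 𝕜).iterate m
  obtain rfl : k' = k + 1 := by lia
  have hC := six_mul_choose_three (3 * m + 2)
  rw [add_comm 3] at h h'
  exact .of_floor_ceil three_ne_zero (by nlinarith) h.fills (by simpa using h'.fills)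

lemma fillsAsExpected_cubic_one : FillsAsExpected 𝕜 1 3 :=
  .of_exact three_ne_zero (by decide) (fills_2_3_2_0 𝕜)

lemma fillsAsExpected_cubic_four : FillsAsExpected 𝕜 4 3 := by
  intro k s hks hE
  simp only [Nat.choose, Nat.reduceAdd] at hks
  rcases le_or_gt k 6 with h | h
  · exact (fills_5_3_6_5 𝕜).trade three_ne_zero h (by lia)
  · exact (fills_5_3_8_0 𝕜).mono (by simp [Exceptional] at hE; lia) s.zero_le

lemma fillsAsExpected_cubic (n : ℕ) : FillsAsExpected 𝕜 n 3 := by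
  obtain rfl | rfl | ⟨m, rfl | rfl | rfl⟩ :
      n = 1 ∨ n = 4 ∨ ∃ m, n = 3 * m ∨ n = 3 * m + 7 ∨ n = 3 * m + 2 := by
    by_cases h : n % 3 = 1 ∧ 7 ≤ n
    · exact .inr (.inr ⟨(n - 7) / 3, by lia⟩)
    · exact or_iff_not_imp_left.mpr fun _ => or_iff_not_imp_left.mpr fun _ => ⟨n / 3, by lia⟩
  · exact fillsAsExpected_cubic_one 𝕜
  · exact fillsAsExpected_cubic_four 𝕜
  · exact fillsAsExpected_cubic_three_mul 𝕜 m
  · exact fillsAsExpected_cubic_three_mul_add_seven 𝕜 m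
  · exact fillsAsExpected_cubic_three_mul_add_two 𝕜 m

end Cubics

section HoraceInduction

variable {𝕜 : Type*} [Field 𝕜] [CharZero 𝕜] {n d u ε k s : ℕ}

lemma FillsAsExpected.horace (htrace : FillsAsExpected 𝕜 n (d + 2))
    (hupper : FillsAsExpected 𝕜 (n + 1) (d + 1)) (hlower : Fills 𝕜 (n + 2) d k s)
    (hu : (n + 1) * u + ε = (n + (d + 2)).choose (d + 2)) (hε : ε ≤ n) (hεu : ε ≤ u)
    (hks : (n + 1 + (d + 2)).choose (d + 2) ≤ (n + 2) * (k + u + ε) + s)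
    (hE : ¬ Exceptional n (d + 2) u ε)
    (hE' : ¬ Exceptional (n + 1) (d + 1) (k + ε) (u + s - ε)) :
    Fills 𝕜 (n + 2) (d + 2) (k + u + ε) s := by
  have hP := choose_eq_add_choose n (d + 1)
  have hnum : (n + 1 + (d + 1)).choose (d + 1) ≤ (n + 1 + 1) * (k + ε) + (u + s - ε) := by
    zify [show ε ≤ u + s by lia] at *
    linarith
  exact Fills.horace (htrace u ε hu.ge hE) (hupper _ _ hnum hE') hlower (by lia) (by lia) (by lia)

lemma add_mul_le_of_mul_eq {A : ℕ} (hu : (d + 2) * ((n + 1) * u + ε) = (n + d + 2) * A)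
    (hε : ε ≤ n) (hA : (d + 2) * (n * (n + 2)) ≤ (d + 1) * A) : u + (n + 1) * ε ≤ A := by
  refine le_of_mul_le_mul_left ?_ (show 0 < (d + 2) * (n + 1) by positivity)
  calc (d + 2) * (n + 1) * (u + (n + 1) * ε)
      = (d + 2) * ((n + 1) * u + ε) + (d + 2) * (n * (n + 2)) * ε := by ring
    _ ≤ (n + d + 2) * A + (d + 1) * A * n := by rw [hu]; gcongr
    _ = (d + 2) * (n + 1) * A := by ring

lemma exists_eq_add_of_choose_le (hd : d ≠ 0)
    (hu : (n + 1) * u + ε = (n + (d + 2)).choose (d + 2)) (hs : s ≤ n + 1)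
    (hks : (n + 1 + (d + 2)).choose (d + 2) ≤ (n + 2) * k + s)
    (hA : u + (n + 1) * ε ≤ (n + (d + 1)).choose (d + 1)) :
    ∃ l, k = l + u + ε ∧ (n + 1 + d).choose d ≤ (n + 2) * l + s := by
  have hP := choose_eq_add_choose n (d + 1)
  have hP' := choose_eq_add_choose n d
  have hlarge : n + 2 ≤ (n + 1 + d).choose d := by
    simpa only [Nat.choose_one_right] using
      choose_add_le_choose_add (n + 1) (Nat.one_le_iff_ne_zero.mpr hd)
  have hk : u + ε ≤ k := by
    by_contra! hcon
    have : (n + 2) * (k + 1) ≤ (n + 2) * (u + ε) := Nat.mul_le_mul_left _ hcon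
    linarith
  obtain ⟨l, rfl⟩ := Nat.exists_eq_add_of_le hk
  exact ⟨l, by ring, by linarith⟩

lemma le_of_mul_add_eq_choose (hd : 4 ≤ d) (hu : (n + 1) * u + ε = (n + d).choose d)
    (hε : ε ≤ n) : ε ≤ u := by
  have hC := twentyFour_mul_choose_four n
  have hmono := choose_add_le_choose_add n hd
  have : (n + 1) * n ≤ (n + 4).choose 4 := by nlinarith
  by_contra! hcon
  have : (n + 1) * (u + 1) ≤ (n + 1) * n := Nat.mul_le_mul_left _ (by lia)
  linarith

lemma add_mul_le_of_three_le (hd : 3 ≤ d)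
    (hu : (n + 1) * u + ε = (n + (d + 2)).choose (d + 2)) (hε : ε ≤ n) :
    u + (n + 1) * ε ≤ (n + (d + 1)).choose (d + 1) := by
  have hC := twentyFour_mul_choose_four n
  have hmono := choose_add_le_choose_add n (show 4 ≤ d + 1 by lia)
  refine add_mul_le_of_mul_eq (d := d) (by rw [hu, add_two_mul_choose]) hε ?_
  have hn : 5 * (n * (n + 2)) ≤ 4 * (n + 4).choose 4 := by
    have : 30 * n ≤ (n + 4) * (n + 3) * (n + 1) := by nlinarith [two_mul_le_add_sq n 1]
    nlinarith
  have : 4 * (d + 2) ≤ 5 * (d + 1) := by lia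
  nlinarith

lemma FillsAsExpected.step (hd : 3 ≤ d) (htrace : FillsAsExpected 𝕜 n (d + 2))
    (hupper : FillsAsExpected 𝕜 (n + 1) (d + 1)) (hlower : FillsAsExpected 𝕜 (n + 1) d) :
    FillsAsExpected 𝕜 (n + 1) (d + 2) := by
  refine .of_almost_exact (by lia) fun k s hs hks hks' => ?_
  obtain ⟨u, ε, hε, hu⟩ := exists_mul_add_eq ((n + (d + 2)).choose (d + 2)) n
  obtain ⟨l, rfl, hl⟩ := exists_eq_add_of_choose_le (by lia) hu hs hks
    (add_mul_le_of_three_le hd hu hε)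
  refine htrace.horace hupper (hlower l s hl ?_) hu hε
    (le_of_mul_add_eq_choose (by lia) hu hε) hks (by unfold Exceptional; lia) ?_
  · rintro (⟨hn, rfl, _⟩ | ⟨hn, rfl, _⟩ | ⟨hn, rfl, _⟩ | ⟨hn, rfl, _⟩)
    all_goals
      obtain rfl := Nat.succ_injective hn
      simp only [Nat.choose, Nat.reduceAdd] at hu hks hks'
      lia
  · rintro (⟨hn, _⟩ | ⟨hn, _⟩ | ⟨hn, _⟩ | ⟨hn, _⟩)
    all_goals
      obtain rfl := Nat.succ_injective hn
      obtain rfl : d = 3 := by lia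
      simp only [Nat.choose, Nat.reduceAdd] at hu hks hks'
      lia

end HoraceInduction

section Quartics

variable {𝕜 : Type*} [Field 𝕜] [CharZero 𝕜] {n u ε k s : ℕ}

lemma add_add_le_of_quartic (hn : 5 ≤ n) (hu : (n + 1) * u + ε = (n + 4).choose 4) (hε : ε ≤ n)
    (hs : s ≤ n + 1) (hks : (n + 5).choose 4 ≤ (n + 2) * k + s) : u + ε + (n + 2) ≤ k := by
  rcases le_or_gt n 9 with h | h
  · interval_cases n <;> simp only [Nat.choose, Nat.reduceAdd] at hu hks <;> lia
  · have hC := twentyFour_mul_choose_four n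
    have hC' := twentyFour_mul_choose_four (n + 1)
    have hu' : 24 * u ≤ (n + 4) * (n + 3) * (n + 2) :=
      le_of_mul_le_mul_left (by linarith) n.succ_pos
    have hk' : (n + 5) * (n + 4) * (n + 3) < 24 * (k + 1) :=
      lt_of_mul_lt_mul_left (by linarith) (n + 2).zero_le
    nlinarith

lemma FillsAsExpected.quartic_step (hn : 5 ≤ n) (h : FillsAsExpected 𝕜 n 4) :
    FillsAsExpected 𝕜 (n + 1) 4 := by
  refine .of_almost_exact four_ne_zero fun k s hs hks _ => ?_
  obtain ⟨u, ε, hε, hu⟩ := exists_mul_add_eq ((n + 4).choose 4) n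
  have hk := add_add_le_of_quartic hn hu hε hs hks
  obtain ⟨l, rfl⟩ : ∃ l, k = l + u + ε := ⟨k - (u + ε), by lia⟩
  exact h.horace (fillsAsExpected_cubic 𝕜 (n + 1))
    ((fills_quadric (n + 2)).mono (by lia) s.zero_le) hu hε
    (le_of_mul_add_eq_choose le_rfl hu hε) hks (by unfold Exceptional; lia)
    (by unfold Exceptional; lia)

variable (𝕜)

lemma fillsAsExpected_quartic_one : FillsAsExpected 𝕜 1 4 :=
  .of_floor_ceil (q := 2) (r := 1) four_ne_zero (by decide) (fills_2_4_2_1 𝕜) (fills_2_4_3_0 𝕜)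

lemma fillsAsExpected_quartic_two : FillsAsExpected 𝕜 2 4 := by
  intro k s hks hE
  simp only [Nat.choose, Nat.reduceAdd] at hks
  unfold Exceptional at hE
  obtain h | rfl | h : k ≤ 4 ∨ k = 5 ∨ 6 ≤ k := by lia
  · exact (fills_3_4_4_3 𝕜).trade four_ne_zero h (by lia)
  · exact (fills_3_4_5_1 𝕜).mono le_rfl (by lia)
  · exact (fills_3_4_6_0 𝕜).mono h s.zero_le

lemma fillsAsExpected_quartic_three : FillsAsExpected 𝕜 3 4 := by
  intro k s hks hE
  simp only [Nat.choose, Nat.reduceAdd] at hks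
  unfold Exceptional at hE
  rcases le_or_gt k 8 with h | h
  · exact (fills_4_4_8_3 𝕜).trade four_ne_zero h (by lia)
  · exact (fills_4_4_10_0 𝕜).mono (by lia) s.zero_le

lemma fillsAsExpected_quartic_four : FillsAsExpected 𝕜 4 4 := by
  intro k s hks hE
  simp only [Nat.choose, Nat.reduceAdd] at hks
  unfold Exceptional at hE
  rcases le_or_gt k 13 with h | h
  · exact (fills_5_4_13_5 𝕜).trade four_ne_zero h (by lia)
  · exact (fills_5_4_15_0 𝕜).mono (by lia) s.zero_le

lemma fillsAsExpected_quartic : ∀ n, FillsAsExpected 𝕜 n 4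
  | 0 => fillsAsExpected_zero 𝕜 four_ne_zero
  | 1 => fillsAsExpected_quartic_one 𝕜
  | 2 => fillsAsExpected_quartic_two 𝕜
  | 3 => fillsAsExpected_quartic_three 𝕜
  | 4 => fillsAsExpected_quartic_four 𝕜
  | 5 => .of_exact four_ne_zero (by decide) (fills_6_4_21_0 𝕜)
  | n + 6 => (fillsAsExpected_quartic (n + 5)).quartic_step (by lia)

end Quartics

section AllDegrees

variable (𝕜 : Type*) [Field 𝕜] [CharZero 𝕜]

theorem fillsAsExpected : ∀ n d, 3 ≤ d → FillsAsExpected 𝕜 n d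
  | _, 0, hd | _, 1, hd | _, 2, hd => absurd hd (by lia)
  | n, 3, _ => fillsAsExpected_cubic 𝕜 n
  | n, 4, _ => fillsAsExpected_quartic 𝕜 n
  | 0, d + 5, _ => fillsAsExpected_zero 𝕜 (by lia)
  | n + 1, d + 5, _ => .step (by lia) (fillsAsExpected n (d + 5) (by lia))
      (fillsAsExpected (n + 1) (d + 4) (by lia)) (fillsAsExpected (n + 1) (d + 3) (by lia))

lemma choose_le_mul_genericRank {n d : ℕ} (hd : 3 ≤ d) :
    (n + d).choose d ≤ (n + 1) * genericRank n d := by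
  unfold genericRank
  split_ifs with h₂ h₄ h₃
  · lia
  · obtain ⟨rfl, h, h'⟩ := h₄
    interval_cases n <;> decide
  · obtain ⟨rfl, rfl⟩ := h₃
    decide
  · have := Nat.lt_mul_div_succ ((n + d).choose d + n) n.succ_pos
    lia

lemma not_exceptional_genericRank (n d s : ℕ) : ¬ Exceptional n d (genericRank n d) s := by
  rintro (⟨rfl, rfl, h, -⟩ | ⟨rfl, rfl, h⟩ | ⟨rfl, rfl, h⟩ | ⟨rfl, rfl, h⟩) <;>
    exact absurd h (by decide)

theorem fills_genericRank {n d : ℕ} (hd : 2 ≤ d) :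
    Fills 𝕜 (n + 1) d (genericRank n d) 0 := by
  obtain rfl | hd := hd.eq_or_lt
  · exact fills_quadric (n + 1)
  · exact fillsAsExpected 𝕜 n d hd _ 0 (choose_le_mul_genericRank hd)
      (not_exceptional_genericRank n d 0)

end AllDegrees

/-! ### From linear systems to sums of powers -/

section Dominance

lemma exists_ne_zero_forall_mem_range_comap {R S : Type*} [CommRing R] [IsDomain R] [CommRing S]
    {φ : R →+* S} (hφ : φ.FinitePresentation) (hinj : Function.Injective φ) :
    ∃ f ≠ 0, ∀ p : PrimeSpectrum R, f ∉ p.asIdeal → p ∈ Set.range (PrimeSpectrum.comap φ) := by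
  obtain ⟨Z, hZ⟩ := PrimeSpectrum.exists_constructibleSetData_iff.mpr
    (PrimeSpectrum.isConstructible_range_comap hφ)
  have hgeneric : (⊥ : PrimeSpectrum R) ∈ Z.toSet := by
    obtain ⟨q, hq, hq'⟩ := Ideal.exists_comap_eq_of_mem_minimalPrimes_of_injective hinj ⊥
      (IsDomain.minimalPrimes_eq_singleton_bot R ▸ Set.mem_singleton _)
    exact hZ ▸ ⟨⟨q, hq⟩, PrimeSpectrum.ext hq'⟩
  simp only [PrimeSpectrum.ConstructibleSetData.toSet, Set.mem_iUnion] at hgeneric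
  obtain ⟨B, hB, hg, hf⟩ := hgeneric
  refine ⟨B.f, fun h => hf (by simp [h]), fun p hp => hZ ▸ ?_⟩
  simp only [PrimeSpectrum.ConstructibleSetData.toSet, Set.mem_iUnion]
  refine ⟨B, hB, ?_, fun h => hp (h rfl)⟩
  rintro _ ⟨i, rfl⟩
  have : B.g i = 0 := hg (Set.mem_range_self i)
  exact this ▸ p.asIdeal.zero_mem

variable {𝕜 σ τ : Type*} [Field 𝕜]

lemma finitePresentation_aeval [Finite σ] [Finite τ] (Φ : τ → MvPolynomial σ 𝕜) :
    (aeval (R := 𝕜) Φ).toRingHom.FinitePresentation := by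
  refine RingHom.FinitePresentation.of_finiteType.mp
    (RingHom.FiniteType.of_comp_finiteType (f := C) ?_)
  have : (aeval (R := 𝕜) Φ).toRingHom.comp C = algebraMap 𝕜 (MvPolynomial σ 𝕜) :=
    RingHom.ext fun c => by simp [algebraMap_eq]
  rw [this]
  exact RingHom.finiteType_algebraMap.mpr inferInstance

/-- By Chevalley's theorem the image of the map is constructible, and by independence it contains
the generic point; Hilbert's Nullstellensatz then turns prime ideals into points. -/
lemma exists_generic_preimage [IsAlgClosed 𝕜] [Finite σ] [Finite τ] {Φ : τ → MvPolynomial σ 𝕜}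
    (hΦ : AlgebraicIndependent 𝕜 Φ) :
    ∃ D : MvPolynomial τ 𝕜, D ≠ 0 ∧ ∀ a : τ → 𝕜, eval a D ≠ 0 →
      ∃ x : σ → 𝕜, ∀ t, eval x (Φ t) = a t := by
  obtain ⟨D, hD, h⟩ := exists_ne_zero_forall_mem_range_comap (finitePresentation_aeval Φ) hΦ
  refine ⟨D, hD, fun a ha => ?_⟩
  obtain ⟨q, hq⟩ := h ⟨vanishingIdeal 𝕜 {a}, inferInstance⟩
    (by simpa [mem_vanishingIdeal_singleton_iff, aeval_eq_eval] using ha)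
  obtain ⟨m, hm, hqm⟩ := Ideal.exists_le_maximal q.asIdeal q.isPrime.ne_top
  obtain ⟨x, rfl⟩ := eq_vanishingIdeal_singleton_of_isMaximal 𝕜 hm
  refine ⟨x, fun t => ?_⟩
  have hmem : X t - C (a t) ∈ (PrimeSpectrum.comap (aeval (R := 𝕜) Φ).toRingHom q).asIdeal := by
    rw [hq]
    simp
  have hx : aeval Φ (X t - C (a t)) ∈ vanishingIdeal 𝕜 {x} := hqm hmem
  simpa [mem_vanishingIdeal_singleton_iff, aeval_eq_eval, sub_eq_zero] using hx

end Dominance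

section JacobianCriterion

variable {𝕜 σ τ : Type*}

lemma pderiv_aeval [CommSemiring 𝕜] [Fintype τ] (Φ : τ → MvPolynomial σ 𝕜) (s : σ)
    (F : MvPolynomial τ 𝕜) :
    pderiv s (aeval Φ F) = ∑ t, aeval Φ (pderiv t F) * pderiv s (Φ t) := by
  classical
  induction F using MvPolynomial.induction_on with
  | C c => simp [algebraMap_eq]
  | add p q hp hq => simp only [map_add, hp, hq, add_mul, Finset.sum_add_distrib]
  | mul_X p i hp =>
    have hX : ∑ t, aeval Φ (p * pderiv t (X i)) * pderiv s (Φ t) = aeval Φ p * pderiv s (Φ i) := by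
      simp [pderiv_X, Pi.single_apply, ite_mul, apply_ite]
    simp only [map_mul, pderiv_mul, hp, map_add, aeval_X, add_mul, Finset.sum_add_distrib] at hX ⊢
    rw [hX, Finset.sum_mul]
    exact congrArg (· + _) (Finset.sum_congr rfl fun t _ => mul_right_comm _ _ _)

lemma totalDegree_pderiv_lt [CommSemiring 𝕜] {F : MvPolynomial τ 𝕜} (hF : F.totalDegree ≠ 0)
    (t : τ) : (pderiv t F).totalDegree < F.totalDegree := by
  refine (Finset.sup_lt_iff (Nat.pos_of_ne_zero hF)).mpr fun μ hμ => ?_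
  rw [mem_support_iff, coeff_pderiv] at hμ
  have hle := le_totalDegree (mem_support_iff.mpr (left_ne_zero_of_mul hμ))
  change (μ + Finsupp.single t 1).degree ≤ _ at hle
  change μ.degree < _
  rw [map_add, Finsupp.degree_single] at hle
  omega

variable [Field 𝕜] [CharZero 𝕜]

lemma totalDegree_eq_zero_of_pderiv_eq_zero {F : MvPolynomial τ 𝕜} (hF : ∀ t, pderiv t F = 0) :
    F.totalDegree = 0 := by
  classical
  refine (totalDegree_eq_zero_iff τ F).mpr fun μ hμ t => ?_
  by_contra ht
  have hcoeff := congrArg (coeff (μ - Finsupp.single t 1)) (hF t)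
  rw [coeff_pderiv, tsub_add_cancel_of_le (by simpa using Nat.one_le_iff_ne_zero.mpr ht),
    coeff_zero, mul_eq_zero] at hcoeff
  exact hcoeff.elim (mem_support_iff.mp hμ) (Nat.cast_add_one_ne_zero _)

/-- A relation `F` of minimal degree would be constant: by the chain rule the vector of the
`aeval Φ (pderiv t F)` is killed by the Jacobian matrix, so the partial derivatives of `F` are
relations of smaller degree. -/
lemma algebraicIndependent_of_jacobian [Finite σ] [Fintype τ] {Φ : τ → MvPolynomial σ 𝕜}
    (x : σ → 𝕜) (h : ∀ c : τ → 𝕜, (∀ s, ∑ t, c t * eval x (pderiv s (Φ t)) = 0) → c = 0) :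
    AlgebraicIndependent 𝕜 Φ := by
  let J : Matrix σ τ (MvPolynomial σ 𝕜) := Matrix.of fun s t => pderiv s (Φ t)
  have hJx : Function.Injective (J.map (eval x)).mulVec :=
    (injective_iff_map_eq_zero (Matrix.mulVecLin _)).mpr fun c hc => h c fun s => by
      simpa [J, Matrix.mulVec, dotProduct, mul_comm] using congrFun hc s
  have hJ : Function.Injective J.mulVec := by
    simpa using mulVec_map_injective_of_specialization
      (fun a => ⟨C a, eval_C a⟩) (ψ := RingHom.id _) Function.injective_id hJx
  refine (injective_iff_map_eq_zero (aeval (R := 𝕜) Φ)).mpr fun F => ?_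
  induction hm : F.totalDegree using Nat.strong_induction_on generalizing F with
  | _ m ih =>
    subst hm
    intro hF
    have hzero : F.totalDegree = 0 := by
      by_contra hdeg
      have hker : J.mulVec (fun t => aeval Φ (pderiv t F)) = 0 := by
        funext s
        have hchain := pderiv_aeval Φ s F
        rw [hF, map_zero] at hchain
        simpa [J, Matrix.mulVec, dotProduct, mul_comm] using hchain.symm
      have hrel := hJ (hker.trans (Matrix.mulVec_zero J).symm)
      exact hdeg (totalDegree_eq_zero_of_pderiv_eq_zero fun t =>
        ih _ (totalDegree_pderiv_lt hdeg t) _ rfl (congrFun hrel t))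
    rw [totalDegree_eq_zero_iff_eq_C.mp hzero] at hF ⊢
    simpa [algebraMap_eq] using hF

end JacobianCriterion

section PowerSums

variable {n d r s : ℕ} {f : MvPolynomial (Fin (n + 1)) ℂ}

/-- The exponents of the monomials of degree `d` in `x_0, …, x_n`, which index the coefficients of
a form of degree `d`. -/
abbrev Exponent (n d : ℕ) : Type :=
  {μ : Fin (n + 1) →₀ ℕ // (μ.sum fun _ e => e) = d}

noncomputable instance (n d : ℕ) : Fintype (Exponent n d) :=
  Fintype.ofEquiv _ (Sym.equivNatSum (Fin (n + 1)) d)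

lemma card_exponent (n d : ℕ) : Fintype.card (Exponent n d) = (n + d).choose d := by
  rw [← Fintype.card_congr (β := Exponent n d) (Sym.equivNatSum (Fin (n + 1)) d),
    Sym.card_sym_eq_choose, Fintype.card_fin, Nat.add_right_comm, Nat.add_sub_cancel]

lemma eq_of_coeff_exponent_eq {g : MvPolynomial (Fin (n + 1)) ℂ} (hf : f.IsHomogeneous d)
    (hg : g.IsHomogeneous d) (h : ∀ μ : Exponent n d, coeff μ.1 f = coeff μ.1 g) : f = g := by
  ext μ
  by_cases hμ : μ.degree = d
  · exact h ⟨μ, hμ⟩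
  · rw [hf.coeff_eq_zero hμ, hg.coeff_eq_zero hμ]

lemma coeff_linForm_pow (v : Fin (n + 1) → ℂ) (μ : Exponent n d) :
    coeff μ.1 (linForm (n + 1) v ^ d) = eval v (monomial μ.1 (μ.1.multinomial : ℂ)) := by
  simp_rw [linForm, ← smul_eq_C_mul]
  rw [coeff_linearCombination_X_pow_of_fintype, if_pos μ.2, eval_monomial]

lemma isHomogeneous_sum_linForm_pow (v : Fin r → Fin (n + 1) → ℂ) (d : ℕ) :
    (∑ i, linForm (n + 1) (v i) ^ d).IsHomogeneous d :=
  IsHomogeneous.sum _ _ _ fun i _ => by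
    have h : (linForm (n + 1) (v i)).IsHomogeneous 1 :=
      IsHomogeneous.sum _ _ _ fun j _ => isHomogeneous_C_mul_X _ _
    simpa using h.pow d

/-- `f` is a sum of `r` powers `ℓ_v ^ d`. Scalars are superfluous over `ℂ`, and `v = 0` is allowed;
`waringRank_eq_sInf` relates this to `waringRank`. -/
def IsSumOfPowers (n d r : ℕ) (f : MvPolynomial (Fin (n + 1)) ℂ) : Prop :=
  ∃ v : Fin r → Fin (n + 1) → ℂ, f = ∑ i, linForm (n + 1) (v i) ^ d

lemma linForm_zero (k : ℕ) : linForm k 0 = 0 := by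
  simp [linForm]

lemma IsSumOfPowers.mono (hd : d ≠ 0) (hrs : r ≤ s) (h : IsSumOfPowers n d r f) :
    IsSumOfPowers n d s f := by
  obtain ⟨k, rfl⟩ := Nat.exists_eq_add_of_le hrs
  obtain ⟨v, rfl⟩ := h
  exact ⟨Fin.append v 0, by simp [Fin.sum_univ_add, linForm_zero, hd]⟩

lemma exists_smul_linForm_pow_eq (hd : d ≠ 0) (c : ℂ) {k : ℕ} (v : Fin k → ℂ) :
    ∃ w, c • linForm k v ^ d = linForm k w ^ d := by
  obtain ⟨z, rfl⟩ := IsAlgClosed.exists_pow_nat_eq c (Nat.pos_of_ne_zero hd)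
  refine ⟨z • v, ?_⟩
  have : linForm k (z • v) = z • linForm k v := by
    simp [linForm, Finset.smul_sum, smul_eq_C_mul, mul_assoc]
  rw [this, smul_pow]

lemma exists_linForm_pow_eq_smul (hd : d ≠ 0) (v : Fin (n + 1) → ℂ) :
    ∃ (c : ℂ) (w : Fin (n + 1) → ℂ), w ≠ 0 ∧
      linForm (n + 1) v ^ d = c • linForm (n + 1) w ^ d := by
  obtain rfl | hv := eq_or_ne v 0
  · exact ⟨0, 1, one_ne_zero, by simp [linForm_zero, hd]⟩
  · exact ⟨1, v, hv, (one_smul _ _).symm⟩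

lemma waringRank_eq_sInf (hd : d ≠ 0) : waringRank n d f = sInf {r | IsSumOfPowers n d r f} := by
  refine congrArg sInf (Set.ext fun r => ⟨?_, ?_⟩)
  · rintro ⟨c, v, -, rfl⟩
    choose w hw using fun i => exists_smul_linForm_pow_eq hd (c i) (v i)
    exact ⟨w, Finset.sum_congr rfl fun i _ => hw i⟩
  · rintro ⟨v, rfl⟩
    choose c w hw h using fun i => exists_linForm_pow_eq_smul hd (v i)
    exact ⟨c, w, hw, Finset.sum_congr rfl fun i _ => h i⟩

/-- The coefficient at `μ` of `∑ i, ℓ_{v_i} ^ d`, as a polynomial in the coordinates of the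
vectors `v_i`. -/
noncomputable def powerSumCoeff (r : ℕ) (μ : Exponent n d) : MvPolynomial (Fin r × Fin (n + 1)) ℂ :=
  ∑ i, rename (Prod.mk i) (monomial μ.1 (μ.1.multinomial : ℂ))

lemma eval_powerSumCoeff (μ : Exponent n d) (x : Fin r × Fin (n + 1) → ℂ) :
    eval x (powerSumCoeff r μ) = coeff μ.1 (∑ i, linForm (n + 1) (fun j => x (i, j)) ^ d) := by
  rw [powerSumCoeff, map_sum, coeff_sum]
  refine Finset.sum_congr rfl fun i _ => ?_
  rw [coeff_linForm_pow, eval_rename]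
  rfl

lemma eval_pderiv_powerSumCoeff (μ : Exponent n d) (x : Fin r × Fin (n + 1) → ℂ) (i : Fin r)
    (j : Fin (n + 1)) :
    eval x (pderiv (i, j) (powerSumCoeff r μ)) =
      eval (fun j => x (i, j)) (pderiv j (monomial μ.1 (μ.1.multinomial : ℂ))) := by
  classical
  rw [powerSumCoeff, map_sum, map_sum, Finset.sum_eq_single i _ (by simp)]
  · rw [pderiv_rename (Prod.mk_right_injective i), eval_rename]
    rfl
  · intro k _ hk
    rw [pderiv_eq_zero_of_notMem_vars, map_zero]
    intro hmem
    obtain ⟨_, -, h⟩ := Finset.mem_image.mp (vars_rename _ _ hmem)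
    exact hk (Prod.ext_iff.mp h).1

/-- A form killed by the Jacobian of the power sum map at `P` is singular at the points `P i`. -/
theorem Fills.algebraicIndependent_powerSumCoeff (h : Fills ℂ (n + 1) d r 0) :
    AlgebraicIndependent ℂ (powerSumCoeff (n := n) (d := d) r) := by
  classical
  obtain ⟨P, Q, hPQ⟩ := h
  refine algebraicIndependent_of_jacobian (fun q => P q.1 q.2) fun c hc => ?_
  let g : MvPolynomial (Fin (n + 1)) ℂ :=
    ∑ μ : Exponent n d, c μ • monomial μ.1 (μ.1.multinomial : ℂ)
  have hcoeff : ∀ μ : Exponent n d, coeff μ.1 g = c μ * μ.1.multinomial := fun μ => by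
    simp [g, coeff_sum, coeff_monomial, Subtype.val_inj]
  have hg : g = 0 := by
    refine linearSystem_eq_bot_iff.mp hPQ g ?_ (fun i j => ?_) fun b => b.elim0
    · exact Submodule.sum_mem _ fun μ _ =>
        Submodule.smul_mem _ _ (isHomogeneous_monomial _ μ.2)
    · rw [← hc (i, j)]
      simp [g, eval_pderiv_powerSumCoeff]
  funext μ
  have hμ := hcoeff μ
  rw [hg, coeff_zero, zero_eq_mul] at hμ
  exact hμ.resolve_right (Nat.cast_ne_zero.mpr (Nat.multinomial_pos _ _).ne')

theorem Fills.exists_general_isSumOfPowers (h : Fills ℂ (n + 1) d r 0) :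
    ∃ D : MvPolynomial (Exponent n d) ℂ, D ≠ 0 ∧ ∀ f : MvPolynomial (Fin (n + 1)) ℂ,
      f.IsHomogeneous d → eval (fun μ => coeff μ.1 f) D ≠ 0 → IsSumOfPowers n d r f := by
  obtain ⟨D, hD, h⟩ := exists_generic_preimage h.algebraicIndependent_powerSumCoeff
  refine ⟨D, hD, fun f hf hne => ?_⟩
  obtain ⟨x, hx⟩ := h _ hne
  refine ⟨fun i j => x (i, j),
    eq_of_coeff_exponent_eq hf (isHomogeneous_sum_linForm_pow _ d) fun μ => ?_⟩
  rw [← eval_powerSumCoeff, hx]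

/-- The sums of `r` powers `ℓ_v ^ d` satisfy a nontrivial polynomial equation, i.e. the `r`-th
secant variety of the Veronese variety is a proper subvariety. -/
def Deficient (n d r : ℕ) : Prop :=
  ∃ D : MvPolynomial (Exponent n d) ℂ, D ≠ 0 ∧ ∀ f : MvPolynomial (Fin (n + 1)) ℂ,
    IsSumOfPowers n d r f → eval (fun μ => coeff μ.1 f) D = 0

theorem deficient_of_lt_choose (h : r * (n + 1) < (n + d).choose d) : Deficient n d r := by
  have hdep : ¬ AlgebraicIndependent ℂ (powerSumCoeff (n := n) (d := d) r) := by
    intro hind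
    have hle := hind.lift_cardinalMk_le_trdeg
    rw [MvPolynomial.trdeg_of_isDomain] at hle
    simp only [Cardinal.mk_fintype, Cardinal.lift_natCast, Nat.cast_le, Fintype.card_prod,
      Fintype.card_fin, card_exponent] at hle
    omega
  rw [algebraicIndependent_iff] at hdep
  push Not at hdep
  obtain ⟨D, hzero, hD⟩ := hdep
  refine ⟨D, hD, ?_⟩
  rintro _ ⟨v, rfl⟩
  have heval : eval (fun q : Fin r × Fin (n + 1) => v q.1 q.2) (aeval (powerSumCoeff r) D) = 0 := by
    rw [hzero, map_zero]
  rw [← coe_aeval_eq_eval, RingHom.coe_coe, comp_aeval_apply] at heval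
  simpa [eval_powerSumCoeff, coe_aeval_eq_eval] using heval

theorem waringRank_eq_of_general {R : ℕ} (hd : d ≠ 0) (hR : Fills ℂ (n + 1) d R 0)
    (hdef : ∀ r < R, Deficient n d r) :
    ∃ D : MvPolynomial (Exponent n d) ℂ, D ≠ 0 ∧ ∀ f : MvPolynomial (Fin (n + 1)) ℂ,
      f.IsHomogeneous d → eval (fun μ => coeff μ.1 f) D ≠ 0 → waringRank n d f = R := by
  obtain ⟨D₁, hD₁, h₁⟩ := hR.exists_general_isSumOfPowers
  obtain ⟨D₂, hD₂, h₂⟩ : ∃ D : MvPolynomial (Exponent n d) ℂ, D ≠ 0 ∧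
      ∀ r < R, ∀ f, IsSumOfPowers n d r f → eval (fun μ => coeff μ.1 f) D = 0 := by
    rcases R with _ | R
    · exact ⟨1, one_ne_zero, by simp⟩
    · obtain ⟨D, hD, h⟩ := hdef R R.lt_succ_self
      exact ⟨D, hD, fun r hr f hf => h f (hf.mono hd (Nat.le_of_lt_succ hr))⟩
  refine ⟨D₁ * D₂, mul_ne_zero hD₁ hD₂, fun f hf hne => ?_⟩
  rw [map_mul] at hne
  have hmem := h₁ f hf (left_ne_zero_of_mul hne)
  rw [waringRank_eq_sInf hd]
  refine le_antisymm (Nat.sInf_le hmem) (le_csInf ⟨R, hmem⟩ fun r hr => ?_)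
  by_contra! hlt
  exact right_ne_zero_of_mul hne (h₂ r hlt f hr)

end PowerSums

/-! ### Equations for sums of powers -/

section Flattening

lemma rank_sum_le {K m n κ : Type*} [Field K] [Fintype n] [Finite m] (s : Finset κ)
    (A : κ → Matrix m n K) : (∑ k ∈ s, A k).rank ≤ ∑ k ∈ s, (A k).rank := by
  refine Finset.le_sum_of_subadditive Matrix.rank (by simp) (fun B C => ?_) s A
  rw [Matrix.rank, Matrix.rank, Matrix.rank, Matrix.mulVecLin_add]
  exact (Submodule.finrank_mono (LinearMap.range_add_le _ _)).trans
    (Submodule.finrank_add_le_finrank_add_finrank _ _)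

variable {n d r : ℕ}

/-- The apolarity pairing with a form `g` of degree `d`, as a linear form in the coefficients of
forms of degree `d`, normalized such that its value at `ℓ_v ^ d` is `g v`. -/
noncomputable def apolarForm (d : ℕ) (g : MvPolynomial (Fin (n + 1)) ℂ) :
    MvPolynomial (Exponent n d) ℂ :=
  ∑ μ, C (coeff μ.1 g / μ.1.multinomial) * X μ

lemma eval_apolarForm {g : MvPolynomial (Fin (n + 1)) ℂ} (hg : g.IsHomogeneous d) {κ : Type*}
    [Fintype κ] (v : κ → Fin (n + 1) → ℂ) :
    eval (fun μ => coeff μ.1 (∑ k, linForm (n + 1) (v k) ^ d)) (apolarForm d g) =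
      ∑ k, eval (v k) g := by
  have hexpand : g = ∑ μ : Exponent n d, monomial μ.1 (coeff μ.1 g) := by
    classical
    refine eq_of_coeff_exponent_eq hg (IsHomogeneous.sum _ _ _ fun μ _ =>
      isHomogeneous_monomial _ μ.2) fun μ => ?_
    simp [coeff_sum, coeff_monomial, Subtype.val_inj]
  have hterm : ∀ (μ : Exponent n d) w, coeff μ.1 g / μ.1.multinomial *
      coeff μ.1 (linForm (n + 1) w ^ d) = eval w (monomial μ.1 (coeff μ.1 g)) := fun μ w => by
    rw [coeff_linForm_pow, eval_monomial, eval_monomial, ← mul_assoc,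
      div_mul_cancel₀ _ (Nat.cast_ne_zero.mpr (Nat.multinomial_pos _ _).ne')]
  conv_rhs => rw [hexpand]
  simp only [apolarForm, map_sum, map_mul, eval_C, eval_X, coeff_sum, Finset.mul_sum, hterm]
  exact Finset.sum_comm

lemma eval_det_map_apolarForm {ι κ : Type*} [Fintype ι] [DecidableEq ι] [Fintype κ]
    {G : Matrix ι ι (MvPolynomial (Fin (n + 1)) ℂ)} (hG : ∀ a b, (G a b).IsHomogeneous d)
    (v : κ → Fin (n + 1) → ℂ) :
    eval (fun μ => coeff μ.1 (∑ k, linForm (n + 1) (v k) ^ d)) (G.map (apolarForm d)).det =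
      (∑ k, G.map (eval (v k))).det := by
  rw [RingHom.map_det]
  congr 1
  ext a b
  simp [Matrix.sum_apply, eval_apolarForm (hG a b)]

/-- The determinant of the matrix of apolarity pairings with the entries of `G` is the required
equation: at `∑ i, ℓ_{v_i} ^ d` it is the determinant of `∑ i, G (v_i)`, of rank at most `r * s`. -/
theorem deficient_of_flattening {s : ℕ} {ι κ : Type*} [Fintype ι] [DecidableEq ι] [Fintype κ]
    {G : Matrix ι ι (MvPolynomial (Fin (n + 1)) ℂ)} (hG : ∀ a b, (G a b).IsHomogeneous d)
    (hrank : ∀ v, (G.map (eval v)).rank ≤ s) (p : κ → Fin (n + 1) → ℂ)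
    (hp : (∑ k, G.map (eval (p k))).det ≠ 0) (hr : r * s < Fintype.card ι) :
    Deficient n d r := by
  refine ⟨(G.map (apolarForm d)).det, fun h0 => hp ?_, ?_⟩
  · rw [← eval_det_map_apolarForm hG, h0, map_zero]
  rintro _ ⟨v, rfl⟩
  rw [eval_det_map_apolarForm hG]
  by_contra hdet
  have hfull := Matrix.rank_of_isUnit _ ((Matrix.isUnit_iff_isUnit_det _).mpr (Ne.isUnit hdet))
  have hle : (∑ i, G.map (eval (v i))).rank ≤ r * s :=
    (rank_sum_le _ _).trans <|
      (Finset.sum_le_card_nsmul _ _ s fun i _ => hrank (v i)).trans_eq (by simp)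
  omega

lemma exists_det_eval_monomial_ne_zero {𝕜 σ ι : Type*} [Field 𝕜] [Infinite 𝕜] [Fintype ι]
    [DecidableEq ι] {μ : ι → σ →₀ ℕ} (hμ : Function.Injective μ) :
    ∃ q : ι → σ → 𝕜, (Matrix.of fun k a => eval (q k) (monomial (μ a) (1 : 𝕜))).det ≠ 0 := by
  have hli : LinearIndependent 𝕜 fun a => monomial (μ a) (1 : 𝕜) := by
    simpa [Function.comp_def] using (basisMonomials σ 𝕜).linearIndependent.comp μ hμ
  let b := Module.Basis.span hli
  have := Module.Finite.of_basis b
  let φ : (σ → 𝕜) → MvPolynomial σ 𝕜 →ₗ[𝕜] 𝕜 := fun x => (aeval x).toLinearMap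
  have hφ : Separates (Submodule.span 𝕜 (Set.range fun a => monomial (μ a) (1 : 𝕜))) φ :=
    fun f _ hf => MvPolynomial.funext fun x => by simpa [φ, aeval_eq_eval] using hf x
  obtain ⟨h, hh⟩ := hφ.exists_fin_subfamily (Module.finrank_eq_card_basis b).le
  let q := h ∘ Fintype.equivFin ι
  have hq : Separates _ (φ ∘ q) := fun f hf h0 =>
    hh f hf fun k => by simpa [q] using h0 ((Fintype.equivFin ι).symm k)
  refine ⟨q, ?_⟩
  simpa [b, φ, Module.Basis.span_apply, aeval_eq_eval] using (separates_iff_det_ne_zero b _).mp hq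

/-- The equation is the determinant of the catalecticant, i.e. the flattening given by the products
of two monomials of degree `e`. -/
theorem deficient_catalecticant {e : ℕ} (hr : r < (n + e).choose e) : Deficient n (e + e) r := by
  classical
  let G : Matrix (Exponent n e) (Exponent n e) (MvPolynomial (Fin (n + 1)) ℂ) :=
    Matrix.of fun a b => monomial (a.1 + b.1) 1
  let w : (Fin (n + 1) → ℂ) → Exponent n e → ℂ := fun v a => eval v (monomial a.1 1)
  have hG : ∀ v, G.map (eval v) = Matrix.vecMulVec (w v) (w v) := fun v => by
    ext a b
    simp only [G, w, Matrix.map_apply, Matrix.of_apply, Matrix.vecMulVec_apply, ← map_mul,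
      monomial_mul, one_mul]
  obtain ⟨q, hq⟩ := exists_det_eval_monomial_ne_zero (𝕜 := ℂ)
    (Subtype.val_injective : Function.Injective fun a : Exponent n e => a.1)
  have hsum : ∑ k, G.map (eval (q k)) =
      (Matrix.of fun k => w (q k)).transpose * Matrix.of fun k => w (q k) := by
    ext a b
    simp [hG, Matrix.sum_apply, Matrix.mul_apply, Matrix.vecMulVec_apply]
  refine deficient_of_flattening (s := 1) (G := G) (fun a b => ?_) (fun v => ?_) q ?_ ?_
  · simpa [G, monomial_mul] using
      (isHomogeneous_monomial (1 : ℂ) a.2).mul (isHomogeneous_monomial (1 : ℂ) b.2)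
  · exact hG v ▸ Matrix.rank_vecMulVec_le _ _
  · rw [hsum, Matrix.det_mul, Matrix.det_transpose]
    exact mul_ne_zero hq hq
  · rwa [mul_one, card_exponent]

end Flattening

section Koszul

lemma det_ne_zero_of_hasFullColumnRank {p : ℕ} [Fact p.Prime] {m : ℕ}
    {A : Matrix (Fin m) (Fin m) ℤ} (h : hasFullColumnRank p m
      (List.ofFn fun i => List.ofFn fun j => (A i j % p).toNat) = true) : A.det ≠ 0 := by
  intro h0
  have hmod : (A.map (Int.castRingHom (ZMod p))).det = 0 := by
    rw [← RingHom.mapMatrix_apply, ← RingHom.map_det, h0, map_zero]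
  obtain ⟨v, hv, hAv⟩ := Matrix.exists_mulVec_eq_zero_iff.mpr hmod
  refine hv (eq_zero_of_hasFullColumnRank (by simp [List.mem_ofFn]) h fun r hr => ?_)
  obtain ⟨i, rfl⟩ := List.mem_ofFn.mp hr
  have hcast : ∀ a : ℤ, ((a % p).toNat : ZMod p) = a := fun a => by
    rw [← Int.cast_natCast, Int.toNat_of_nonneg
      (Int.emod_nonneg _ (Nat.cast_ne_zero.mpr (Nat.Prime.ne_zero Fact.out))), ZMod.intCast_mod]
  simpa [pairing, hcast, Matrix.mulVec, dotProduct] using congrFun hAv i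

/-- The relation `∑ a, v a • H a b = 0` expresses `H m b` through the other members. -/
lemma finrank_span_range_le_of_antisymm {K V ι : Type*} [Field K] [AddCommGroup V] [Module K V]
    [Fintype ι] [LinearOrder ι] {H : ι → ι → V} (hself : ∀ a, H a a = 0)
    (hswap : ∀ a b, H a b = -H b a) {v : ι → K} (hsum : ∀ b, ∑ a, v a • H a b = 0) {m : ι}
    (hm : v m ≠ 0) : Module.finrank K (Submodule.span K (Set.range fun q : ι × ι => H q.1 q.2)) ≤
      Fintype.card {q : ι × ι // q.1 < q.2 ∧ q.1 ≠ m ∧ q.2 ≠ m} := by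
  let S := Submodule.span K (Set.range
    fun q : {q : ι × ι // q.1 < q.2 ∧ q.1 ≠ m ∧ q.2 ≠ m} => H q.1.1 q.1.2)
  have hlt : ∀ {a b}, a < b → a ≠ m → b ≠ m → H a b ∈ S := fun hab ha hb =>
    Submodule.subset_span ⟨⟨(_, _), hab, ha, hb⟩, rfl⟩
  have hne : ∀ a b, a ≠ m → b ≠ m → H a b ∈ S := fun a b ha hb => by
    rcases lt_trichotomy a b with h | rfl | h
    · exact hlt h ha hb
    · exact hself a ▸ S.zero_mem
    · exact hswap a b ▸ S.neg_mem (hlt h hb ha)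
  have hleft : ∀ b, H m b ∈ S := fun b => by
    by_cases hb : b = m
    · rw [hb, hself]
      exact S.zero_mem
    rw [← S.smul_mem_iff hm, eq_neg_of_add_eq_zero_left
      ((Finset.add_sum_erase _ _ (Finset.mem_univ m)).trans (hsum b))]
    exact S.neg_mem (S.sum_mem fun a ha => S.smul_mem _ (hne a b (Finset.ne_of_mem_erase ha) hb))
  have hle : Submodule.span K (Set.range fun q : ι × ι => H q.1 q.2) ≤ S := by
    rw [Submodule.span_le]
    rintro _ ⟨⟨a, b⟩, rfl⟩
    by_cases ha : a = m
    · exact ha ▸ hleft b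
    by_cases hb : b = m
    · simpa only [hb, hswap a m, SetLike.mem_coe] using S.neg_mem (hleft a)
    · exact hne a b ha hb
  have : Module.Finite K S := Module.Finite.span_of_finite K (Set.finite_range _)
  exact (Submodule.finrank_mono hle).trans (finrank_range_le_card _)

/-- The sign of `b - a`. -/
def ordSign (a b : Fin 5) : ℤ := if a.1 < b.1 then 1 else if b.1 < a.1 then -1 else 0

lemma ordSign_swap : ∀ a b, ordSign a b = -ordSign b a := by
  decide

/-- The alternating tensor on five letters, normalized to be `1` at `(0, 1, 2, 3, 4)`. -/
def leviCivita (a b c d e : Fin 5) : ℤ :=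
  ordSign a b * ordSign a c * ordSign a d * ordSign a e * ordSign b c * ordSign b d *
    ordSign b e * ordSign c d * ordSign c e * ordSign d e

lemma leviCivita_swap_left (a b c d e : Fin 5) :
    leviCivita a b c d e = -leviCivita b a c d e := by
  rw [leviCivita, leviCivita, ordSign_swap a b]
  ring

lemma leviCivita_swap_outer (a b c d e : Fin 5) :
    leviCivita a b c d e = -leviCivita c b a d e := by
  rw [leviCivita, leviCivita, ordSign_swap a b, ordSign_swap a c, ordSign_swap b c]
  ring

lemma leviCivita_self_left (a c d e : Fin 5) : leviCivita a a c d e = 0 :=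
  self_eq_neg.mp (leviCivita_swap_left a a c d e)

/-- The matrix of `ω ↦ v ∧ ω` from `Λ²` to `Λ³` of a five-dimensional space, with `Λ³` identified
with the dual of `Λ²`. -/
def wedgeMatrix {R : Type*} [CommRing R] (v : Fin 5 → R) :
    Matrix (Fin 5 × Fin 5) (Fin 5 × Fin 5) R :=
  Matrix.of fun q q' => ∑ i, (leviCivita q.1 q.2 i q'.1 q'.2 : R) * v i

lemma rank_wedgeMatrix_le {K : Type*} [Field K] [CharZero K] (v : Fin 5 → K) :
    (wedgeMatrix v).rank ≤ 6 := by
  obtain rfl | hv := eq_or_ne v 0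
  · have : wedgeMatrix (0 : Fin 5 → K) = 0 := by
      ext
      simp [wedgeMatrix]
    simp [this]
  obtain ⟨m, hm⟩ := Function.ne_iff.mp hv
  have hsum : ∀ b, ∑ a, v a • wedgeMatrix v (a, b) = 0 := fun b => by
    refine self_eq_neg.mp ?_
    ext q
    simp only [wedgeMatrix, Finset.sum_apply, Pi.smul_apply, Pi.neg_apply, Matrix.of_apply,
      smul_eq_mul, Finset.mul_sum]
    rw [← Finset.sum_neg_distrib, Finset.sum_comm]
    refine Finset.sum_congr rfl fun a _ => ?_
    rw [← Finset.sum_neg_distrib]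
    exact Finset.sum_congr rfl fun i _ => by rw [leviCivita_swap_outer, Int.cast_neg]; ring
  rw [Matrix.rank_eq_finrank_span_row]
  refine (finrank_span_range_le_of_antisymm (H := fun a b => wedgeMatrix v (a, b)) (fun a => ?_)
    (fun a b => ?_) hsum hm).trans_eq ?_
  · ext
    simp [wedgeMatrix, leviCivita_self_left]
  · ext
    simp [wedgeMatrix, leviCivita_swap_left a b]
  · clear hm
    decide +revert

/-- The Koszul flattening of the symmetric tensor `F`: the sum of the matrices
`F i j k • (wedgeMatrix e_i ⊗ E_jk)` over all indices. -/
def koszulFlattening {R : Type*} [CommRing R] (F : Fin 5 → Fin 5 → Fin 5 → R) :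
    Matrix ((Fin 5 × Fin 5) × Fin 5) ((Fin 5 × Fin 5) × Fin 5) R :=
  Matrix.of fun u w => ∑ i, (leviCivita u.1.1 u.1.2 i w.1.1 w.1.2 : R) * F i u.2 w.2

lemma koszulFlattening_map {R S : Type*} [CommRing R] [CommRing S] (φ : R →+* S)
    (F : Fin 5 → Fin 5 → Fin 5 → R) :
    (koszulFlattening F).map φ = koszulFlattening fun i j k => φ (F i j k) := by
  ext u w
  simp [koszulFlattening]

lemma sum_koszulFlattening {R κ : Type*} [CommRing R] [Fintype κ]
    (F : κ → Fin 5 → Fin 5 → Fin 5 → R) :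
    ∑ t, koszulFlattening (F t) = koszulFlattening fun i j k => ∑ t, F t i j k := by
  ext u w
  simp only [koszulFlattening, Matrix.sum_apply, Matrix.of_apply, Finset.mul_sum]
  exact Finset.sum_comm

lemma isHomogeneous_koszulFlattening {R σ : Type*} [CommRing R] {d : ℕ}
    {F : Fin 5 → Fin 5 → Fin 5 → MvPolynomial σ R} (hF : ∀ i j k, (F i j k).IsHomogeneous d)
    (u w : (Fin 5 × Fin 5) × Fin 5) : (koszulFlattening F u w).IsHomogeneous d := by
  rw [koszulFlattening, Matrix.of_apply]
  refine IsHomogeneous.sum _ _ _ fun i _ => ?_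
  simpa using (hF i u.2 w.2).C_mul (leviCivita u.1.1 u.1.2 i w.1.1 w.1.2 : R)

lemma rank_koszulFlattening_cube_le {K : Type*} [Field K] [CharZero K] (v : Fin 5 → K) :
    (koszulFlattening fun i j k => v i * v j * v k).rank ≤ 6 := by
  have hfactor : koszulFlattening (fun i j k => v i * v j * v k) =
      Matrix.diagonal (fun u => v u.2) * (wedgeMatrix v).submatrix Prod.fst Prod.fst *
        Matrix.diagonal (fun w => v w.2) := by
    ext u w
    simp only [koszulFlattening, wedgeMatrix, Matrix.mul_diagonal, Matrix.diagonal_mul,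
      Matrix.submatrix_apply, Matrix.of_apply, Finset.mul_sum, Finset.sum_mul]
    exact Finset.sum_congr rfl fun i _ => by ring
  rw [hfactor]
  exact (Matrix.rank_mul_le_left _ _).trans <| (Matrix.rank_mul_le_right _ _).trans <|
    (Matrix.rank_submatrix_le _ _ _).trans (rank_wedgeMatrix_le v)

/-- Rows and columns of a nonvanishing minor of the Koszul flattening: the first `43` of the `50`
positions `((a, b), c)` with `a < b`, enumerated with stride `29`. -/
def koszulIndex (k : Fin 43) : (Fin 5 × Fin 5) × Fin 5 :=
  ([(0, 1), (0, 2), (0, 3), (0, 4), (1, 2), (1, 3), (1, 4), (2, 3), (2, 4), (3, 4)].getD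
    (29 * k.1 % 50 / 5) (0, 0), Fin.ofNat 5 (29 * k.1 % 50))

/-- Points in general position in five-dimensional space, for which the Koszul flattening of the
sum of cubes has rank larger than `42`. -/
def koszulPoint : Fin 8 → Fin 5 → ℕ :=
  ![![1, 0, 0, 0, 0], ![0, 1, 0, 0, 0], ![0, 0, 1, 0, 0], ![0, 0, 0, 1, 0], ![0, 0, 0, 0, 1],
    ![1, 1, 1, 1, 1], ![1, 2, 3, 4, 5], ![1, 3, 2, 5, 7]]

/-- The sum of the cubes of the points `koszulPoint`, in a form that evaluates fast. -/
def koszulCubic (i j k : Fin 5) : ℕ :=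
  (if i.1 = j.1 then if j.1 = k.1 then 1 else 0 else 0) + 1 +
    (i.1 + 1) * (j.1 + 1) * (k.1 + 1) +
    [1, 3, 2, 5, 7].getD i.1 0 * [1, 3, 2, 5, 7].getD j.1 0 * [1, 3, 2, 5, 7].getD k.1 0

lemma sum_koszulPoint : ∀ i j k, ∑ t, koszulPoint t i * koszulPoint t j * koszulPoint t k =
    koszulCubic i j k := by
  decide +kernel

/-- The entries of `koszulFlattening koszulCubic`, in a form that evaluates fast. -/
def koszulEntry (u w : (Fin 5 × Fin 5) × Fin 5) : ℤ :=
  let term := fun i : Fin 5 => leviCivita u.1.1 u.1.2 i w.1.1 w.1.2 * koszulCubic i u.2 w.2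
  term 0 + term 1 + term 2 + term 3 + term 4

lemma koszulFlattening_koszulCubic (u w : (Fin 5 × Fin 5) × Fin 5) :
    koszulFlattening (fun i j k => (koszulCubic i j k : ℤ)) u w = koszulEntry u w := by
  simp [koszulFlattening, koszulEntry, Fin.sum_univ_five]

set_option maxRecDepth 100000 in
lemma hasFullColumnRank_koszulEntry : forceRows (List.ofFn fun k => List.ofFn fun l =>
    (koszulEntry (koszulIndex k) (koszulIndex l) % (10007 : ℕ)).toNat)
      (hasFullColumnRank 10007 43) = true := by
  decide +kernel

lemma det_koszulFlattening_koszulCubic_ne_zero :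
    ((koszulFlattening fun i j k => (koszulCubic i j k : ℤ)).submatrix
      koszulIndex koszulIndex).det ≠ 0 := by
  have : Fact (Nat.Prime 10007) := ⟨by norm_num⟩
  have h := hasFullColumnRank_koszulEntry
  simp only [forceRows_eq, ← koszulFlattening_koszulCubic] at h
  exact det_ne_zero_of_hasFullColumnRank h

lemma det_sum_koszulFlattening_ne_zero {K : Type*} [Field K] [CharZero K] :
    (∑ t, (koszulFlattening fun i j k =>
      (koszulPoint t i * koszulPoint t j * koszulPoint t k : K)).submatrix
        koszulIndex koszulIndex).det ≠ 0 := by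
  have hcubic : ∀ i j k, ∑ t, (koszulPoint t i * koszulPoint t j * koszulPoint t k : K) =
      Int.castRingHom K (koszulCubic i j k) := fun i j k => by
    rw [← sum_koszulPoint]
    simp
  have hsubmatrix : ∀ A : Fin 8 → Matrix _ _ K, ∑ t, (A t).submatrix koszulIndex koszulIndex =
      (∑ t, A t).submatrix koszulIndex koszulIndex := fun A => by
    ext
    simp [Matrix.sum_apply]
  rw [hsubmatrix, sum_koszulFlattening]
  simp only [hcubic]
  rw [← koszulFlattening_map, Matrix.submatrix_map, ← RingHom.mapMatrix_apply, ← RingHom.map_det]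
  simpa using det_koszulFlattening_koszulCubic_ne_zero

theorem deficient_cubic_four {r : ℕ} (hr : r < 8) : Deficient 4 3 r := by
  let F (i j k : Fin 5) : MvPolynomial (Fin 5) ℂ := X i * X j * X k
  let G := (koszulFlattening F).submatrix koszulIndex koszulIndex
  have hmap : ∀ v : Fin 5 → ℂ, G.map (eval v) =
      (koszulFlattening fun i j k => v i * v j * v k).submatrix koszulIndex koszulIndex :=
    fun v => by simp [G, F, ← Matrix.submatrix_map, koszulFlattening_map]
  refine deficient_of_flattening (s := 6) (G := G) (fun a b => ?_) (fun v => ?_)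
    (fun t i => (koszulPoint t i : ℂ)) ?_ ?_
  · exact isHomogeneous_koszulFlattening (fun i j k => ((isHomogeneous_X ℂ i).mul
      (isHomogeneous_X ℂ j)).mul (isHomogeneous_X ℂ k)) _ _
  · rw [hmap]
    exact (Matrix.rank_submatrix_le _ _ _).trans (rank_koszulFlattening_cube_le v)
  · simp only [hmap]
    exact det_sum_koszulFlattening_ne_zero
  · rw [Fintype.card_fin]
    omega

end Koszul

lemma deficient_of_lt_genericRank {n d r : ℕ} (h : r < genericRank n d) : Deficient n d r := by
  unfold genericRank at h
  split_ifs at h with h2 h4 h3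
  · subst h2
    exact deficient_catalecticant (e := 1) (by simpa using h)
  · obtain ⟨rfl, -, -⟩ := h4
    exact deficient_catalecticant (e := 2) h
  · obtain ⟨rfl, rfl⟩ := h3
    exact deficient_cubic_four h
  · refine deficient_of_lt_choose ?_
    have := (Nat.le_div_iff_mul_le (Nat.add_one_pos n)).mp (Nat.succ_le_of_lt h)
    rw [Nat.succ_eq_add_one, add_one_mul] at this
    omega

end AlexanderHirschowitz

/-- **Alexander–Hirschowitz / generic rank** (Theorem 2.2): for `n ≥ 1`, `d ≥ 2`, a
general homogeneous polynomial `f` of degree `d` in `x_0,…,x_n` over `ℂ` has symmetric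
rank exactly `R(n,d)`: there is a nonzero polynomial `D` in the degree-`d` coefficients
of `f` such that every homogeneous `f` of degree `d` with `D(f) ≠ 0` has rank `R(n,d)`. -/
theorem statement0 (n d : ℕ) (hn : 1 ≤ n) (hd : 2 ≤ d) :
    ∃ D : MvPolynomial {μ : Fin (n+1) →₀ ℕ // (μ.sum fun _ e => e) = d} ℂ, D ≠ 0 ∧
      ∀ f : MvPolynomial (Fin (n+1)) ℂ, f.IsHomogeneous d →
        MvPolynomial.eval (fun μ => MvPolynomial.coeff μ.1 f) D ≠ 0 →
        waringRank n d f = genericRank n d := by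
  exact AlexanderHirschowitz.waringRank_eq_of_general (by omega)
    (AlexanderHirschowitz.fills_genericRank ℂ hd)
    fun _ h => AlexanderHirschowitz.deficient_of_lt_genericRank h
end

section
/- Let f = Σ_{i=1}^r c_i ℓ_{v_i}^d ∈ ℂ[x_0,…,x_n], where the v_i ∈ ℂ^{n+1} are nonzero and span r distinct lines, all c_i ≠ 0, and let 1 ≤ m < d. Set Z = {v_1,…,v_r}. If rank C_f^m = r, then ker C_f^m = I_{Z,m} and im C_f^m = span{ℓ_{v_1}^{d−m},…,ℓ_{v_r}^{d−m}}. -/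
open MvPolynomial

/-- `diffOp p f = p(∂/∂x_0, …, ∂/∂x_{k-1})(f)`: the constant-coefficient differential
operator associated to `p`, applied to `f`.  For `p` homogeneous of degree `m` this is
the catalecticant `C_f^m` applied to `p`. -/
noncomputable def diffOp {k : ℕ} (p f : MvPolynomial (Fin k) ℂ) : MvPolynomial (Fin k) ℂ :=
  ∑ μ ∈ p.support, p.coeff μ •
    (((μ.support.sort (· ≤ ·)).map fun i =>
        ((MvPolynomial.pderiv i).toLinearMap :
          Module.End ℂ (MvPolynomial (Fin k) ℂ)) ^ (μ i)).prod f)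

/-!
Differentiating powers of a linear form gives `p(∂) ℓ_v^d = d(d-1)⋯(d-m+1) p(v) ℓ_v^(d-m)` for `p`
homogeneous of degree `m`. The catalecticant of `f = ∑ c_i ℓ_{v_i}^d` is therefore the composite of
the evaluation `p ↦ (p(v_i))_i` into `ℂ^r` and the linear map `ℂ^r → ℂ[x]` sending the `i`-th basis
vector to a nonzero multiple of `ℓ_{v_i}^(d-m)`. If the composite has rank `r`, the first map is
surjective and the second injective, so the kernel is that of the first and the image that of the
second.
-/

section LinearAlgebra

variable {K U V W : Type*} [DivisionRing K] [AddCommGroup U] [Module K U] [AddCommGroup V]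
  [Module K V] [AddCommGroup W] [Module K W] [FiniteDimensional K U]
  {g : U →ₗ[K] W} {h : V →ₗ[K] U}

theorem range_eq_top_of_finrank_range_comp_eq
    (hgh : Module.finrank K (g ∘ₗ h).range = Module.finrank K U) : h.range = ⊤ := by
  refine Submodule.eq_top_of_finrank_eq (le_antisymm (Submodule.finrank_le _) ?_)
  rw [← hgh, LinearMap.range_comp]
  exact Submodule.finrank_map_le g h.range

theorem ker_eq_bot_of_finrank_range_comp_eq
    (hgh : Module.finrank K (g ∘ₗ h).range = Module.finrank K U) : g.ker = ⊥ := by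
  have hrange : (g ∘ₗ h).range = g.range :=
    LinearMap.range_comp_of_range_eq_top g (range_eq_top_of_finrank_range_comp_eq hgh)
  have hnullity := g.finrank_range_add_finrank_ker
  rw [← hrange, hgh] at hnullity
  exact Submodule.finrank_eq_zero.mp (by lia)

end LinearAlgebra

theorem span_range_smul_eq_of_isUnit {ι R M : Type*} [CommSemiring R] [AddCommMonoid M]
    [Module R M] {a : ι → R} (ha : ∀ i, IsUnit (a i)) (w : ι → M) :
    Submodule.span R (Set.range fun i => a i • w i) = Submodule.span R (Set.range w) := by
  simp only [Submodule.span_range_eq_iSup, Submodule.span_singleton_smul_eq (ha _)]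

section Derivation

variable {R A σ : Type*} [CommSemiring R] [CommSemiring A] [Algebra R A]

theorem derivation_pow_apply_pow (D : Derivation R A A) {x : A} {r : R}
    (hx : D x = algebraMap R A r) (d a : ℕ) :
    ((D : Module.End R A) ^ a) (x ^ d) = ((d.descFactorial a : R) * r ^ a) • x ^ (d - a) := by
  induction a with
  | zero => simp
  | succ a ih =>
    rw [pow_succ', Module.End.mul_apply, ih, map_smul, Derivation.coeFn_coe,
      Derivation.leibniz_pow, hx, Nat.descFactorial_succ, Nat.sub_sub]
    rw [nsmul_eq_mul, smul_eq_mul, Algebra.smul_def, Algebra.smul_def]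
    simp only [map_mul, map_pow, map_natCast, Nat.cast_mul]
    ring

theorem list_prod_derivation_pow_apply_pow (D : σ → Derivation R A A) {x : A} {v : σ → R}
    (hx : ∀ i, D i x = algebraMap R A (v i)) (μ : σ → ℕ) (l : List σ) (d : ℕ) :
    (l.map fun i => (D i : Module.End R A) ^ μ i).prod (x ^ d) =
      ((d.descFactorial (l.map μ).sum : R) * (l.map fun i => v i ^ μ i).prod) •
        x ^ (d - (l.map μ).sum) := by
  induction l with
  | nil => simp
  | cons i l ih =>
    simp only [List.map_cons, List.prod_cons, List.sum_cons, Module.End.mul_apply]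
    have hdesc := Nat.descFactorial_mul_descFactorial (n := d)
      (Nat.le_add_left (l.map μ).sum (μ i))
    rw [Nat.add_sub_cancel] at hdesc
    rw [ih, map_smul, derivation_pow_apply_pow (D i) (hx i), smul_smul, Nat.sub_sub,
      add_comm (l.map μ).sum, ← hdesc]
    push_cast
    congr 1
    ring

end Derivation

section IteratedPDeriv

variable {R σ : Type*} [CommSemiring R] [LinearOrder σ]

/-- The differential operator `∂^μ = ∏ i, (∂/∂x_i)^(μ i)`. The factors commute, but
`Module.End` is noncommutative as a monoid, so the product is taken in increasing order. -/
noncomputable def iteratedPDeriv (μ : σ →₀ ℕ) : Module.End R (MvPolynomial σ R) :=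
  ((μ.support.sort (· ≤ ·)).map fun i =>
    ((pderiv i).toLinearMap : Module.End R (MvPolynomial σ R)) ^ μ i).prod

theorem iteratedPDeriv_pow {L : MvPolynomial σ R} {v : σ → R}
    (hL : ∀ i, pderiv i L = C (v i)) (μ : σ →₀ ℕ) (d : ℕ) :
    iteratedPDeriv μ (L ^ d) =
      ((d.descFactorial μ.degree : R) * ∏ i ∈ μ.support, v i ^ μ i) • L ^ (d - μ.degree) := by
  have hdegree : ((μ.support.sort (· ≤ ·)).map μ).sum = μ.degree := by
    rw [← List.sum_toFinset _ (Finset.sort_nodup _ _), Finset.sort_toFinset, Finsupp.degree_apply]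
  have hprod : ((μ.support.sort (· ≤ ·)).map fun i => v i ^ μ i).prod =
      ∏ i ∈ μ.support, v i ^ μ i := by
    rw [← List.prod_toFinset _ (Finset.sort_nodup _ _), Finset.sort_toFinset]
  rw [← hdegree, ← hprod]
  exact list_prod_derivation_pow_apply_pow (fun i => pderiv i) hL μ _ d

end IteratedPDeriv

/-- Evaluation of the forms of degree `m` at the points `v i`; its kernel is `I_{Z,m}` for
`Z = {v i}`. -/
noncomputable def evalForms {R σ ι : Type*} [CommSemiring R] (v : ι → σ → R) (m : ℕ) :
    homogeneousSubmodule σ R m →ₗ[R] ι → R :=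
  LinearMap.pi fun i => (aeval (v i)).toLinearMap ∘ₗ (homogeneousSubmodule σ R m).subtype

theorem evalForms_apply {R σ ι : Type*} [CommSemiring R] (v : ι → σ → R) {m : ℕ}
    (p : homogeneousSubmodule σ R m) (i : ι) : evalForms v m p i = eval (v i) p.1 := by
  simp [evalForms, aeval_eq_eval]

theorem mem_ker_evalForms {R σ ι : Type*} [CommSemiring R] {v : ι → σ → R} {m : ℕ}
    {p : homogeneousSubmodule σ R m} : p ∈ (evalForms v m).ker ↔ ∀ i, eval (v i) p.1 = 0 := by
  simp only [LinearMap.mem_ker, funext_iff, evalForms_apply, Pi.zero_apply]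

section Catalecticant

variable {k : ℕ}

theorem diffOp_eq_sum (p f : MvPolynomial (Fin k) ℂ) :
    diffOp p f = (AddMonoidAlgebra.coeff p).sum fun μ a => a • iteratedPDeriv μ f := by
  rw [sum_def]
  rfl

theorem diffOp_add_left (p q f : MvPolynomial (Fin k) ℂ) :
    diffOp (p + q) f = diffOp p f + diffOp q f := by
  simp only [diffOp_eq_sum, AddMonoidAlgebra.coeff_add]
  exact Finsupp.sum_add_index' (fun _ => zero_smul _ _) fun _ _ _ => add_smul _ _ _

theorem diffOp_smul_left (a : ℂ) (p f : MvPolynomial (Fin k) ℂ) :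
    diffOp (a • p) f = a • diffOp p f := by
  simp only [diffOp_eq_sum, AddMonoidAlgebra.coeff_smul]
  refine (Finsupp.sum_smul_index fun μ => zero_smul ℂ (iteratedPDeriv μ f)).trans ?_
  simp only [mul_smul, Finsupp.smul_sum]

theorem diffOp_sum_smul_right {ι : Type*} (s : Finset ι) (p : MvPolynomial (Fin k) ℂ)
    (c : ι → ℂ) (g : ι → MvPolynomial (Fin k) ℂ) :
    diffOp p (∑ i ∈ s, c i • g i) = ∑ i ∈ s, c i • diffOp p (g i) := by
  simp only [diffOp, map_sum, map_smul, Finset.smul_sum]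
  rw [Finset.sum_comm]
  exact Finset.sum_congr rfl fun i _ => Finset.sum_congr rfl fun μ _ => smul_comm _ _ _

theorem pderiv_linForm (v : Fin k → ℂ) (i : Fin k) : pderiv i (linForm k v) = C (v i) := by
  simp [linForm, pderiv_X, Pi.single_apply]

theorem diffOp_linForm_pow {m : ℕ} {p : MvPolynomial (Fin k) ℂ} (hp : p.IsHomogeneous m)
    (v : Fin k → ℂ) (d : ℕ) :
    diffOp p (linForm k v ^ d) =
      ((d.descFactorial m : ℂ) * eval v p) • linForm k v ^ (d - m) := by
  rw [diffOp_eq_sum, sum_def, eval_eq, Finset.mul_sum, Finset.sum_smul]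
  refine Finset.sum_congr rfl fun μ hμ => ?_
  have hdegree : μ.degree = m := (hp.degree_eq_sum_deg_support hμ).symm
  rw [iteratedPDeriv_pow (pderiv_linForm v), hdegree, smul_smul, mul_left_comm]

/-- The catalecticant `C_f^m : p ↦ p(∂) f` on forms of degree `m`. The target is the whole
polynomial ring, since `f` is not required to be homogeneous. -/
noncomputable def catalecticant (f : MvPolynomial (Fin k) ℂ) (m : ℕ) :
    homogeneousSubmodule (Fin k) ℂ m →ₗ[ℂ] MvPolynomial (Fin k) ℂ where
  toFun p := diffOp p f
  map_add' p q := diffOp_add_left p.1 q.1 f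
  map_smul' a p := diffOp_smul_left a p.1 f

theorem catalecticant_apply (f : MvPolynomial (Fin k) ℂ) {m : ℕ}
    (p : homogeneousSubmodule (Fin k) ℂ m) : catalecticant f m p = diffOp p.1 f :=
  rfl

theorem coe_range_catalecticant (f : MvPolynomial (Fin k) ℂ) (m : ℕ) :
    ((catalecticant f m).range : Set (MvPolynomial (Fin k) ℂ)) =
      {g | ∃ p : MvPolynomial (Fin k) ℂ, p.IsHomogeneous m ∧ g = diffOp p f} := by
  ext g
  simp [catalecticant_apply, eq_comm]

section PowerSum

variable {ι : Type*} [Fintype ι] (v : ι → Fin k → ℂ) (c : ι → ℂ) {d m : ℕ}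

theorem catalecticant_sum_smul_linForm_pow :
    catalecticant (∑ i, c i • linForm k (v i) ^ d) m =
      Fintype.linearCombination ℂ
          (fun i => (c i * d.descFactorial m) • linForm k (v i) ^ (d - m)) ∘ₗ
        evalForms v m := by
  ext1 p
  simp only [catalecticant_apply, diffOp_sum_smul_right, diffOp_linForm_pow p.2,
    LinearMap.comp_apply, Fintype.linearCombination_apply, evalForms_apply, smul_smul]
  refine Finset.sum_congr rfl fun i _ => ?_
  rw [← mul_assoc, mul_comm (eval (v i) p.1)]

variable {v c}

theorem ker_catalecticant_sum_smul_linForm_pow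
    (hrank : Module.finrank ℂ (catalecticant (∑ i, c i • linForm k (v i) ^ d) m).range =
      Fintype.card ι) :
    (catalecticant (∑ i, c i • linForm k (v i) ^ d) m).ker = (evalForms v m).ker := by
  rw [catalecticant_sum_smul_linForm_pow] at hrank ⊢
  rw [← Module.finrank_fintype_fun_eq_card ℂ] at hrank
  exact LinearMap.ker_comp_of_ker_eq_bot _ (ker_eq_bot_of_finrank_range_comp_eq hrank)

theorem range_catalecticant_sum_smul_linForm_pow (hmd : m ≤ d) (hc : ∀ i, c i ≠ 0)
    (hrank : Module.finrank ℂ (catalecticant (∑ i, c i • linForm k (v i) ^ d) m).range =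
      Fintype.card ι) :
    (catalecticant (∑ i, c i • linForm k (v i) ^ d) m).range =
      Submodule.span ℂ (Set.range fun i => linForm k (v i) ^ (d - m)) := by
  have hweight (i : ι) : IsUnit (c i * d.descFactorial m) := by
    simpa [hc i, Nat.descFactorial_eq_zero_iff_lt] using hmd
  rw [catalecticant_sum_smul_linForm_pow] at hrank ⊢
  rw [← Module.finrank_fintype_fun_eq_card ℂ] at hrank
  rw [LinearMap.range_comp_of_range_eq_top _ (range_eq_top_of_finrank_range_comp_eq hrank),
    Fintype.range_linearCombination, span_range_smul_eq_of_isUnit hweight]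

end PowerSum

end Catalecticant

/-- Proposition (equality case for the catalecticant): if `f = Σ_{i=1}^r c_i ℓ_{v_i}^d`
with the `v_i` spanning `r` distinct lines, all `c_i ≠ 0`, `1 ≤ m < d`, and
`rank C_f^m = r`, then `ker C_f^m = I_{Z,m}` and
`im C_f^m = span{ℓ_{v_1}^{d−m},…,ℓ_{v_r}^{d−m}}`. -/
theorem statement3 (n d m r : ℕ) (hm1 : 1 ≤ m) (hmd : m < d)
    (v : Fin r → Fin (n+1) → ℂ) (hv : ∀ i, v i ≠ 0)
    (hdist : ∀ i j, i ≠ j → ∀ lam : ℂ, v i ≠ lam • v j)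
    (c : Fin r → ℂ) (hc : ∀ i, c i ≠ 0)
    (f : MvPolynomial (Fin (n+1)) ℂ)
    (hf : f = ∑ i, c i • (linForm (n+1) (v i)) ^ d)
    (hrank : Module.rank ℂ ↥(Submodule.span ℂ
        {g | ∃ p : MvPolynomial (Fin (n+1)) ℂ, p.IsHomogeneous m ∧ g = diffOp p f})
      = (r : Cardinal)) :
    (∀ p : MvPolynomial (Fin (n+1)) ℂ, p.IsHomogeneous m →
      (diffOp p f = 0 ↔ ∀ i, MvPolynomial.eval (v i) p = 0)) ∧
    Submodule.span ℂ
        {g | ∃ p : MvPolynomial (Fin (n+1)) ℂ, p.IsHomogeneous m ∧ g = diffOp p f}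
      = Submodule.span ℂ (Set.range fun i => (linForm (n+1) (v i)) ^ (d - m)) := by
  have hspan : Submodule.span ℂ {g | ∃ p : MvPolynomial (Fin (n + 1)) ℂ, p.IsHomogeneous m ∧
      g = diffOp p f} = (catalecticant f m).range := by
    rw [← coe_range_catalecticant, Submodule.span_eq]
  rw [hspan] at hrank ⊢
  have hfinrank := (Module.finrank_eq_of_rank_eq hrank).trans (Fintype.card_fin r).symm
  subst hf
  refine ⟨fun p hp => ?_, range_catalecticant_sum_smul_linForm_pow hmd.le hc hfinrank⟩
  rw [← catalecticant_apply _ ⟨p, hp⟩, ← LinearMap.mem_ker,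
    ker_catalecticant_sum_smul_linForm_pow hfinrank, mem_ker_evalForms]
end
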